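/- Let S = ℝ^d with the Euclidean distance and let ρ be an exchangeable probability measure on (ℝ^d)^∞ with directing random measure p̃ and prior π (the law of p̃). Assume that for some δ > 0, some p ∈ [1,+∞) ∩ (d/2,+∞), and some r ∈ (2,3) satisfying p/d > 2 − 3/r and (2p+δ)(3/r − 1) > p, one has ∫ ( ∫_{ℝ^d} |x|^{2p+δ} 𝔭(dx) )^{3/r − 1} π(d𝔭) < +∞. Then, with b_n := (n/Log₂(n))^{1/(2p)}, p̂_n := ẽ_n, and Y_p(𝔭) := { (√2·K(p,d)/(1 − 2^{−(p − d/2)})) [ 1 + (2^p/(1 − 2^{−δ/2})) ( ∫_{ℝ^d} |x|^{2p+δ} 𝔭(dx) )^{1/2} ] }^{1/p} with K(p,d) := 2^{2p} d^{p/2} (2^p + 1)(2^p − 1)^{−2}: (i) ρ( limsup_{n→∞} b_n · d^{(p)}_{[[S]_p]}( π(ξ^(n)), δ_{ẽ_n} ) ≤ Y_p(p̃) ) = 1; and (ii) for every m ∈ ℕ, ρ( limsup_{n→∞} b_n · d^{(p)}_{[[S]_p]}( q_m(ξ^(n)), ẽ_n^∞ ∘ ẽ_{n,m}^{−1} ) ≤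 Y_p(p̃) ) = 1. -/

import Mathlib

open MeasureTheory ProbabilityTheory
open scoped ENNReal

noncomputable section

/-- `Log₂(x) = 1` for `x < e^e` and `Log₂(x) = log log x` for `x ≥ e^e`. -/
noncomputable def Log2 (x : ℝ) : ℝ :=
  if x < Real.exp (Real.exp 1) then 1 else Real.log (Real.log x)

/-- The Euclidean distance on `ℝ^d`. -/
noncomputable def eucDist {d : ℕ} (x y : Fin d → ℝ) : ℝ :=
  Real.sqrt (∑ i, (x i - y i) ^ 2)

/-- The Euclidean norm on `ℝ^d`. -/
noncomputable def eucNorm {d : ℕ} (x : Fin d → ℝ) : ℝ :=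
  Real.sqrt (∑ i, x i ^ 2)

/-- The `p`-Wasserstein-type distance associated with a cost function `c`. -/
noncomputable def wassW {X : Type*} [MeasurableSpace X] (c : X → X → ℝ) (p : ℝ)
    (μ ν : Measure X) : ℝ :=
  sInf {r : ℝ | ∃ γ : Measure (X × X), γ.map Prod.fst = μ ∧ γ.map Prod.snd = ν ∧
    r = (∫ z, c z.1 z.2 ^ p ∂γ) ^ (1 / p)}

/-- The empirical measure of the first `n` coordinates of a vector `v`. -/
noncomputable def empOf {d : ℕ} (n : ℕ) (v : Fin n → (Fin d → ℝ)) : Measure (Fin d → ℝ) :=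
  (n : ℝ≥0∞)⁻¹ • ∑ i, Measure.dirac (v i)

/-- The empirical measure `ẽ_{n,m}(ω) = (1/m) Σ_{i=1}^m δ_{ω_{i+n}}`. -/
noncomputable def empShift {d : ℕ} (n m : ℕ) (ω : ℕ → (Fin d → ℝ)) : Measure (Fin d → ℝ) :=
  (m : ℝ≥0∞)⁻¹ • ∑ i ∈ Finset.range m, Measure.dirac (ω (i + n))

/-- The constant `K(p,d) = 2^{2p} d^{p/2} (2^p + 1)(2^p - 1)^{-2}`. -/
noncomputable def Kpd (p : ℝ) (d : ℕ) : ℝ :=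
  (2 : ℝ) ^ (2 * p) * (d : ℝ) ^ (p / 2) * ((2 : ℝ) ^ p + 1) / ((2 : ℝ) ^ p - 1) ^ 2

/-- The constant `Y_p(𝔭)` of the nonparametric theorem. -/
noncomputable def YpNP (p δ : ℝ) (d : ℕ) (𝔭 : Measure (Fin d → ℝ)) : ℝ :=
  (Real.sqrt 2 * Kpd p d / (1 - 2 ^ (-(p - (d : ℝ) / 2)))
    * (1 + 2 ^ p / (1 - 2 ^ (-δ / 2))
      * ((∫⁻ x, ENNReal.ofReal (eucNorm x ^ (2 * p + δ)) ∂𝔭).toReal) ^ ((1 : ℝ) / 2)))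
    ^ (1 / p)

/-!
Coupling mass greedily along dyadic partitions bounds `W_p(𝔭, 𝔮) ^ p` by a weighted sum `D(𝔭, 𝔮)` of
the discrepancies `∑ |𝔭(B) - 𝔮(B)|` over the cells `B` of each level and each shell of `ℝ^d`. The
coupling depends measurably on `𝔭`, so the `p`-th power of the distance between the posterior and
`δ_{ẽ_n}` is at most the posterior mean of `D(𝔭, ẽ_n)`. The same holds for the predictive laws, by
coupling the two i.i.d. samples coordinatewise.

Given `p̃ = 𝔭`, the law of the iterated logarithm bounds the contribution of each level and shell to
`√(n / Log₂ n) D(𝔭, ẽ_n)`. An exponential maximal inequality shows that the supremum over `n` of the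
normalized deviation on a set `A` has mean at most `C 𝔭(A) ^ s` with `s = 3 / r - 1 < 1 / 2`. By the
moment condition these suprema are integrable and summable over levels and shells; summing the
limits gives `limsup √(n / Log₂ n) D(p̃, ẽ_n) ≤ Y_p(p̃) ^ p`, and Hunt's lemma, whose domination
hypothesis is this integrability, carries the bound over to the posterior means.
-/

namespace BayesianMerging

open Set Filter
open scoped Topology

section Matching

variable {T E ι : Type*} [MeasurableSpace T] [MeasurableSpace E]

theorem map_fst_withDensity_prod {F : Type*} [MeasurableSpace F] {μ : Measure E} {ν : Measure F}
    [SFinite μ] [SFinite ν] {D : E × F → ℝ≥0∞} (hD : Measurable D) :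
    ((μ.prod ν).withDensity D).map Prod.fst = μ.withDensity fun x ↦ ∫⁻ y, D (x, y) ∂ν := by
  ext B hB
  rw [Measure.map_apply measurable_fst hB, withDensity_apply _ (measurable_fst hB),
    withDensity_apply _ hB, ← lintegral_indicator (measurable_fst hB),
    lintegral_prod _ (hD.indicator (measurable_fst hB)).aemeasurable, ← lintegral_indicator hB]
  refine lintegral_congr fun x ↦ ?_
  by_cases hx : x ∈ B <;> simp [indicator, hx]

theorem map_snd_withDensity_prod {F : Type*} [MeasurableSpace F] {μ : Measure E} {ν : Measure F}
    [SFinite μ] [SFinite ν] {D : E × F → ℝ≥0∞} (hD : Measurable D) :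
    ((μ.prod ν).withDensity D).map Prod.snd = ν.withDensity fun y ↦ ∫⁻ x, D (x, y) ∂μ := by
  ext B hB
  rw [Measure.map_apply measurable_snd hB, withDensity_apply _ (measurable_snd hB),
    withDensity_apply _ hB, ← lintegral_indicator (measurable_snd hB),
    lintegral_prod_symm _ (hD.indicator (measurable_snd hB)).aemeasurable, ← lintegral_indicator hB]
  refine lintegral_congr fun x ↦ ?_
  by_cases hx : x ∈ B <;> simp [indicator, hx]

/-- The mass that `κ t` gives to the cell of the partition `{f = i}` containing `x`. -/
def fiberMass (f : E → ι) (κ : Kernel T E) (t : T) (x : E) : ℝ≥0∞ := κ t (f ⁻¹' {f x})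

variable {f : E → ι}

theorem fiberMass_congr (κ : Kernel T E) (t : T) {x y : E} (h : f x = f y) :
    fiberMass f κ t x = fiberMass f κ t y := by simp only [fiberMass, h]

theorem fiberMass_ne_top (κ : Kernel T E) [IsFiniteKernel κ] (t : T) (x : E) :
    fiberMass f κ t x ≠ ⊤ := measure_ne_top _ _

theorem ae_measure_fiber_ne_zero [Countable ι] (f : E → ι) (μ : Measure E) :
    ∀ᵐ x ∂μ, μ (f ⁻¹' {f x}) ≠ 0 := by
  have h : ∀ i, ∀ᵐ x ∂μ, f x = i → μ (f ⁻¹' {i}) ≠ 0 := fun i ↦ by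
    by_cases h0 : μ (f ⁻¹' {i}) = 0
    · filter_upwards [measure_eq_zero_iff_ae_notMem.1 h0] with x hx hxi using absurd hxi hx
    · exact .of_forall fun _ _ ↦ h0
  filter_upwards [ae_all_iff.2 h] with x hx using hx _ rfl

/-- The density, with respect to `κ t ⊗ η t`, of the coupling that matches the two measures inside
each cell of `f`, independently, up to the smaller of the two masses of the cell. -/
def matchingDensity (f : E → ι) (κ η : Kernel T E) (t : T) : E × E → ℝ≥0∞ :=
  {z | f z.1 = f z.2}.indicator fun z ↦
    min (fiberMass f κ t z.1) (fiberMass f η t z.2) / (fiberMass f κ t z.1 * fiberMass f η t z.2)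

/-- The density, with respect to `κ t`, of the part of `κ t` left over by `matching f κ η`. -/
def excessDensity (f : E → ι) (κ η : Kernel T E) (t : T) (x : E) : ℝ≥0∞ :=
  (fiberMass f κ t x - fiberMass f η t x) / fiberMass f κ t x

/-- The sub-coupling of `κ` and `η` that moves mass only inside the cells of `f`. -/
def matching (f : E → ι) (κ η : Kernel T E) [IsFiniteKernel κ] [IsFiniteKernel η] :
    Kernel T (E × E) := (κ ×ₖ η).withDensity (matchingDensity f κ η)

/-- The part of `κ` left over by `matching f κ η`. -/
def excess (f : E → ι) (κ η : Kernel T E) [IsFiniteKernel κ] : Kernel T E :=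
  κ.withDensity (excessDensity f κ η)

theorem matchingDensity_swap (κ η : Kernel T E) (t : T) (z : E × E) :
    matchingDensity f κ η t z.swap = matchingDensity f η κ t z := by
  by_cases h : f z.1 = f z.2
  · simp [matchingDensity, h, min_comm, mul_comm]
  · simp [matchingDensity, h, Ne.symm h]

theorem excessDensity_le_one (κ η : Kernel T E) (t : T) (x : E) : excessDensity f κ η t x ≤ 1 :=
  ENNReal.div_le_of_le_mul (by simp only [one_mul, tsub_le_self])

instance (κ η : Kernel T E) [IsFiniteKernel κ] : IsFiniteKernel (excess f κ η) :=
  Kernel.isFiniteKernel_withDensity_of_bounded κ ENNReal.one_ne_top (excessDensity_le_one κ η)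

variable [MeasurableSpace ι] [MeasurableSingletonClass ι]

theorem lintegral_matchingDensity (κ η : Kernel T E) [IsFiniteKernel η] (t : T)
    (hf : Measurable f) (x : E) :
    ∫⁻ y, matchingDensity f κ η t (x, y) ∂η t =
      min (fiberMass f κ t x) (fiberMass f η t x) / fiberMass f κ t x := by
  set a := fiberMass f κ t x
  set b := fiberMass f η t x
  have h : ∀ y, matchingDensity f κ η t (x, y) =
      (f ⁻¹' {f x}).indicator (fun _ ↦ min a b / (a * b)) y := fun y ↦ by
    by_cases hxy : f x = f y
    · simp [matchingDensity, hxy, a, b, fiberMass_congr η t hxy]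
    · simp [matchingDensity, hxy, Ne.symm hxy]
  have hb' : η t (f ⁻¹' {f x}) = b := rfl
  rw [lintegral_congr h, lintegral_indicator_const (hf (measurableSet_singleton _)), hb']
  rcases eq_or_ne b 0 with hb0 | hb0
  · simp [hb0]
  · rw [div_eq_mul_inv, ENNReal.mul_inv (.inr (fiberMass_ne_top η t x)) (.inr hb0), ← mul_assoc,
      ENNReal.inv_mul_cancel_right hb0 (fiberMass_ne_top η t x), div_eq_mul_inv]

variable [Countable ι]

theorem measurable_fiberMass (hf : Measurable f) (κ : Kernel T E) :
    Measurable (Function.uncurry (fiberMass f κ)) := by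
  have h : Measurable fun q : T × ι ↦ κ q.1 (f ⁻¹' {q.2}) :=
    measurable_from_prod_countable_left fun i ↦ κ.measurable_coe (hf (measurableSet_singleton i))
  exact h.comp (measurable_fst.prodMk (hf.comp measurable_snd))

theorem measurable_matchingDensity (hf : Measurable f) (κ η : Kernel T E) :
    Measurable (Function.uncurry (matchingDensity f κ η)) := by
  have hκ : Measurable fun q : T × E × E ↦ fiberMass f κ q.1 q.2.1 :=
    (measurable_fiberMass hf κ).comp (f := fun q : T × E × E ↦ (q.1, q.2.1)) (by fun_prop)
  have hη : Measurable fun q : T × E × E ↦ fiberMass f η q.1 q.2.2 :=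
    (measurable_fiberMass hf η).comp (f := fun q : T × E × E ↦ (q.1, q.2.2)) (by fun_prop)
  have hs : MeasurableSet {q : T × E × E | f q.2.1 = f q.2.2} :=
    measurableSet_eq_fun (by fun_prop) (by fun_prop)
  exact ((hκ.min hη).div (hκ.mul hη)).indicator hs

theorem measurable_excessDensity (hf : Measurable f) (κ η : Kernel T E) :
    Measurable (Function.uncurry (excessDensity f κ η)) :=
  ((measurable_fiberMass hf κ).sub (measurable_fiberMass hf η)).div (measurable_fiberMass hf κ)

theorem excess_apply_fiber (κ η : Kernel T E) [IsFiniteKernel κ] (t : T) (hf : Measurable f)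
    (i : ι) :
    excess f κ η t (f ⁻¹' {i}) = κ t (f ⁻¹' {i}) - η t (f ⁻¹' {i}) := by
  rw [excess, Kernel.withDensity_apply' _ (measurable_excessDensity hf κ η)]
  have h : ∀ x ∈ f ⁻¹' {i}, excessDensity f κ η t x =
      (κ t (f ⁻¹' {i}) - η t (f ⁻¹' {i})) / κ t (f ⁻¹' {i}) := by
    rintro x rfl
    rfl
  rw [setLIntegral_congr_fun (hf (measurableSet_singleton i)) h, setLIntegral_const]
  rcases eq_or_ne (κ t (f ⁻¹' {i})) 0 with h0 | h0
  · simp [h0]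
  · exact ENNReal.div_mul_cancel h0 (measure_ne_top _ _)

theorem withDensity_add_excess (κ η : Kernel T E) [IsFiniteKernel κ] (t : T)
    (hf : Measurable f) :
    (κ t).withDensity (fun x ↦ min (fiberMass f κ t x) (fiberMass f η t x) / fiberMass f κ t x) +
      excess f κ η t = κ t := by
  rw [excess, Kernel.withDensity_apply _ (measurable_excessDensity hf κ η),
    ← withDensity_add_right _ (measurable_excessDensity hf κ η).of_uncurry_left]
  conv_rhs => rw [← withDensity_one (μ := κ t)]
  refine withDensity_congr_ae ?_
  filter_upwards [ae_measure_fiber_ne_zero f (κ t)] with x hx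
  have hsum : ∀ a b : ℝ≥0∞, min a b + (a - b) = a := fun a b ↦ by
    rcases le_total a b with h | h <;> simp [h, add_tsub_cancel_of_le, tsub_eq_zero_of_le]
  rw [Pi.add_apply, excessDensity, ← ENNReal.add_div, hsum]
  exact ENNReal.div_self hx (fiberMass_ne_top κ t x)

variable (κ η : Kernel T E) [IsFiniteKernel κ] [IsFiniteKernel η] (t : T)

theorem fst_matching_add_excess (hf : Measurable f) :
    (matching f κ η t).map Prod.fst + excess f κ η t = κ t := by
  have hD := measurable_matchingDensity hf κ η
  rw [matching, Kernel.withDensity_apply _ hD, Kernel.prod_apply,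
    map_fst_withDensity_prod hD.of_uncurry_left]
  simp_rw [lintegral_matchingDensity κ η t hf]
  exact withDensity_add_excess κ η t hf

theorem snd_matching_add_excess (hf : Measurable f) :
    (matching f κ η t).map Prod.snd + excess f η κ t = η t := by
  have hD := measurable_matchingDensity hf κ η
  rw [matching, Kernel.withDensity_apply _ hD, Kernel.prod_apply,
    map_snd_withDensity_prod hD.of_uncurry_left]
  have h : ∀ y, ∫⁻ x, matchingDensity f κ η t (x, y) ∂κ t =
      min (fiberMass f η t y) (fiberMass f κ t y) / fiberMass f η t y := fun y ↦ by
    rw [← lintegral_matchingDensity η κ t hf]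
    exact lintegral_congr fun x ↦ (matchingDensity_swap η κ t (x, y)).symm
  simp_rw [h]
  exact withDensity_add_excess η κ t hf

theorem ae_matching_eq (hf : Measurable f) : ∀ᵐ z ∂matching f κ η t, f z.1 = f z.2 := by
  have hD := measurable_matchingDensity hf κ η
  rw [matching, Kernel.withDensity_apply _ hD, ae_withDensity_iff hD.of_uncurry_left]
  exact .of_forall fun z hz ↦ by_contra fun h ↦ hz (if_neg h)

end Matching

section MultiscaleCoupling

variable {T E ι : Type*} [MeasurableSpace T] [MeasurableSpace E]

/-- The absolute difference `|μ B - ν B|`, written with truncated subtraction in `ℝ≥0∞`. -/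
def massDiff (μ ν : Measure E) (B : Set E) : ℝ≥0∞ := (μ B - ν B) + (ν B - μ B)

/-- The weighted `ℓ¹` discrepancy between the masses that `μ` and `ν` give to the cells of `f`. -/
def discrepancy (f : E → ι) (w : ι → ℝ≥0∞) (μ ν : Measure E) : ℝ≥0∞ :=
  ∑' i, w i * massDiff μ ν (f ⁻¹' {i})

/-- A sub-coupling `γ` of `κ` and `η`, with remainders `κ'` and `η'` still to be coupled. -/
structure IsPartialCoupling (κ η : Kernel T E) (γ : Kernel T (E × E)) (κ' η' : Kernel T E) :
    Prop where
  finite_left : IsFiniteKernel κ'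
  finite_right : IsFiniteKernel η'
  fst_add : ∀ t, (γ t).map Prod.fst + κ' t = κ t
  snd_add : ∀ t, (γ t).map Prod.snd + η' t = η t

namespace IsPartialCoupling

variable {κ η κ₁ η₁ κ' η' : Kernel T E} {γ γ' : Kernel T (E × E)}

theorem measure_univ_eq [IsMarkovKernel κ] [IsMarkovKernel η]
    (h : IsPartialCoupling κ η γ κ' η') (t : T) : κ' t univ = η' t univ := by
  have hκ : γ t univ + κ' t univ = 1 := by
    rw [← measure_univ (μ := κ t), ← h.fst_add t, Measure.add_apply,
      Measure.map_apply measurable_fst .univ, preimage_univ]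
  have hη : γ t univ + η' t univ = 1 := by
    rw [← measure_univ (μ := η t), ← h.snd_add t, Measure.add_apply,
      Measure.map_apply measurable_snd .univ, preimage_univ]
  have hγ : γ t univ ≠ ⊤ := ne_top_of_le_ne_top ENNReal.one_ne_top (hκ ▸ le_self_add)
  exact (ENNReal.add_right_inj hγ).1 (hκ.trans hη.symm)

theorem add (h : IsPartialCoupling κ η γ κ₁ η₁) (h' : IsPartialCoupling κ₁ η₁ γ' κ' η') :
    IsPartialCoupling κ η (γ + γ') κ' η' where
  finite_left := h'.finite_left
  finite_right := h'.finite_right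
  fst_add t := by
    rw [FunLike.coe_add, Pi.add_apply, Measure.map_add _ _ measurable_fst, add_assoc, h'.fst_add,
      h.fst_add]
  snd_add t := by
    rw [FunLike.coe_add, Pi.add_apply, Measure.map_add _ _ measurable_snd, add_assoc, h'.snd_add,
      h.snd_add]

variable [MeasurableSpace ι] [MeasurableSingletonClass ι] {f : E → ι}

theorem massDiff_fiber [IsFiniteKernel κ] (h : IsPartialCoupling κ η γ κ' η') (hf : Measurable f)
    {t : T} (hγ : ∀ᵐ z ∂γ t, f z.1 = f z.2) (i : ι) :
    massDiff (κ' t) (η' t) (f ⁻¹' {i}) = massDiff (κ t) (η t) (f ⁻¹' {i}) := by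
  have hi := hf (measurableSet_singleton i)
  set a := γ t (Prod.fst ⁻¹' (f ⁻¹' {i}))
  have hκ : a + κ' t (f ⁻¹' {i}) = κ t (f ⁻¹' {i}) := by
    rw [← h.fst_add t, Measure.add_apply, Measure.map_apply measurable_fst hi]
  have hη : a + η' t (f ⁻¹' {i}) = η t (f ⁻¹' {i}) := by
    have hsnd : a = γ t (Prod.snd ⁻¹' (f ⁻¹' {i})) := by
      refine measure_congr ?_
      filter_upwards [hγ] with z hz
      exact congrArg (· = i) hz
    rw [← h.snd_add t, Measure.add_apply, Measure.map_apply measurable_snd hi, hsnd]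
  have ha : a ≠ ⊤ := ne_top_of_le_ne_top (measure_ne_top (κ t) _) (hκ ▸ le_self_add)
  rw [massDiff, massDiff, ← hκ, ← hη, ENNReal.add_sub_add_eq_sub_left ha,
    ENNReal.add_sub_add_eq_sub_left ha]

theorem discrepancy_eq [IsFiniteKernel κ] (h : IsPartialCoupling κ η γ κ' η') (hf : Measurable f)
    {t : T} (hγ : ∀ᵐ z ∂γ t, f z.1 = f z.2) (w : ι → ℝ≥0∞) :
    discrepancy f w (κ' t) (η' t) = discrepancy f w (κ t) (η t) :=
  tsum_congr fun i ↦ by rw [h.massDiff_fiber hf hγ]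

end IsPartialCoupling

theorem measurable_massDiff {κ η : T → Measure E} (hκ : Measurable κ) (hη : Measurable η)
    {B : Set E} (hB : MeasurableSet B) : Measurable fun t ↦ massDiff (κ t) (η t) B := by
  have h₁ : Measurable fun t ↦ κ t B := (Measure.measurable_coe hB).comp hκ
  have h₂ : Measurable fun t ↦ η t B := (Measure.measurable_coe hB).comp hη
  exact (h₁.sub h₂).add (h₂.sub h₁)

theorem massDiff_eq_ofReal (μ ν : Measure E) [IsFiniteMeasure μ] [IsFiniteMeasure ν] (B : Set E) :
    massDiff μ ν B = ENNReal.ofReal |ν.real B - μ.real B| := by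
  rw [massDiff, ← ofReal_measureReal (μ := μ), ← ofReal_measureReal (μ := ν),
    ← ENNReal.ofReal_sub _ measureReal_nonneg, ← ENNReal.ofReal_sub _ measureReal_nonneg]
  rcases le_total (μ.real B) (ν.real B) with h | h
  · rw [ENNReal.ofReal_of_nonpos (sub_nonpos.2 h), zero_add, abs_of_nonneg (sub_nonneg.2 h)]
  · rw [ENNReal.ofReal_of_nonpos (sub_nonpos.2 h), add_zero, abs_sub_comm,
      abs_of_nonneg (sub_nonneg.2 h)]

theorem lintegral_comp_eq_tsum [MeasurableSpace ι] [Countable ι] [MeasurableSingletonClass ι]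
    {f : E → ι} (hf : Measurable f) (w : ι → ℝ≥0∞) (μ : Measure E) :
    ∫⁻ x, w (f x) ∂μ = ∑' i, w i * μ (f ⁻¹' {i}) := by
  rw [← lintegral_map Measurable.of_discrete hf, lintegral_countable']
  exact tsum_congr fun i ↦ by rw [Measure.map_apply hf (measurableSet_singleton i)]

theorem lintegral_add_lintegral_eq_discrepancy [MeasurableSpace ι] [Countable ι]
    [MeasurableSingletonClass ι] {f : E → ι} (hf : Measurable f) (w : ι → ℝ≥0∞) {μ ν : Measure E}
    (hμν : ∀ i, μ (f ⁻¹' {i}) = 0 ∨ ν (f ⁻¹' {i}) = 0) :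
    ∫⁻ x, w (f x) ∂μ + ∫⁻ x, w (f x) ∂ν = discrepancy f w μ ν := by
  rw [lintegral_comp_eq_tsum hf, lintegral_comp_eq_tsum hf, ← ENNReal.tsum_add, discrepancy]
  refine tsum_congr fun i ↦ ?_
  rcases hμν i with h | h <;> simp [massDiff, h]

section Excess

variable [MeasurableSpace ι] [Countable ι] [MeasurableSingletonClass ι] {f : E → ι}
  (hf : Measurable f) (κ η : Kernel T E) [IsFiniteKernel κ] [IsFiniteKernel η]
include hf

theorem isPartialCoupling_matching :
    IsPartialCoupling κ η (matching f κ η) (excess f κ η) (excess f η κ) where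
  finite_left := inferInstance
  finite_right := inferInstance
  fst_add t := fst_matching_add_excess κ η t hf
  snd_add t := snd_matching_add_excess κ η t hf

theorem excess_fiber_eq_zero_or (t : T) (i : ι) :
    excess f κ η t (f ⁻¹' {i}) = 0 ∨ excess f η κ t (f ⁻¹' {i}) = 0 := by
  simpa only [excess_apply_fiber _ _ _ hf, tsub_eq_zero_iff_le] using le_total _ _

end Excess

theorem exists_kernel_map_fst_map_snd (κ η : Kernel T E) [IsFiniteKernel κ] [IsFiniteKernel η]
    (h : ∀ t, κ t univ = η t univ) :
    ∃ γ : Kernel T (E × E), ∀ t, (γ t).map Prod.fst = κ t ∧ (γ t).map Prod.snd = η t := by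
  have hunit : Measurable fun _ : E ↦ () := measurable_const
  have hm := isPartialCoupling_matching hunit κ η
  have hzero : ∀ t, excess (fun _ ↦ ()) κ η t = 0 ∧ excess (fun _ ↦ ()) η κ t = 0 := fun t ↦ by
    have hκ := excess_apply_fiber κ η t hunit ()
    have hη := excess_apply_fiber η κ t hunit ()
    simp only [preimage_const_of_mem, mem_singleton_iff, h t, tsub_self,
      Measure.measure_univ_eq_zero] at hκ hη
    exact ⟨hκ, hη⟩
  exact ⟨matching (fun _ ↦ ()) κ η, fun t ↦
    ⟨by simpa [(hzero t).1] using hm.fst_add t, by simpa [(hzero t).2] using hm.snd_add t⟩⟩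

/-- A cost `c` controlled along a refining sequence of partitions into the cells of `f l`: inside a
cell of level `l` it is at most `D l` times the weight `w` of the cell, and globally it is at most
`A` times the sum of the two weights. The cells of a point have the same weight at all levels. -/
structure IsMultiscaleCost [MeasurableSpace ι] (f : ℕ → E → ι) (w : ι → ℝ≥0∞)
    (c : E × E → ℝ≥0∞) (D : ℕ → ℝ≥0∞) (A : ℝ≥0∞) : Prop where
  measurable : ∀ l, Measurable (f l)
  refines : ∀ l x y, f (l + 1) x = f (l + 1) y → f l x = f l y
  weight_eq : ∀ l x, w (f l x) = w (f 0 x)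
  cost_le : ∀ l x y, f l x = f l y → c (x, y) ≤ D l * w (f l y)
  cost_le_add : ∀ x y, c (x, y) ≤ A * (w (f 0 x) + w (f 0 y))

namespace IsMultiscaleCost

variable [MeasurableSpace ι] [Countable ι] [MeasurableSingletonClass ι] {f : ℕ → E → ι}
  {w : ι → ℝ≥0∞} {c : E × E → ℝ≥0∞} {D : ℕ → ℝ≥0∞} {A : ℝ≥0∞} (hc : IsMultiscaleCost f w c D A)
include hc

omit [Countable ι] [MeasurableSingletonClass ι] in
theorem label_eq_of_le {l m : ℕ} (hlm : l ≤ m) {x y : E} (h : f m x = f m y) : f l x = f l y := by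
  induction hlm with
  | refl => exact h
  | step _ ih => exact ih (hc.refines _ x y h)

theorem measurable_weight : Measurable fun x ↦ w (f 0 x) :=
  Measurable.of_discrete.comp (hc.measurable 0)

theorem lintegral_le_of_ae_eq {l : ℕ} {γ : Measure (E × E)} (hγ : ∀ᵐ z ∂γ, f l z.1 = f l z.2) :
    ∫⁻ z, c z ∂γ ≤ D l * ∫⁻ y, w (f 0 y) ∂γ.map Prod.snd :=
  calc ∫⁻ z, c z ∂γ ≤ ∫⁻ z, D l * w (f 0 z.2) ∂γ := by
        refine lintegral_mono_ae ?_
        filter_upwards [hγ] with z hz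
        exact hc.weight_eq l z.2 ▸ hc.cost_le l z.1 z.2 hz
    _ = D l * ∫⁻ y, w (f 0 y) ∂γ.map Prod.snd := by
        have h : Measurable fun z : E × E ↦ w (f 0 z.2) := hc.measurable_weight.comp measurable_snd
        rw [lintegral_const_mul _ h, lintegral_map hc.measurable_weight measurable_snd]

theorem lintegral_le_of_fst_of_snd (γ : Measure (E × E)) :
    ∫⁻ z, c z ∂γ ≤
      A * (∫⁻ x, w (f 0 x) ∂γ.map Prod.fst + ∫⁻ y, w (f 0 y) ∂γ.map Prod.snd) :=
  calc ∫⁻ z, c z ∂γ ≤ ∫⁻ z, A * (w (f 0 z.1) + w (f 0 z.2)) ∂γ :=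
        lintegral_mono fun z ↦ hc.cost_le_add z.1 z.2
    _ = _ := by
        have h₁ : Measurable fun z : E × E ↦ w (f 0 z.1) := hc.measurable_weight.comp measurable_fst
        have h₂ : Measurable fun z : E × E ↦ w (f 0 z.2) := hc.measurable_weight.comp measurable_snd
        have h₁₂ : Measurable fun z : E × E ↦ w (f 0 z.1) + w (f 0 z.2) := h₁.add h₂
        rw [lintegral_const_mul _ h₁₂, lintegral_add_left h₁,
          lintegral_map hc.measurable_weight measurable_fst,
          lintegral_map hc.measurable_weight measurable_snd]

/-- Mass is matched greedily, from the finest partition to the coarsest: matching inside the cells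
of one level does not change the discrepancies of the coarser levels. -/
theorem exists_isPartialCoupling (L : ℕ) :
    ∀ (κ η : Kernel T E) [IsFiniteKernel κ] [IsFiniteKernel η],
      ∃ (γ : Kernel T (E × E)) (κ' η' : Kernel T E), IsPartialCoupling κ η γ κ' η' ∧
        (∀ t i, κ' t (f 0 ⁻¹' {i}) = 0 ∨ η' t (f 0 ⁻¹' {i}) = 0) ∧
        (∀ t, ∀ᵐ z ∂γ t, f 0 z.1 = f 0 z.2) ∧
        ∀ t, ∫⁻ z, c z ∂γ t ≤ ∑ l ∈ Finset.range L, D l * discrepancy (f (l + 1)) w (κ t) (η t) +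
          D L * ∫⁻ y, w (f 0 y) ∂η t := by
  induction L with
  | zero =>
    intro κ η _ _
    have hm := isPartialCoupling_matching (hc.measurable 0) κ η
    have hae := ae_matching_eq κ η (hf := hc.measurable 0)
    refine ⟨_, _, _, hm, excess_fiber_eq_zero_or (hc.measurable 0) κ η, hae, fun t ↦ ?_⟩
    rw [Finset.sum_range_zero, zero_add]
    refine (hc.lintegral_le_of_ae_eq (hae t)).trans ?_
    gcongr
    exact hm.snd_add t ▸ Measure.le_add_right le_rfl
  | succ L ih =>
    intro κ η _ _
    have hf := hc.measurable (L + 1)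
    have hm := isPartialCoupling_matching hf κ η
    have hae := ae_matching_eq κ η (hf := hf)
    have hdisc : ∀ l ≤ L + 1, ∀ t, discrepancy (f l) w (excess (f (L + 1)) κ η t)
        (excess (f (L + 1)) η κ t) = discrepancy (f l) w (κ t) (η t) := fun l hl t ↦
      hm.discrepancy_eq (hc.measurable l) ((hae t).mono fun z hz ↦ hc.label_eq_of_le hl hz) w
    obtain ⟨γ, κ', η', hγ, hsing, hγae, hcost⟩ :=
      ih (excess (f (L + 1)) κ η) (excess (f (L + 1)) η κ)
    refine ⟨_, κ', η', hm.add hγ, hsing, fun t ↦ ?_, fun t ↦ ?_⟩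
    · rw [FunLike.coe_add, Pi.add_apply, ae_add_measure_iff]
      exact ⟨(hae t).mono fun z hz ↦ hc.label_eq_of_le (Nat.zero_le _) hz, hγae t⟩
    rw [FunLike.coe_add, Pi.add_apply, lintegral_add_measure, add_comm, Finset.sum_range_succ]
    refine add_le_add ((hcost t).trans (add_le_add (Finset.sum_le_sum fun l hl ↦ ?_) ?_)) ?_
    · rw [hdisc _ (by have := Finset.mem_range.1 hl; omega)]
    · gcongr
      rw [← hdisc _ le_rfl, ← lintegral_add_lintegral_eq_discrepancy hf w
        (excess_fiber_eq_zero_or hf κ η t)]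
      simp only [hc.weight_eq]
      exact le_add_self
    · refine (hc.lintegral_le_of_ae_eq (hae t)).trans ?_
      gcongr
      exact hm.snd_add t ▸ Measure.le_add_right le_rfl

theorem exists_coupling (L : ℕ) (κ η : Kernel T E) [IsMarkovKernel κ] [IsMarkovKernel η] :
    ∃ γ : Kernel T (E × E), (∀ t, (γ t).map Prod.fst = κ t) ∧ (∀ t, (γ t).map Prod.snd = η t) ∧
      ∀ t, ∫⁻ z, c z ∂γ t ≤ A * discrepancy (f 0) w (κ t) (η t) +
        ∑' l, D l * discrepancy (f (l + 1)) w (κ t) (η t) + D L * ∫⁻ y, w (f 0 y) ∂η t := by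
  obtain ⟨γ, κ', η', hγ, hsing, hae, hcost⟩ := hc.exists_isPartialCoupling L κ η
  have := hγ.finite_left
  have := hγ.finite_right
  obtain ⟨θ, hθ⟩ := exists_kernel_map_fst_map_snd κ' η' hγ.measure_univ_eq
  refine ⟨γ + θ, fun t ↦ ?_, fun t ↦ ?_, fun t ↦ ?_⟩
  · rw [FunLike.coe_add, Pi.add_apply, Measure.map_add _ _ measurable_fst, (hθ t).1, hγ.fst_add]
  · rw [FunLike.coe_add, Pi.add_apply, Measure.map_add _ _ measurable_snd, (hθ t).2, hγ.snd_add]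
  have hrest : ∫⁻ z, c z ∂θ t ≤ A * discrepancy (f 0) w (κ t) (η t) := by
    rw [← hγ.discrepancy_eq (hc.measurable 0) (hae t),
      ← lintegral_add_lintegral_eq_discrepancy (hc.measurable 0) w (hsing t)]
    simpa only [hθ t] using hc.lintegral_le_of_fst_of_snd (θ t)
  rw [FunLike.coe_add, Pi.add_apply, lintegral_add_measure, add_comm, add_assoc]
  exact add_le_add hrest ((hcost t).trans (by gcongr; exact ENNReal.sum_le_tsum _))

end IsMultiscaleCost

end MultiscaleCoupling

section DyadicPartition

variable {d : ℕ}

theorem eucNorm_eq_norm (x : Fin d → ℝ) : eucNorm x = ‖WithLp.toLp 2 x‖ := by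
  simp [EuclideanSpace.norm_eq, eucNorm]

theorem eucDist_eq_norm_sub (x y : Fin d → ℝ) :
    eucDist x y = ‖WithLp.toLp 2 x - WithLp.toLp 2 y‖ := by
  simp [EuclideanSpace.norm_eq, eucDist]

theorem eucDist_nonneg (x y : Fin d → ℝ) : 0 ≤ eucDist x y := Real.sqrt_nonneg _

theorem eucDist_le_add (x y : Fin d → ℝ) : eucDist x y ≤ eucNorm x + eucNorm y := by
  simpa only [eucDist_eq_norm_sub, eucNorm_eq_norm] using norm_sub_le _ _

theorem abs_apply_le_eucNorm (x : Fin d → ℝ) (i : Fin d) : |x i| ≤ eucNorm x := by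
  simpa only [eucNorm_eq_norm, Real.norm_eq_abs] using PiLp.norm_apply_le (WithLp.toLp 2 x) i

theorem measurable_eucNorm : Measurable (eucNorm (d := d)) := by
  unfold eucNorm
  fun_prop

/-- The index `k` of the dyadic shell `2 ^ (k - 1) < |x| ≤ 2 ^ k` containing `x`; the shell `k = 0`
is the whole unit ball. -/
def shell (x : Fin d → ℝ) : ℕ := Nat.clog 2 ⌈eucNorm x⌉₊

theorem measurable_shell : Measurable (shell (d := d)) :=
  (Measurable.of_discrete (f := Nat.clog 2)).comp (Nat.measurable_ceil.comp measurable_eucNorm)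

theorem measurableSet_shell (k : ℕ) : MeasurableSet (shell (d := d) ⁻¹' {k}) :=
  measurable_shell (measurableSet_singleton k)

theorem eucNorm_le_two_pow_shell (x : Fin d → ℝ) : eucNorm x ≤ 2 ^ shell x := by
  have h : ⌈eucNorm x⌉₊ ≤ 2 ^ shell x := Nat.le_pow_clog one_lt_two _
  exact (Nat.le_ceil _).trans (mod_cast h)

theorem two_pow_lt_eucNorm {x : Fin d → ℝ} {k : ℕ} (h : shell x = k + 1) : 2 ^ k < eucNorm x := by
  have hk : k < Nat.clog 2 ⌈eucNorm x⌉₊ := lt_of_lt_of_eq k.lt_succ_self h.symm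
  rw [Nat.lt_clog_iff_pow_lt one_lt_two, Nat.lt_ceil] at hk
  exact_mod_cast hk

/-- Labels of the cells of the dyadic partitions of `ℝ^d`: the shell, and the position of the cell
in the grid of this shell. -/
abbrev CellLabel (d : ℕ) := ℕ × (Fin d → ℤ)

/-- The cell of level `l` containing `x`: the shell `k` of `x` is cut into cubes of side
`2 ^ (k - l)`. -/
def cellLabel (l : ℕ) (x : Fin d → ℝ) : CellLabel d :=
  (shell x, fun i ↦ ⌊2 ^ l * x i / 2 ^ shell x⌋)

theorem measurable_cellLabel (l : ℕ) : Measurable (cellLabel (d := d) l) := by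
  refine measurable_shell.prodMk (measurable_pi_lambda _ fun i ↦ Int.measurable_floor.comp ?_)
  have h : Measurable fun x : Fin d → ℝ ↦ (2 : ℝ) ^ shell x :=
    (Measurable.of_discrete (f := fun k : ℕ ↦ (2 : ℝ) ^ k)).comp measurable_shell
  fun_prop

theorem floor_eq_floor_of_floor_two_mul {a b : ℝ} (h : ⌊2 * a⌋ = ⌊2 * b⌋) : ⌊a⌋ = ⌊b⌋ := by
  have half : ∀ a : ℝ, ⌊a⌋ = ⌊2 * a⌋ / 2 := fun a ↦ by
    have := Int.floor_div_natCast (2 * a) 2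
    rwa [Nat.cast_ofNat, mul_div_cancel_left₀ a two_ne_zero] at this
  rw [half a, half b, h]

theorem cellLabel_refines (l : ℕ) (x y : Fin d → ℝ)
    (h : cellLabel (l + 1) x = cellLabel (l + 1) y) : cellLabel l x = cellLabel l y := by
  simp only [cellLabel, Prod.mk.injEq] at h ⊢
  refine ⟨h.1, funext fun i ↦ floor_eq_floor_of_floor_two_mul ?_⟩
  simpa only [pow_succ', mul_assoc, mul_div_assoc] using congrFun h.2 i

/-- The cells of level `l` that may meet the shell `k`. -/
def shellCells (d l k : ℕ) : Finset (CellLabel d) :=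
  (Fintype.piFinset fun _ ↦ Finset.Icc (-2 ^ l) (2 ^ l)).map ⟨(k, ·), Prod.mk_right_injective k⟩

theorem mem_shellCells {l k : ℕ} {i : CellLabel d} :
    i ∈ shellCells d l k ↔ i.1 = k ∧ ∀ j, -2 ^ l ≤ i.2 j ∧ i.2 j ≤ 2 ^ l := by
  obtain ⟨k', z⟩ := i
  simp only [shellCells, Finset.mem_map, Fintype.mem_piFinset, Finset.mem_Icc,
    Function.Embedding.coeFn_mk, Prod.mk.injEq]
  exact ⟨fun ⟨_, hz, hk, hzz⟩ ↦ ⟨hk.symm, hzz ▸ hz⟩, fun ⟨hk, hz⟩ ↦ ⟨z, hz, hk.symm, rfl⟩⟩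

theorem cellLabel_mem_shellCells (l : ℕ) (x : Fin d → ℝ) :
    cellLabel l x ∈ shellCells d l (shell x) := by
  refine mem_shellCells.2 ⟨rfl, fun i ↦ ?_⟩
  have hx := abs_le.1 ((abs_apply_le_eucNorm x i).trans (eucNorm_le_two_pow_shell x))
  have hk : (0 : ℝ) < 2 ^ shell x := by positivity
  have hl : (0 : ℝ) < 2 ^ l := by positivity
  constructor
  · rw [cellLabel, Int.le_floor, le_div_iff₀ hk]
    push_cast
    nlinarith [hx.1]
  · refine Int.cast_le.1 ((Int.floor_le (2 ^ l * x i / 2 ^ shell x)).trans ?_)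
    rw [div_le_iff₀ hk]
    push_cast
    nlinarith [hx.2]

theorem card_shellCells_le (d l k : ℕ) : (shellCells d l k).card ≤ (3 * 2 ^ l) ^ d := by
  have hcard : (2 ^ l + 1 - -2 ^ l : ℤ).toNat = 2 * 2 ^ l + 1 := by
    have h : (2 ^ l + 1 - -2 ^ l : ℤ) = ((2 * 2 ^ l + 1 : ℕ) : ℤ) := by push_cast; ring
    rw [h, Int.toNat_natCast]
  have := Nat.one_le_two_pow (n := l)
  simp only [shellCells, Finset.card_map, Fintype.card_piFinset, Int.card_Icc, Finset.prod_const,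
    Finset.card_univ, Fintype.card_fin, hcard]
  exact Nat.pow_le_pow_left (by omega) d

/-- The cell of level `l` with label `i`. -/
def cell (l : ℕ) (i : CellLabel d) : Set (Fin d → ℝ) := cellLabel l ⁻¹' {i}

theorem measurableSet_cell (l : ℕ) (i : CellLabel d) : MeasurableSet (cell l i) :=
  measurable_cellLabel l (measurableSet_singleton i)

theorem pairwise_disjoint_cell (l : ℕ) : Pairwise (Function.onFun Disjoint (cell (d := d) l)) :=
  pairwise_disjoint_fiber _

theorem cell_subset_shell {l k : ℕ} {i : CellLabel d} (hi : i ∈ shellCells d l k) :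
    cell l i ⊆ shell ⁻¹' {k} := by
  rintro x rfl
  exact (mem_shellCells.1 hi).1

theorem cell_eq_empty {l : ℕ} {i : CellLabel d} (hi : i ∉ shellCells d l i.1) : cell l i = ∅ := by
  refine eq_empty_iff_forall_notMem.2 ?_
  rintro x rfl
  exact hi (cellLabel_mem_shellCells l x)

theorem sum_measure_cell_le (l k : ℕ) (μ : Measure (Fin d → ℝ)) :
    ∑ i ∈ shellCells d l k, μ (cell l i) ≤ μ (shell ⁻¹' {k}) := by
  rw [← measure_biUnion_finset ((pairwise_disjoint_cell l).set_pairwise _)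
    fun i _ ↦ measurableSet_cell l i]
  exact measure_mono (iUnion₂_subset fun i hi ↦ cell_subset_shell hi)

end DyadicPartition

section DyadicTransport

variable {d : ℕ}

/-- The `p`-th power of the radius `2 ^ k` of the shell `k`. -/
def shellWeight (p : ℝ) (k : ℕ) : ℝ := 2 ^ (p * k)

/-- The `p`-th power of the diameter `√d * 2 ^ (-l)` of a cell of level `l`, relatively to the
radius of its shell. -/
def cellScale (p : ℝ) (d l : ℕ) : ℝ := d ^ (p / 2) * 2 ^ (-(p * l))

/-- The transport cost `|x - y| ^ p`. -/
def powCost (p : ℝ) (z : (Fin d → ℝ) × (Fin d → ℝ)) : ℝ≥0∞ :=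
  ENNReal.ofReal (eucDist z.1 z.2 ^ p)

theorem shellWeight_eq_pow_rpow (p : ℝ) (k : ℕ) : shellWeight p k = ((2 : ℝ) ^ k) ^ p := by
  rw [shellWeight, ← Real.rpow_natCast_mul zero_le_two, mul_comm]

theorem shellWeight_pos (p : ℝ) (k : ℕ) : 0 < shellWeight p k := Real.rpow_pos_of_pos two_pos _

theorem cellScale_nonneg (p : ℝ) (d l : ℕ) : 0 ≤ cellScale p d l := by
  unfold cellScale
  positivity

theorem eucDist_le_of_cellLabel_eq {l : ℕ} {x y : Fin d → ℝ} (h : cellLabel l x = cellLabel l y) :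
    eucDist x y ≤ √d * (2 ^ shell y / 2 ^ l) := by
  obtain ⟨hshell, hpos⟩ := Prod.ext_iff.1 h
  simp only [cellLabel] at hshell hpos
  rw [hshell] at hpos
  set s : ℝ := 2 ^ shell y / 2 ^ l with hs
  have hs0 : 0 < s := by positivity
  have hcoord : ∀ i, (x i - y i) ^ 2 ≤ s ^ 2 := fun i ↦ by
    have hi := Int.abs_sub_lt_one_of_floor_eq_floor (congrFun hpos i)
    have heq : 2 ^ l * x i / 2 ^ shell y - 2 ^ l * y i / 2 ^ shell y = (x i - y i) / s := by
      rw [hs]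
      field_simp
    rw [heq, abs_div, abs_of_pos hs0, div_lt_one hs0] at hi
    exact sq_le_sq' (abs_le.1 hi.le).1 (abs_le.1 hi.le).2
  calc √(∑ i, (x i - y i) ^ 2) ≤ √(∑ _ : Fin d, s ^ 2) :=
        Real.sqrt_le_sqrt (Finset.sum_le_sum fun i _ ↦ hcoord i)
    _ = √d * s := by
        rw [Finset.sum_const, Finset.card_univ, Fintype.card_fin, nsmul_eq_mul,
          Real.sqrt_mul d.cast_nonneg, Real.sqrt_sq hs0.le]

theorem powCost_le_of_cellLabel_eq {p : ℝ} (hp : 0 ≤ p) (l : ℕ) (x y : Fin d → ℝ)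
    (h : cellLabel l x = cellLabel l y) : powCost p (x, y) ≤
      ENNReal.ofReal (cellScale p d l) * ENNReal.ofReal (shellWeight p (shell y)) := by
  rw [← ENNReal.ofReal_mul (cellScale_nonneg p d l)]
  refine ENNReal.ofReal_le_ofReal ?_
  calc eucDist x y ^ p ≤ (√d * (2 ^ shell y / 2 ^ l)) ^ p :=
        Real.rpow_le_rpow (eucDist_nonneg x y) (eucDist_le_of_cellLabel_eq h) hp
    _ = cellScale p d l * shellWeight p (shell y) := by
        rw [Real.mul_rpow (by positivity) (by positivity),
          Real.div_rpow (by positivity) (by positivity), ← shellWeight_eq_pow_rpow,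
          ← shellWeight_eq_pow_rpow, cellScale, Real.sqrt_eq_rpow, ← Real.rpow_mul (by positivity),
          Real.rpow_neg zero_le_two, one_div_mul_eq_div]
        simp only [shellWeight]
        ring

theorem powCost_le_add {p : ℝ} (hp : 1 ≤ p) (x y : Fin d → ℝ) :
    powCost p (x, y) ≤ ENNReal.ofReal (2 ^ (p - 1)) *
      (ENNReal.ofReal (shellWeight p (shell x)) + ENNReal.ofReal (shellWeight p (shell y))) := by
  rw [← ENNReal.ofReal_add (shellWeight_pos _ _).le (shellWeight_pos _ _).le,
    ← ENNReal.ofReal_mul (by positivity)]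
  refine ENNReal.ofReal_le_ofReal ?_
  have hdist : eucDist x y ≤ 2 ^ shell x + 2 ^ shell y :=
    (eucDist_le_add x y).trans
      (add_le_add (eucNorm_le_two_pow_shell x) (eucNorm_le_two_pow_shell y))
  have hconvex := NNReal.rpow_add_le_mul_rpow_add_rpow (2 ^ shell x) (2 ^ shell y) hp
  rw [shellWeight_eq_pow_rpow, shellWeight_eq_pow_rpow]
  exact (Real.rpow_le_rpow (eucDist_nonneg x y) hdist (by positivity)).trans (mod_cast hconvex)

theorem isMultiscaleCost_powCost {p : ℝ} (hp : 1 ≤ p) :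
    IsMultiscaleCost (cellLabel (d := d)) (fun i ↦ ENNReal.ofReal (shellWeight p i.1)) (powCost p)
      (fun l ↦ ENNReal.ofReal (cellScale p d l)) (ENNReal.ofReal (2 ^ (p - 1))) where
  measurable := measurable_cellLabel
  refines := cellLabel_refines
  weight_eq _ _ := rfl
  cost_le := powCost_le_of_cellLabel_eq (by positivity)
  cost_le_add := powCost_le_add hp

/-- The total variation between `μ` and `ν` seen on the cells of level `l` in the shell `k`. -/
def shellDiff (l k : ℕ) (μ ν : Measure (Fin d → ℝ)) : ℝ≥0∞ :=
  ∑ i ∈ shellCells d l k, massDiff μ ν (cell l i)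

theorem measurable_shellDiff {T : Type*} [MeasurableSpace T] {κ η : T → Measure (Fin d → ℝ)}
    (hκ : Measurable κ) (hη : Measurable η) (l k : ℕ) :
    Measurable fun t ↦ shellDiff l k (κ t) (η t) :=
  Finset.measurable_sum _ fun i _ ↦ measurable_massDiff hκ hη (measurableSet_cell l i)

theorem discrepancy_cellLabel_eq (p : ℝ) (l : ℕ) (μ ν : Measure (Fin d → ℝ)) :
    discrepancy (cellLabel l) (fun i ↦ ENNReal.ofReal (shellWeight p i.1)) μ ν =
      ∑' k, ENNReal.ofReal (shellWeight p k) * shellDiff l k μ ν := by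
  rw [discrepancy, ENNReal.tsum_prod']
  refine tsum_congr fun k ↦ ?_
  dsimp only
  rw [ENNReal.tsum_mul_left, shellDiff, shellCells, Finset.sum_map]
  refine congrArg _ (tsum_eq_sum fun z hz ↦ ?_)
  have hempty : cell l (k, z) = ∅ := cell_eq_empty fun h ↦ hz ?_
  · rw [← cell, hempty]
    simp [massDiff]
  · simpa [shellCells] using h

/-- The weight of the level `l` in `dyadicBound`: mass discrepant at level `l + 1` but not at
level `l` moves inside a cell of level `l`. -/
def levelCoef (p : ℝ) (d : ℕ) : ℕ → ℝ
  | 0 => 2 ^ (p - 1)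
  | l + 1 => cellScale p d l

theorem levelCoef_nonneg (p : ℝ) (d l : ℕ) : 0 ≤ levelCoef p d l := by
  cases l with
  | zero => exact Real.rpow_nonneg zero_le_two _
  | succ l => exact cellScale_nonneg p d l

/-- A multiscale upper bound for the `p`-th power of the `p`-Wasserstein distance. -/
def dyadicBound (p : ℝ) (μ ν : Measure (Fin d → ℝ)) : ℝ≥0∞ :=
  ∑' l, ∑' k, ENNReal.ofReal (levelCoef p d l * shellWeight p k) * shellDiff l k μ ν

theorem measurable_dyadicBound {T : Type*} [MeasurableSpace T] (p : ℝ)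
    {κ η : T → Measure (Fin d → ℝ)} (hκ : Measurable κ) (hη : Measurable η) :
    Measurable fun t ↦ dyadicBound p (κ t) (η t) :=
  Measurable.tsum fun l ↦ Measurable.tsum fun k ↦ (measurable_shellDiff hκ hη l k).const_mul _

theorem dyadicBound_eq (p : ℝ) (μ ν : Measure (Fin d → ℝ)) :
    let w : CellLabel d → ℝ≥0∞ := fun i ↦ ENNReal.ofReal (shellWeight p i.1)
    dyadicBound p μ ν = ENNReal.ofReal (2 ^ (p - 1)) * discrepancy (cellLabel 0) w μ ν +
      ∑' l, ENNReal.ofReal (cellScale p d l) * discrepancy (cellLabel (l + 1)) w μ ν := by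
  intro w
  have hlevel : ∀ l, ∑' k, ENNReal.ofReal (levelCoef p d l * shellWeight p k) * shellDiff l k μ ν =
      ENNReal.ofReal (levelCoef p d l) * discrepancy (cellLabel l) w μ ν := fun l ↦ by
    simp_rw [w, discrepancy_cellLabel_eq, ← ENNReal.tsum_mul_left,
      ENNReal.ofReal_mul (levelCoef_nonneg _ _ _), mul_assoc]
  simp_rw [dyadicBound, hlevel]
  rw [tsum_eq_zero_add' ENNReal.summable]
  rfl

theorem exists_coupling_lintegral_powCost_le {T : Type*} [MeasurableSpace T] {p : ℝ} (hp : 1 ≤ p)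
    (L : ℕ) (κ η : Kernel T (Fin d → ℝ)) [IsMarkovKernel κ] [IsMarkovKernel η] :
    ∃ γ : Kernel T ((Fin d → ℝ) × (Fin d → ℝ)), (∀ t, (γ t).map Prod.fst = κ t) ∧
      (∀ t, (γ t).map Prod.snd = η t) ∧ ∀ t, ∫⁻ z, powCost p z ∂γ t ≤ dyadicBound p (κ t) (η t) +
        ENNReal.ofReal (cellScale p d L) *
          ∫⁻ y, ENNReal.ofReal (shellWeight p (shell y)) ∂η t := by
  obtain ⟨γ, hfst, hsnd, hcost⟩ := (isMultiscaleCost_powCost hp).exists_coupling L κ η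
  exact ⟨γ, hfst, hsnd, fun t ↦ by rw [dyadicBound_eq]; exact hcost t⟩

end DyadicTransport

section IndicatorBound

variable {E : Type*} {f : E → ℝ} {A : Set E}

theorem exp_mul_le_of_abs_le_indicator (hfA : ∀ x, |f x| ≤ A.indicator 1 x) {t : ℝ}
    (ht0 : 0 ≤ t) (ht1 : t ≤ 1) (x : E) :
    Real.exp (t * f x) ≤ 1 + t * f x + A.indicator (fun _ ↦ 3 / 4 * t ^ 2) x := by
  by_cases hx : x ∈ A
  · have hfx : |f x| ≤ 1 := by simpa [hx] using hfA x
    have htf : |t * f x| ≤ 1 := by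
      rw [abs_mul, abs_of_nonneg ht0]
      exact mul_le_one₀ ht1 (abs_nonneg _) hfx
    have htaylor := (abs_le.1 (Real.exp_bound htf two_pos)).2
    have hsum : ∑ m ∈ Finset.range 2, (t * f x) ^ m / m.factorial = 1 + t * f x := by
      simp [Finset.sum_range_succ]
    rw [sq_abs, hsum] at htaylor
    norm_num at htaylor
    have hsq : (t * f x) ^ 2 ≤ t ^ 2 := by
      rw [mul_pow]
      exact mul_le_of_le_one_right (sq_nonneg t) ((sq_le_one_iff_abs_le_one _).2 hfx)
    rw [indicator_of_mem hx]
    linarith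
  · have hfx : f x = 0 := by simpa [hx] using hfA x
    simp [hx, hfx]

theorem abs_le_one_of_abs_le_indicator (hfA : ∀ x, |f x| ≤ A.indicator 1 x) (x : E) : |f x| ≤ 1 :=
  (hfA x).trans (indicator_le_self' (fun _ _ ↦ zero_le_one) x)

end IndicatorBound

section IIDSequence

variable {E : Type*} [MeasurableSpace E]

/-- The first `n` terms of a sequence. -/
def initSeg (n : ℕ) (ω : ℕ → E) : Fin n → E := fun i ↦ ω i

theorem measurable_initSeg (n : ℕ) : Measurable (initSeg (E := E) n) := by
  unfold initSeg
  fun_prop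

variable (E) in
/-- The filtration of the sequence space whose `n`-th σ-algebra is generated by the first `n`
coordinates. -/
def initSegFiltration : Filtration ℕ (inferInstance : MeasurableSpace (ℕ → E)) where
  seq n := MeasurableSpace.comap (initSeg n) inferInstance
  mono' m n hmn := by
    have h : initSeg (E := E) m = (fun v i ↦ v (Fin.castLE hmn i)) ∘ initSeg n := rfl
    dsimp only
    rw [h, ← MeasurableSpace.comap_comp]
    exact MeasurableSpace.comap_mono (Measurable.comap_le (by fun_prop))
  le' n := (measurable_initSeg n).comap_le

theorem iSup_initSegFiltration : ⨆ n, initSegFiltration E n = MeasurableSpace.pi := by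
  refine le_antisymm (iSup_le (initSegFiltration E).le) (iSup_le fun i ↦ ?_)
  refine le_trans ?_ (le_iSup (fun n ↦ (initSegFiltration E n : MeasurableSpace _)) (i + 1))
  have h : (fun ω : ℕ → E ↦ ω i) = (fun v ↦ v (Fin.last i)) ∘ initSeg (i + 1) := rfl
  rw [h, ← MeasurableSpace.comap_comp]
  exact MeasurableSpace.comap_mono (Measurable.comap_le (by fun_prop))

/-- The law of a sequence of independent random variables of law `𝔭`. -/
abbrev iidLaw (𝔭 : Measure E) : Measure (ℕ → E) := Measure.infinitePi fun _ ↦ 𝔭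

variable (𝔭 : Measure E)

/-- The sum of the first `n` values of `f`, centered under the i.i.d. law with marginals `𝔭`. -/
def centeredSum (f : E → ℝ) (n : ℕ) (ω : ℕ → E) : ℝ := ∑ i ∈ Finset.range n, (f (ω i) - 𝔭[f])

theorem measurable_centeredSum {f : E → ℝ} (hf : Measurable f) (n : ℕ) :
    Measurable (centeredSum 𝔭 f n) := by
  unfold centeredSum
  fun_prop

theorem centeredSum_neg (f : E → ℝ) (n : ℕ) (ω : ℕ → E) :
    centeredSum 𝔭 (-f) n ω = -centeredSum 𝔭 f n ω := by
  simp only [centeredSum, Pi.neg_apply, integral_neg, neg_sub_neg, ← Finset.sum_neg_distrib,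
    neg_sub]

variable [IsProbabilityMeasure 𝔭]

theorem iIndepFun_apply_iidLaw : iIndepFun (fun (i : ℕ) (ω : ℕ → E) ↦ ω i) (iidLaw 𝔭) :=
  iIndepFun_infinitePi (X := fun _ ↦ id) fun _ ↦ measurable_id

theorem indepFun_apply_initSeg (n : ℕ) :
    IndepFun (fun ω : ℕ → E ↦ ω n) (initSeg n) (iidLaw 𝔭) :=
  ((iIndepFun_apply_iidLaw 𝔭).indepFun_finset {n} (Finset.range n) (by simp)
    measurable_pi_apply).comp
    (φ := fun v : ({n} : Finset ℕ) → E ↦ v ⟨n, Finset.mem_singleton_self n⟩)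
    (ψ := fun (v : Finset.range n → E) (i : Fin n) ↦ v ⟨i, Finset.mem_range.2 i.2⟩)
    (by fun_prop) (by fun_prop)

section Products

variable {𝔭} {g : E → ℝ}

theorem integral_apply_iidLaw (hg : Measurable g) (n : ℕ) :
    ∫ ω, g (ω n) ∂iidLaw 𝔭 = ∫ x, g x ∂𝔭 := by
  conv_rhs => rw [← Measure.infinitePi_map_eval (fun _ : ℕ ↦ 𝔭) n]
  exact (integral_map (measurable_pi_apply n).aemeasurable hg.aestronglyMeasurable).symm

theorem integral_prod_apply_iidLaw (hg : Measurable g) (n : ℕ) :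
    ∫ ω, ∏ i ∈ Finset.range n, g (ω i) ∂iidLaw 𝔭 = (∫ x, g x ∂𝔭) ^ n := by
  have hindep := ((iIndepFun_apply_iidLaw 𝔭).comp (fun _ ↦ g) fun _ ↦ hg).precomp
    (Fin.val_injective (n := n))
  have h := hindep.integral_fun_prod_eq_prod_integral
    fun i ↦ (hg.comp (measurable_pi_apply _)).aestronglyMeasurable
  simp only [Function.comp_apply, integral_apply_iidLaw hg, Finset.prod_const, Finset.card_univ,
    Fintype.card_fin] at h
  simpa only [Finset.prod_range] using h

theorem measurable_prod_apply_initSegFiltration (hg : Measurable g) (n : ℕ) :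
    Measurable[initSegFiltration E n] fun ω ↦ ∏ i ∈ Finset.range n, g (ω i) := by
  have h : Measurable fun v : Fin n → E ↦ ∏ i, g (v i) := by fun_prop
  simp only [Finset.prod_range]
  exact h.comp (comap_measurable (initSeg n))

theorem integrable_prod_apply_iidLaw {K : ℝ} (hg : Measurable g) (hK : ∀ x, |g x| ≤ K) (n : ℕ) :
    Integrable (fun ω ↦ ∏ i ∈ Finset.range n, g (ω i)) (iidLaw 𝔭) := by
  refine .of_bound (Measurable.aestronglyMeasurable (by fun_prop)) (K ^ n) (ae_of_all _ fun ω ↦ ?_)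
  rw [Real.norm_eq_abs, Finset.abs_prod]
  exact (Finset.prod_le_prod (fun _ _ ↦ abs_nonneg _) fun i _ ↦ hK (ω i)).trans (by simp)

theorem submartingale_prod_apply {K : ℝ} (hg : Measurable g) (hK : ∀ x, |g x| ≤ K)
    (hg0 : ∀ x, 0 ≤ g x) (hg1 : 1 ≤ ∫ x, g x ∂𝔭) :
    Submartingale (fun n ω ↦ ∏ i ∈ Finset.range n, g (ω i)) (initSegFiltration E) (iidLaw 𝔭) := by
  refine submartingale_nat
    (fun n ↦ (measurable_prod_apply_initSegFiltration hg n).stronglyMeasurable)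
    (integrable_prod_apply_iidLaw hg hK) fun n ↦ ?_
  have hsucc : (fun ω : ℕ → E ↦ ∏ i ∈ Finset.range (n + 1), g (ω i)) =
      (fun ω ↦ ∏ i ∈ Finset.range n, g (ω i)) * fun ω ↦ g (ω n) :=
    funext fun ω ↦ Finset.prod_range_succ _ _
  have hpull : (iidLaw 𝔭)[fun ω ↦ ∏ i ∈ Finset.range (n + 1), g (ω i) | initSegFiltration E n]
      =ᵐ[iidLaw 𝔭] (fun ω ↦ ∏ i ∈ Finset.range n, g (ω i)) *
        (iidLaw 𝔭)[fun ω ↦ g (ω n) | initSegFiltration E n] := by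
    rw [hsucc]
    refine condExp_mul_of_stronglyMeasurable_left
      (measurable_prod_apply_initSegFiltration hg n).stronglyMeasurable ?_
      (.of_bound (Measurable.aestronglyMeasurable (by fun_prop)) K (ae_of_all _ fun ω ↦ hK _))
    rw [← hsucc]
    exact integrable_prod_apply_iidLaw hg hK _
  have hcond : (iidLaw 𝔭)[fun ω ↦ g (ω n) | initSegFiltration E n]
      =ᵐ[iidLaw 𝔭] fun _ ↦ ∫ ω, g (ω n) ∂iidLaw 𝔭 :=
    condExp_indep_eq (measurable_pi_apply n).comap_le ((initSegFiltration E).le n)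
      (hg.comp (comap_measurable _)).stronglyMeasurable
      ((IndepFun_iff_Indep _ _ _).1 (indepFun_apply_initSeg 𝔭 n))
  filter_upwards [hpull, hcond] with ω hpull hcond
  rw [hpull, Pi.mul_apply, hcond, integral_apply_iidLaw hg]
  exact le_mul_of_one_le_right (Finset.prod_nonneg fun i _ ↦ hg0 _) hg1

end Products

section MaximalInequality

variable {𝔭} {f : E → ℝ} {A : Set E} {t : ℝ}

theorem integrable_of_abs_le_one (hf : Measurable f) (hf1 : ∀ x, |f x| ≤ 1) : Integrable f 𝔭 :=
  .of_bound hf.aestronglyMeasurable 1 (ae_of_all _ hf1)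

theorem mgf_centered_le (hf : Measurable f) (hA : MeasurableSet A)
    (hfA : ∀ x, |f x| ≤ A.indicator 1 x) (ht0 : 0 ≤ t) (ht1 : t ≤ 1) :
    mgf (fun x ↦ f x - 𝔭[f]) 𝔭 t ≤ Real.exp (3 / 4 * 𝔭.real A * t ^ 2) := by
  have hfi : Integrable f 𝔭 := integrable_of_abs_le_one hf (abs_le_one_of_abs_le_indicator hfA)
  have hlin : Integrable (fun x ↦ 1 + t * f x) 𝔭 := (integrable_const _).add (hfi.const_mul t)
  have hind : Integrable (A.indicator fun _ ↦ 3 / 4 * t ^ 2) 𝔭 := (integrable_const _).indicator hA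
  have hmgf : mgf f 𝔭 t ≤ Real.exp (t * 𝔭[f] + 3 / 4 * 𝔭.real A * t ^ 2) :=
    calc mgf f 𝔭 t ≤ ∫ x, (1 + t * f x + A.indicator (fun _ ↦ 3 / 4 * t ^ 2) x) ∂𝔭 :=
          integral_mono_of_nonneg (ae_of_all _ fun x ↦ (Real.exp_pos _).le) (hlin.add hind)
            (ae_of_all _ (exp_mul_le_of_abs_le_indicator hfA ht0 ht1))
      _ = t * 𝔭[f] + 3 / 4 * 𝔭.real A * t ^ 2 + 1 := by
          rw [integral_add hlin hind, integral_add (integrable_const _) (hfi.const_mul t),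
            integral_const_mul, integral_indicator hA]
          simp only [integral_const, probReal_univ, smul_eq_mul, measureReal_restrict_apply_univ]
          ring
      _ ≤ _ := Real.add_one_le_exp _
  simp_rw [sub_eq_add_neg]
  rw [mgf_add_const]
  calc mgf f 𝔭 t * Real.exp (t * -𝔭[f])
      ≤ Real.exp (t * 𝔭[f] + 3 / 4 * 𝔭.real A * t ^ 2) * Real.exp (t * -𝔭[f]) := by gcongr
    _ = _ := by rw [← Real.exp_add]; congr 1; ring

theorem one_le_mgf_centered (hf : Measurable f) (hf1 : ∀ x, |f x| ≤ 1) (t : ℝ) :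
    1 ≤ mgf (fun x ↦ f x - 𝔭[f]) 𝔭 t := by
  have hfi : Integrable f 𝔭 := integrable_of_abs_le_one hf hf1
  have hlin : Integrable (fun x ↦ t * (f x - 𝔭[f])) 𝔭 :=
    (hfi.sub (integrable_const _)).const_mul t
  have hexp : Integrable (fun x ↦ Real.exp (t * (f x - 𝔭[f]))) 𝔭 :=
    integrable_exp_mul_of_mem_Icc (a := -1 - 𝔭[f]) (b := 1 - 𝔭[f]) (by fun_prop)
      (ae_of_all _ fun x ↦ ⟨by linarith [(abs_le.1 (hf1 x)).1], by linarith [(abs_le.1 (hf1 x)).2]⟩)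
  calc 1 = ∫ x, (t * (f x - 𝔭[f]) + 1) ∂𝔭 := by
        rw [integral_add hlin (integrable_const _), integral_const_mul,
          integral_sub hfi (integrable_const _)]
        simp
    _ ≤ _ := integral_mono (hlin.add (integrable_const _)) hexp fun x ↦ Real.add_one_le_exp _

theorem submartingale_exp_centeredSum (hf : Measurable f) (hf1 : ∀ x, |f x| ≤ 1) (ht0 : 0 ≤ t) :
    Submartingale (fun n ω ↦ Real.exp (t * centeredSum 𝔭 f n ω)) (initSegFiltration E)
      (iidLaw 𝔭) := by
  have hbdd : ∀ x, |Real.exp (t * (f x - 𝔭[f]))| ≤ Real.exp (t * (1 - 𝔭[f])) := fun x ↦ by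
    rw [abs_of_pos (Real.exp_pos _)]
    gcongr
    exact (abs_le.1 (hf1 x)).2
  simpa only [centeredSum, Finset.mul_sum, Real.exp_sum] using
    submartingale_prod_apply (𝔭 := 𝔭) (by fun_prop) hbdd (fun x ↦ (Real.exp_pos _).le)
      (one_le_mgf_centered hf hf1 t)

theorem integral_exp_centeredSum (hf : Measurable f) (t : ℝ) (n : ℕ) :
    ∫ ω, Real.exp (t * centeredSum 𝔭 f n ω) ∂iidLaw 𝔭 = mgf (fun x ↦ f x - 𝔭[f]) 𝔭 t ^ n := by
  simp only [centeredSum, Finset.mul_sum, Real.exp_sum]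
  exact integral_prod_apply_iidLaw (𝔭 := 𝔭) (g := fun x ↦ Real.exp (t * (f x - 𝔭[f])))
    (by fun_prop) n

theorem measure_exists_le_centeredSum_le (hf : Measurable f) (hA : MeasurableSet A)
    (hfA : ∀ x, |f x| ≤ A.indicator 1 x) (ht0 : 0 ≤ t) (ht1 : t ≤ 1) (N : ℕ) (a : ℝ) :
    iidLaw 𝔭 {ω | ∃ n ≤ N, a ≤ centeredSum 𝔭 f n ω} ≤
      ENNReal.ofReal (Real.exp (3 / 4 * N * 𝔭.real A * t ^ 2 - t * a)) := by
  have hsub := submartingale_exp_centeredSum (𝔭 := 𝔭) hf (abs_le_one_of_abs_le_indicator hfA) ht0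
  have hmax := maximal_ineq hsub (fun n ω ↦ (Real.exp_pos _).le)
    (ε := (Real.exp (t * a)).toNNReal) N
  simp only [Real.coe_toNNReal _ (Real.exp_pos _).le, Finset.le_sup'_iff, Finset.mem_range,
    Order.lt_add_one_iff] at hmax
  have hevent : {ω | ∃ n ≤ N, a ≤ centeredSum 𝔭 f n ω} ⊆
      {ω | ∃ n ≤ N, Real.exp (t * a) ≤ Real.exp (t * centeredSum 𝔭 f n ω)} :=
    fun ω ⟨n, hn, h⟩ ↦ ⟨n, hn, by gcongr⟩
  have hmgf := mgf_centered_le (𝔭 := 𝔭) hf hA hfA ht0 ht1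
  have hfinal : ∫ ω in {ω | ∃ n ≤ N, Real.exp (t * a) ≤ Real.exp (t * centeredSum 𝔭 f n ω)},
      Real.exp (t * centeredSum 𝔭 f N ω) ∂iidLaw 𝔭 ≤
        Real.exp (3 / 4 * N * 𝔭.real A * t ^ 2) :=
    calc _ ≤ ∫ ω, Real.exp (t * centeredSum 𝔭 f N ω) ∂iidLaw 𝔭 :=
          setIntegral_le_integral (hsub.integrable N) (ae_of_all _ fun ω ↦ (Real.exp_pos _).le)
      _ ≤ Real.exp (3 / 4 * 𝔭.real A * t ^ 2) ^ N := by
          rw [integral_exp_centeredSum hf]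
          exact pow_le_pow_left₀ mgf_nonneg hmgf N
      _ = _ := by rw [← Real.exp_nat_mul]; congr 1; ring
  rw [Real.exp_sub, ENNReal.ofReal_div_of_pos (Real.exp_pos _)]
  refine ENNReal.le_div_iff_mul_le (.inl (by simp [Real.exp_pos])) (.inl ENNReal.ofReal_ne_top)
    |>.2 ?_
  rw [mul_comm]
  exact (mul_le_mul_right (measure_mono hevent) _).trans
    (hmax.trans (ENNReal.ofReal_le_ofReal hfinal))

theorem measure_exists_le_abs_centeredSum_le (hf : Measurable f) (hA : MeasurableSet A)
    (hfA : ∀ x, |f x| ≤ A.indicator 1 x) (ht0 : 0 ≤ t) (ht1 : t ≤ 1) (N : ℕ) (a : ℝ) :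
    iidLaw 𝔭 {ω | ∃ n ≤ N, a ≤ |centeredSum 𝔭 f n ω|} ≤
      2 * ENNReal.ofReal (Real.exp (3 / 4 * N * 𝔭.real A * t ^ 2 - t * a)) := by
  have hsplit : {ω | ∃ n ≤ N, a ≤ |centeredSum 𝔭 f n ω|} ⊆
      {ω | ∃ n ≤ N, a ≤ centeredSum 𝔭 f n ω} ∪ {ω | ∃ n ≤ N, a ≤ centeredSum 𝔭 (-f) n ω} := by
    rintro ω ⟨n, hn, h⟩
    simp only [centeredSum_neg]
    exact (le_abs.1 h).imp (fun h ↦ ⟨n, hn, h⟩) fun h ↦ ⟨n, hn, h⟩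
  refine (measure_mono hsplit).trans ((measure_union_le _ _).trans ?_)
  rw [two_mul]
  exact add_le_add (measure_exists_le_centeredSum_le hf hA hfA ht0 ht1 N a)
    (measure_exists_le_centeredSum_le hf.neg hA (by simpa using hfA) ht0 ht1 N a)

end MaximalInequality

end IIDSequence

section Log2

theorem one_le_Log2 (x : ℝ) : 1 ≤ Log2 x := by
  unfold Log2
  split_ifs with h
  · exact le_rfl
  · have hx := not_lt.1 h
    have hx0 : 0 < x := (Real.exp_pos _).trans_le hx
    have hlog : Real.exp 1 ≤ Real.log x := (Real.le_log_iff_exp_le hx0).2 hx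
    exact (Real.le_log_iff_exp_le ((Real.exp_pos _).trans_le hlog)).2 hlog

theorem Log2_pos (x : ℝ) : 0 < Log2 x := one_pos.trans_le (one_le_Log2 x)

theorem monotone_Log2 : Monotone Log2 := by
  intro x y h
  by_cases hx : x < Real.exp (Real.exp 1)
  · rw [Log2, if_pos hx]
    exact one_le_Log2 y
  · rw [Log2, Log2, if_neg hx, if_neg fun hy ↦ hx (h.trans_lt hy)]
    have hx1 : 1 < x := (Real.one_lt_exp_iff.2 (Real.exp_pos 1)).trans_le (not_lt.1 hx)
    exact Real.log_le_log (Real.log_pos hx1) (Real.log_le_log (one_pos.trans hx1) h)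

theorem Log2_le_one_add_log {x : ℝ} (hx : 1 ≤ x) : Log2 x ≤ 1 + Real.log x := by
  have hlog := Real.log_nonneg hx
  unfold Log2
  split_ifs
  · linarith
  · linarith [Real.log_le_self hlog]

theorem Log2_le_rpow {τ : ℝ} (hτ : 0 < τ) {x : ℝ} (hx : 1 ≤ x) :
    Log2 x ≤ (1 + 1 / τ) * x ^ τ := by
  calc Log2 x ≤ 1 + Real.log x := Log2_le_one_add_log hx
    _ ≤ x ^ τ + x ^ τ / τ :=
      add_le_add (Real.one_le_rpow hx hτ.le) (Real.log_le_rpow_div (by linarith) hτ)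
    _ = _ := by ring

theorem isLittleO_Log2_id : Log2 =o[atTop] (id : ℝ → ℝ) := by
  refine Asymptotics.IsBigO.trans_isLittleO (.of_bound' ?_)
    ((Asymptotics.isLittleO_const_id_atTop (1 : ℝ)).add Real.isLittleO_log_id_atTop)
  filter_upwards [eventually_ge_atTop 1] with x hx
  simpa [abs_of_pos (Log2_pos x), abs_of_nonneg (add_nonneg zero_le_one (Real.log_nonneg hx))]
    using Log2_le_one_add_log hx

theorem tendsto_two_pow_atTop : Tendsto (fun j : ℕ ↦ (2 : ℝ) ^ j) atTop atTop :=
  tendsto_pow_atTop_atTop_of_one_lt one_lt_two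

theorem eventually_Log2_two_pow_le {ε : ℝ} (hε : 0 < ε) :
    ∀ᶠ j : ℕ in atTop, Log2 (2 ^ j) ≤ ε * 2 ^ j := by
  filter_upwards [tendsto_two_pow_atTop.eventually (isLittleO_Log2_id.bound hε)] with j hj
  simpa [abs_of_pos (Log2_pos _)] using hj

theorem summable_exp_neg_mul_Log2_two_pow {c : ℝ} (hc : 1 < c) :
    Summable fun j : ℕ ↦ Real.exp (-c * Log2 (2 ^ j)) := by
  have hlog2 : 0 < Real.log 2 := Real.log_pos one_lt_two
  have hs : Summable fun j : ℕ ↦ Real.log 2 ^ (-c) * (j : ℝ) ^ (-c) :=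
    (Real.summable_nat_rpow.2 (by linarith)).mul_left _
  refine .of_norm_bounded_eventually_nat hs ?_
  filter_upwards [tendsto_two_pow_atTop.eventually_ge_atTop (Real.exp (Real.exp 1)),
    eventually_ge_atTop 1] with j hj hj1
  have hj0 : (0 : ℝ) < j := by exact_mod_cast hj1
  rw [Real.norm_eq_abs, abs_of_pos (Real.exp_pos _), Log2, if_neg (not_lt.2 hj), Real.log_pow,
    ← Real.mul_rpow hlog2.le hj0.le, Real.rpow_def_of_pos (by positivity), mul_comm (-c),
    mul_comm (j : ℝ)]

theorem two_pow_log_mul_Log2_le {n : ℕ} (hn : n ≠ 0) :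
    (2 : ℝ) ^ Nat.log 2 n * Log2 (2 ^ Nat.log 2 n) ≤ n * Log2 n := by
  have h : (2 : ℝ) ^ Nat.log 2 n ≤ n := by exact_mod_cast Nat.pow_log_le_self 2 hn
  exact mul_le_mul h (monotone_Log2 h) (Log2_pos _).le n.cast_nonneg

end Log2

section IteratedLogarithm

variable {E : Type*} [MeasurableSpace E]

/-- The event that, over the dyadic block of times `n ≤ 2 ^ (j + 1)`, the centered sums exceed
`b` times the iterated-logarithm scale of the block. -/
def dyadicExceedance (𝔭 : Measure E) (f : E → ℝ) (j : ℕ) (b : ℝ) : Set (ℕ → E) :=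
  {ω | ∃ n ≤ 2 ^ (j + 1), b * √(2 ^ j * Log2 (2 ^ j)) ≤ |centeredSum 𝔭 f n ω|}

variable {𝔭 : Measure E} {f : E → ℝ} {A : Set E}

theorem mem_dyadicExceedance {n : ℕ} (hn : n ≠ 0) {b : ℝ} (hb : 0 ≤ b) {ω : ℕ → E}
    (h : b * √(n * Log2 n) ≤ |centeredSum 𝔭 f n ω|) :
    ω ∈ dyadicExceedance 𝔭 f (Nat.log 2 n) b := by
  refine ⟨n, (Nat.lt_pow_succ_log_self one_lt_two n).le, le_trans ?_ h⟩
  gcongr b * √?_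
  exact two_pow_log_mul_Log2_le hn

theorem measurableSet_dyadicExceedance (hf : Measurable f) (j : ℕ) (b : ℝ) :
    MeasurableSet (dyadicExceedance 𝔭 f j b) := by
  have h : dyadicExceedance 𝔭 f j b = ⋃ n ∈ Iic (2 ^ (j + 1)),
      {ω | b * √(2 ^ j * Log2 (2 ^ j)) ≤ |centeredSum 𝔭 f n ω|} := by
    ext
    simp [dyadicExceedance]
  rw [h]
  exact .biUnion (to_countable _) fun n _ ↦
    measurableSet_le measurable_const (measurable_centeredSum 𝔭 hf n).abs

variable [IsProbabilityMeasure 𝔭]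

/- The exponential maximal inequality at `t = √(Log2 (2 ^ j)) / (a √(2 ^ j))`. -/
theorem measure_dyadicExceedance_le (hf : Measurable f) (hA : MeasurableSet A)
    (hfA : ∀ x, |f x| ≤ A.indicator 1 x) {a : ℝ} (ha : 0 < a) (hAa : 𝔭.real A ≤ a ^ 2) {j : ℕ}
    (hj : Log2 (2 ^ j) ≤ a ^ 2 * 2 ^ j) (c : ℝ) :
    iidLaw 𝔭 (dyadicExceedance 𝔭 f j (c * a)) ≤
      2 * ENNReal.ofReal (Real.exp (-(c - 3 / 2) * Log2 (2 ^ j))) := by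
  have hL := Log2_pos (2 ^ j)
  set L := Log2 (2 ^ j)
  have hsq : √((2 : ℝ) ^ j) ^ 2 = 2 ^ j := Real.sq_sqrt (by positivity)
  have ht1 : √L / (a * √(2 ^ j)) ≤ 1 := by
    rw [div_le_one (by positivity), Real.sqrt_le_left (by positivity), mul_pow, hsq]
    exact hj
  refine (measure_exists_le_abs_centeredSum_le hf hA hfA (by positivity) ht1 _ _).trans ?_
  have hvar : 3 / 4 * ((2 ^ (j + 1) : ℕ) : ℝ) * 𝔭.real A * (√L / (a * √(2 ^ j))) ^ 2 ≤
      3 / 2 * L := by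
    calc _ = 3 / 2 * L * (𝔭.real A / a ^ 2) := by
          rw [div_pow, mul_pow, hsq, Real.sq_sqrt hL.le]
          push_cast
          field_simp
          ring
      _ ≤ 3 / 2 * L * 1 := by
          gcongr
          exact (div_le_one (by positivity)).2 hAa
      _ = _ := mul_one _
  have hdev : √L / (a * √(2 ^ j)) * (c * a * √(2 ^ j * L)) = c * L := by
    rw [Real.sqrt_mul (by positivity)]
    field_simp
    rw [Real.sq_sqrt hL.le, mul_comm]
  gcongr
  rw [hdev]
  linarith

theorem ae_centeredSum_eq_zero (hA : MeasurableSet A) (hfA : ∀ x, |f x| ≤ A.indicator 1 x)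
    (h0 : 𝔭 A = 0) : ∀ᵐ ω ∂iidLaw 𝔭, ∀ n, centeredSum 𝔭 f n ω = 0 := by
  have hf0 : ∀ x ∉ A, f x = 0 := fun x hx ↦ by simpa [hx] using hfA x
  have hint : ∫ x, f x ∂𝔭 = 0 :=
    integral_eq_zero_of_ae ((measure_eq_zero_iff_ae_notMem.1 h0).mono hf0)
  have hcoord (i : ℕ) : ∀ᵐ ω ∂iidLaw 𝔭, ω i ∉ A := by
    have h : iidLaw 𝔭 ((fun ω ↦ ω i) ⁻¹' A) = 0 := by
      rwa [← Measure.map_apply (measurable_pi_apply i) hA, Measure.infinitePi_map_eval]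
    exact measure_eq_zero_iff_ae_notMem.1 h
  filter_upwards [ae_all_iff.2 hcoord] with ω hω n
  exact Finset.sum_eq_zero fun i _ ↦ by rw [hint, hf0 _ (hω i), sub_zero]

theorem ae_eventually_abs_centeredSum_le (hf : Measurable f) (hA : MeasurableSet A)
    (hfA : ∀ x, |f x| ≤ A.indicator 1 x) :
    ∀ᵐ ω ∂iidLaw 𝔭, ∀ᶠ n : ℕ in atTop,
      |centeredSum 𝔭 f n ω| ≤ 2 * √2 * √(𝔭.real A) * √(n * Log2 n) := by
  rcases eq_or_ne (𝔭 A) 0 with h0 | h0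
  · filter_upwards [ae_centeredSum_eq_zero hA hfA h0] with ω hω
    refine .of_forall fun n ↦ ?_
    rw [hω n, abs_zero]
    positivity
  have hq : 0 < 𝔭.real A := ENNReal.toReal_pos h0 (measure_ne_top _ _)
  have hsq : √(𝔭.real A) ^ 2 = 𝔭.real A := Real.sq_sqrt hq.le
  have hc : 1 < 2 * √2 - 3 / 2 := by
    have : (1.4 : ℝ) ≤ √2 := Real.le_sqrt_of_sq_le (by norm_num)
    linarith
  obtain ⟨J, hJ⟩ := eventually_atTop.1 (eventually_Log2_two_pow_le hq)
  set ev : ℕ → Set (ℕ → E) := fun j ↦ dyadicExceedance 𝔭 f j (2 * √2 * √(𝔭.real A))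
  have hev (j : ℕ) : iidLaw 𝔭 (ev (j + J)) ≤
      2 * ENNReal.ofReal (Real.exp (-(2 * √2 - 3 / 2) * Log2 (2 ^ (j + J)))) :=
    measure_dyadicExceedance_le hf hA hfA (Real.sqrt_pos.2 hq) hsq.ge
      (hsq.symm ▸ hJ _ (Nat.le_add_left J j)) _
  have hsum : ∑' j, iidLaw 𝔭 (ev (j + J)) ≠ ⊤ := by
    refine ne_top_of_le_ne_top ?_ (ENNReal.tsum_le_tsum hev)
    rw [ENNReal.tsum_mul_left]
    exact ENNReal.mul_ne_top ENNReal.ofNat_ne_top ((summable_nat_add_iff J).2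
      (summable_exp_neg_mul_Log2_two_pow hc)).tsum_ofReal_ne_top
  filter_upwards [ae_eventually_notMem hsum] with ω hω
  obtain ⟨j₀, hj₀⟩ := eventually_atTop.1 hω
  filter_upwards [eventually_ge_atTop (2 ^ (j₀ + J))] with n hn
  have hlog : j₀ + J ≤ Nat.log 2 n := Nat.le_log_of_pow_le one_lt_two hn
  by_contra! hlt
  refine hj₀ (Nat.log 2 n - J) (by omega) ?_
  rw [Nat.sub_add_cancel (by omega)]
  exact mem_dyadicExceedance (Nat.two_pow_pos (j₀ + J) |>.trans_le hn).ne' (by positivity) hlt.le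

end IteratedLogarithm

section Log2

theorem exists_Log2_le_mul {κ : ℝ} (hκ : 1 < κ) :
    ∃ K : ℝ, 1 ≤ K ∧ ∀ ε, 0 < ε → ε ≤ 1 → ∀ x, K * ε ^ (-κ) ≤ x → Log2 x ≤ ε * x := by
  have hκ0 : 0 < κ := by linarith
  have hκinv : 0 < κ⁻¹ := inv_pos.2 hκ0
  have hτ : 0 < 1 - κ⁻¹ := sub_pos.2 (inv_lt_one_of_one_lt₀ hκ)
  set C := 1 + 1 / (1 - κ⁻¹)
  have hC : 1 ≤ C := le_add_of_nonneg_right (by positivity)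
  refine ⟨C ^ κ, Real.one_le_rpow hC hκ0.le, fun ε hε hε1 x hx ↦ ?_⟩
  have hx1 : 1 ≤ x := le_trans (one_le_mul_of_one_le_of_one_le (Real.one_le_rpow hC hκ0.le)
    (Real.one_le_rpow_of_pos_of_le_one_of_nonpos hε hε1 (by linarith))) hx
  have hx0 : 0 < x := by linarith
  have hroot : C ≤ ε * x ^ κ⁻¹ := by
    calc C = ε * (C ^ κ * ε ^ (-κ)) ^ κ⁻¹ := by
          rw [Real.mul_rpow (by positivity) (by positivity), Real.rpow_rpow_inv (by positivity)
            hκ0.ne', ← Real.rpow_mul hε.le, neg_mul, mul_inv_cancel₀ hκ0.ne', Real.rpow_neg_one]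
          field_simp
      _ ≤ ε * x ^ κ⁻¹ := by gcongr
  calc Log2 x ≤ C * x ^ (1 - κ⁻¹) := Log2_le_rpow hτ hx1
    _ ≤ ε * x ^ κ⁻¹ * x ^ (1 - κ⁻¹) := by gcongr
    _ = ε * x := by rw [mul_assoc, ← Real.rpow_add hx0, add_sub_cancel, Real.rpow_one]

theorem exists_dyadic_threshold {s : ℝ} (hs0 : 0 < s) (hs1 : s < 1 / 2) :
    ∃ C : ℝ, 0 ≤ C ∧ ∀ q, 0 < q → q ≤ 1 → ∃ J : ℕ,
      (∀ j ≥ J, Log2 (2 ^ j) ≤ (q ^ s) ^ 2 * 2 ^ j) ∧ q * √(2 ^ J) ≤ C * q ^ s := by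
  obtain ⟨K, hK1, hK⟩ := exists_Log2_le_mul (κ := (1 - s) / s) (by rw [one_lt_div hs0]; linarith)
  refine ⟨√(2 * K), by positivity, fun q hq0 hq1 ↦ ?_⟩
  have hqs : q ^ (2 * s) = (q ^ s) ^ 2 := by rw [mul_comm, Real.rpow_mul hq0.le, Real.rpow_two]
  have hqκ : ((q ^ s) ^ 2) ^ (-((1 - s) / s)) = (q ^ (-(1 - s))) ^ 2 := by
    rw [← hqs, ← Real.rpow_mul hq0.le, ← Real.rpow_mul_natCast hq0.le]
    congr 1
    push_cast
    field_simp
  have hone : 1 ≤ K * (q ^ (-(1 - s))) ^ 2 := one_le_mul_of_one_le_of_one_le hK1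
    (one_le_pow₀ (Real.one_le_rpow_of_pos_of_le_one_of_nonpos hq0 hq1 (by linarith)))
  obtain ⟨n, hn1, hn2⟩ := exists_nat_pow_near hone one_lt_two
  refine ⟨n + 1, fun j hj ↦ hK _ (by positivity)
    (pow_le_one₀ (by positivity) (Real.rpow_le_one hq0.le hq1 hs0.le)) _ ?_, ?_⟩
  · rw [hqκ]
    exact hn2.le.trans (pow_le_pow_right₀ one_le_two hj)
  · calc q * √(2 ^ (n + 1)) ≤ q * √(2 * K * (q ^ (-(1 - s))) ^ 2) := by
          gcongr
          rw [pow_succ]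
          linarith
      _ = √(2 * K) * (q ^ (1 : ℝ) * q ^ (-(1 - s))) := by
          rw [Real.sqrt_mul (by positivity), Real.sqrt_sq (by positivity), Real.rpow_one]
          ring
      _ = √(2 * K) * q ^ s := by
          rw [← Real.rpow_add hq0]
          congr 2
          ring

end Log2

theorem sum_inv_sqrt_le (N : ℕ) : ∑ i ∈ Finset.range N, (√(i + 1 : ℝ))⁻¹ ≤ 2 * √N := by
  induction N with
  | zero => simp
  | succ N ih =>
    rw [Finset.sum_range_succ]
    push_cast
    have hN : √(N : ℝ) ^ 2 = N := Real.sq_sqrt N.cast_nonneg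
    have hN1 : √(N + 1 : ℝ) ^ 2 = N + 1 := Real.sq_sqrt (by positivity)
    have hpos : 0 < √(N + 1 : ℝ) := Real.sqrt_pos.2 (by positivity)
    have hinc : (√(N + 1 : ℝ))⁻¹ ≤ 2 * √(N + 1 : ℝ) - 2 * √N := by
      rw [inv_le_iff_one_le_mul₀ hpos]
      nlinarith [sq_nonneg (√(N + 1 : ℝ) - √N)]
    linarith

theorem ofReal_le_add_tsum_indicator {Ω : Type*} {S : ℕ → Set Ω} {ω : Ω} {c v : ℝ} (hc : 0 ≤ c)
    (hS : ∀ i : ℕ, c + i ≤ v → ω ∈ S i) :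
    ENNReal.ofReal v ≤ ENNReal.ofReal c + ∑' i, (S i).indicator 1 ω := by
  rcases lt_or_ge v c with hvc | hcv
  · exact (ENNReal.ofReal_le_ofReal hvc.le).trans le_self_add
  set N := ⌊v - c⌋₊
  have hmem : ∀ i ∈ Finset.range (N + 1), (S i).indicator (1 : Ω → ℝ≥0∞) ω = 1 := by
    intro i hi
    refine indicator_of_mem (hS i ?_) 1
    have := (Nat.le_floor_iff (sub_nonneg.2 hcv)).1 (Finset.mem_range_succ_iff.1 hi)
    linarith
  calc ENNReal.ofReal v ≤ ENNReal.ofReal (c + (N + 1 : ℕ)) := by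
        refine ENNReal.ofReal_le_ofReal ?_
        push_cast
        linarith [Nat.lt_floor_add_one (v - c)]
    _ = ENNReal.ofReal c + ∑ i ∈ Finset.range (N + 1), (S i).indicator 1 ω := by
        rw [Finset.sum_congr rfl hmem, ENNReal.ofReal_add hc (Nat.cast_nonneg _),
          ENNReal.ofReal_natCast]
        simp
    _ ≤ _ := by
        gcongr
        exact ENNReal.sum_le_tsum _

section Domination

variable {E : Type*} [MeasurableSpace E]

/-- The supremum over `n` of the centered sums normalized by `√(n log log n)`, which dominates the
deviations of the empirical means from `∫ f d𝔭` on the iterated-logarithm scale. -/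
def supDeviation (𝔭 : Measure E) (f : E → ℝ) (ω : ℕ → E) : ℝ≥0∞ :=
  ⨆ n : ℕ, ENNReal.ofReal (|centeredSum 𝔭 f n ω| / √(n * Log2 n))

variable {𝔭 : Measure E} {f : E → ℝ} {A : Set E}

theorem measurable_supDeviation (hf : Measurable f) : Measurable (supDeviation 𝔭 f) :=
  .iSup fun n ↦ ((measurable_centeredSum 𝔭 hf n).abs.div_const _).ennreal_ofReal

theorem ofReal_abs_centeredSum_div_le_sum {n N : ℕ} (hn : n ≤ N) (ω : ℕ → E) :
    ENNReal.ofReal (|centeredSum 𝔭 f n ω| / √(n * Log2 n)) ≤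
      ∑ i ∈ Finset.range N, ‖f (ω i) - 𝔭[f]‖ₑ * ENNReal.ofReal (√(i + 1 : ℝ))⁻¹ := by
  simp_rw [Real.enorm_eq_ofReal_abs, ← ENNReal.ofReal_mul (abs_nonneg _)]
  rw [← ENNReal.ofReal_sum_of_nonneg fun i _ ↦ by positivity]
  refine ENNReal.ofReal_le_ofReal ?_
  rcases Nat.eq_zero_or_pos n with rfl | hn0
  · simpa using Finset.sum_nonneg fun i _ ↦ by positivity
  have hnR : (0 : ℝ) < n := by exact_mod_cast hn0
  calc |centeredSum 𝔭 f n ω| / √(n * Log2 n)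
      ≤ (∑ i ∈ Finset.range n, |f (ω i) - 𝔭[f]|) / √n := by
        gcongr
        · exact Finset.abs_sum_le_sum_abs _ _
        · exact le_mul_of_one_le_right hnR.le (one_le_Log2 _)
    _ ≤ ∑ i ∈ Finset.range n, |f (ω i) - 𝔭[f]| * (√(i + 1 : ℝ))⁻¹ := by
        rw [div_eq_mul_inv, Finset.sum_mul]
        refine Finset.sum_le_sum fun i hi ↦ ?_
        gcongr
        exact_mod_cast Finset.mem_range.1 hi
    _ ≤ ∑ i ∈ Finset.range N, |f (ω i) - 𝔭[f]| * (√(i + 1 : ℝ))⁻¹ :=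
        Finset.sum_le_sum_of_subset_of_nonneg (Finset.range_subset_range.2 hn)
          fun i _ _ ↦ by positivity

theorem supDeviation_le {a : ℝ} (ha : 0 < a) (J : ℕ) (ω : ℕ → E) :
    supDeviation 𝔭 f ω ≤
      ∑ i ∈ Finset.range (2 ^ J), ‖f (ω i) - 𝔭[f]‖ₑ * ENNReal.ofReal (√(i + 1 : ℝ))⁻¹ +
      ENNReal.ofReal a * (ENNReal.ofReal (7 / 2) + ∑' i : ℕ,
        (⋃ j ∈ Ici J, dyadicExceedance 𝔭 f j ((7 / 2 + i) * a)).indicator 1 ω) := by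
  refine iSup_le fun n ↦ ?_
  rcases le_or_gt n (2 ^ J) with hn | hn
  · exact (ofReal_abs_centeredSum_div_le_sum hn ω).trans le_self_add
  refine le_trans ?_ le_add_self
  have hn0 : n ≠ 0 := (Nat.zero_lt_of_lt hn).ne'
  have hscale : 0 < √(n * Log2 n) := Real.sqrt_pos.2 (mul_pos (by positivity) (Log2_pos n))
  calc ENNReal.ofReal (|centeredSum 𝔭 f n ω| / √(n * Log2 n))
      = ENNReal.ofReal a * ENNReal.ofReal (|centeredSum 𝔭 f n ω| / √(n * Log2 n) / a) := by
        rw [← ENNReal.ofReal_mul ha.le, mul_div_cancel₀ _ ha.ne']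
    _ ≤ _ := by
        gcongr
        refine ofReal_le_add_tsum_indicator (by norm_num) fun i hi ↦ ?_
        refine mem_iUnion₂.2 ⟨Nat.log 2 n, Nat.le_log_of_pow_le one_lt_two hn.le, ?_⟩
        refine mem_dyadicExceedance hn0 (by positivity) ?_
        rwa [le_div_iff₀ ha, le_div_iff₀ hscale] at hi

variable [IsProbabilityMeasure 𝔭]

theorem lintegral_enorm_sub_integral_le (hA : MeasurableSet A)
    (hfA : ∀ x, |f x| ≤ A.indicator 1 x) : ∫⁻ x, ‖f x - 𝔭[f]‖ₑ ∂𝔭 ≤ 2 * 𝔭 A := by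
  have hfint : ∫⁻ x, ‖f x‖ₑ ∂𝔭 ≤ 𝔭 A := by
    rw [← lintegral_indicator_one hA]
    refine lintegral_mono fun x ↦ ?_
    have h := ENNReal.ofReal_le_ofReal (hfA x)
    by_cases hx : x ∈ A <;> simpa [hx, Real.enorm_eq_ofReal_abs] using h
  calc ∫⁻ x, ‖f x - 𝔭[f]‖ₑ ∂𝔭 ≤ ∫⁻ x, (‖f x‖ₑ + ‖𝔭[f]‖ₑ) ∂𝔭 :=
        lintegral_mono fun x ↦ enorm_sub_le
    _ = ∫⁻ x, ‖f x‖ₑ ∂𝔭 + ‖𝔭[f]‖ₑ := by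
        rw [lintegral_add_right _ measurable_const, lintegral_const, measure_univ, mul_one]
    _ ≤ 𝔭 A + 𝔭 A := add_le_add hfint ((enorm_integral_le_lintegral_enorm f).trans hfint)
    _ = _ := (two_mul _).symm

theorem lintegral_sum_enorm_sub_integral_le (hf : Measurable f) (hA : MeasurableSet A)
    (hfA : ∀ x, |f x| ≤ A.indicator 1 x) (N : ℕ) :
    ∫⁻ ω, ∑ i ∈ Finset.range N, ‖f (ω i) - 𝔭[f]‖ₑ * ENNReal.ofReal (√(i + 1 : ℝ))⁻¹ ∂iidLaw 𝔭 ≤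
      4 * ENNReal.ofReal (𝔭.real A * √N) := by
  have hcoord (i : ℕ) : ∫⁻ ω, ‖f (ω i) - 𝔭[f]‖ₑ ∂iidLaw 𝔭 ≤ 2 * 𝔭 A := by
    rw [← lintegral_map (μ := iidLaw 𝔭) (f := fun x ↦ ‖f x - 𝔭[f]‖ₑ) (g := fun ω ↦ ω i)
      (by fun_prop) (measurable_pi_apply i), Measure.infinitePi_map_eval]
    exact lintegral_enorm_sub_integral_le hA hfA
  rw [lintegral_finsetSum _ fun i _ ↦ by fun_prop]
  calc _ ≤ ∑ i ∈ Finset.range N, 2 * 𝔭 A * ENNReal.ofReal (√(i + 1 : ℝ))⁻¹ := by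
        refine Finset.sum_le_sum fun i _ ↦ ?_
        rw [lintegral_mul_const _ (by fun_prop)]
        gcongr
        exact hcoord i
    _ = 2 * 𝔭 A * ENNReal.ofReal (∑ i ∈ Finset.range N, (√(i + 1 : ℝ))⁻¹) := by
        rw [← Finset.mul_sum, ENNReal.ofReal_sum_of_nonneg fun i _ ↦ by positivity]
    _ ≤ 2 * 𝔭 A * ENNReal.ofReal (2 * √N) := by
        gcongr
        exact sum_inv_sqrt_le N
    _ = 4 * ENNReal.ofReal (𝔭.real A * √N) := by
        rw [ENNReal.ofReal_mul zero_le_two, ENNReal.ofReal_mul measureReal_nonneg,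
          ofReal_measureReal, ENNReal.ofReal_ofNat]
        ring

theorem measure_iUnion_dyadicExceedance_le (hf : Measurable f) (hA : MeasurableSet A)
    (hfA : ∀ x, |f x| ≤ A.indicator 1 x) {a : ℝ} (ha : 0 < a) (hAa : 𝔭.real A ≤ a ^ 2) {J : ℕ}
    (hJ : ∀ j ≥ J, Log2 (2 ^ j) ≤ a ^ 2 * 2 ^ j) (i : ℕ) :
    iidLaw 𝔭 (⋃ j ∈ Ici J, dyadicExceedance 𝔭 f j ((7 / 2 + i) * a)) ≤
      ENNReal.ofReal (Real.exp (-i)) *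
        (2 * ∑' j : ℕ, ENNReal.ofReal (Real.exp (-2 * Log2 (2 ^ j)))) := by
  refine (measure_iUnion_le _).trans ?_
  rw [← ENNReal.tsum_mul_left, ← ENNReal.tsum_mul_left]
  refine ENNReal.tsum_le_tsum fun j ↦ ?_
  by_cases hj : j ∈ Ici J
  swap
  · simp [hj]
  simp only [hj, iUnion_true]
  refine (measure_dyadicExceedance_le hf hA hfA ha hAa (hJ j hj) _).trans ?_
  rw [mul_left_comm, ← ENNReal.ofReal_mul (Real.exp_pos _).le, ← Real.exp_add]
  gcongr
  nlinarith [one_le_Log2 (2 ^ j), i.cast_nonneg (α := ℝ)]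

theorem lintegral_supDeviation_le (hf : Measurable f) (hA : MeasurableSet A)
    (hfA : ∀ x, |f x| ≤ A.indicator 1 x) {a : ℝ} (ha : 0 < a) (hAa : 𝔭.real A ≤ a ^ 2) {J : ℕ}
    (hJ : ∀ j ≥ J, Log2 (2 ^ j) ≤ a ^ 2 * 2 ^ j) :
    ∫⁻ ω, supDeviation 𝔭 f ω ∂iidLaw 𝔭 ≤
      4 * ENNReal.ofReal (𝔭.real A * √(2 ^ J)) +
      ENNReal.ofReal a * (ENNReal.ofReal (7 / 2) + ∑' i : ℕ, ENNReal.ofReal (Real.exp (-i)) *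
        (2 * ∑' j : ℕ, ENNReal.ofReal (Real.exp (-2 * Log2 (2 ^ j))))) := by
  set ev : ℕ → Set (ℕ → E) := fun i ↦ ⋃ j ∈ Ici J, dyadicExceedance 𝔭 f j ((7 / 2 + i) * a)
  have hev (i : ℕ) : MeasurableSet (ev i) :=
    .biUnion (to_countable _) fun j _ ↦ measurableSet_dyadicExceedance hf j _
  have hind (i : ℕ) : Measurable ((ev i).indicator (1 : (ℕ → E) → ℝ≥0∞)) :=
    measurable_one.indicator (hev i)
  have hcount : Measurable fun ω ↦ ∑' i, (ev i).indicator (1 : (ℕ → E) → ℝ≥0∞) ω := .tsum hind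
  refine (lintegral_mono fun ω ↦ supDeviation_le ha J ω).trans ?_
  rw [lintegral_add_right _ ((hcount.const_add _).const_mul _),
    lintegral_const_mul _ (hcount.const_add _), lintegral_add_right _ hcount, lintegral_const,
    measure_univ, mul_one, lintegral_tsum fun i ↦ (hind i).aemeasurable]
  simp_rw [lintegral_indicator_one (hev _)]
  gcongr with i
  · simpa using lintegral_sum_enorm_sub_integral_le (𝔭 := 𝔭) hf hA hfA (2 ^ J)
  · exact measure_iUnion_dyadicExceedance_le hf hA hfA ha hAa hJ i

variable (E) in
theorem exists_lintegral_supDeviation_le {s : ℝ} (hs0 : 0 < s) (hs1 : s < 1 / 2) :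
    ∃ C : ℝ≥0∞, C ≠ ⊤ ∧ ∀ (𝔭 : Measure E) [IsProbabilityMeasure 𝔭] {f : E → ℝ} {A : Set E},
      Measurable f → MeasurableSet A → (∀ x, |f x| ≤ A.indicator 1 x) →
        ∫⁻ ω, supDeviation 𝔭 f ω ∂iidLaw 𝔭 ≤ C * 𝔭 A ^ s := by
  obtain ⟨C, hC0, hC⟩ := exists_dyadic_threshold hs0 hs1
  set T : ℝ≥0∞ := ENNReal.ofReal (7 / 2) + ∑' i : ℕ, ENNReal.ofReal (Real.exp (-i)) *
    (2 * ∑' j : ℕ, ENNReal.ofReal (Real.exp (-2 * Log2 (2 ^ j))))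
  have hT : T ≠ ⊤ := by
    refine ENNReal.add_ne_top.2 ⟨ENNReal.ofReal_ne_top, ?_⟩
    rw [ENNReal.tsum_mul_right]
    exact ENNReal.mul_ne_top Real.summable_exp_neg_nat.tsum_ofReal_ne_top (ENNReal.mul_ne_top
      ENNReal.ofNat_ne_top (summable_exp_neg_mul_Log2_two_pow one_lt_two).tsum_ofReal_ne_top)
  refine ⟨4 * ENNReal.ofReal C + T, ENNReal.add_ne_top.2
    ⟨ENNReal.mul_ne_top ENNReal.ofNat_ne_top ENNReal.ofReal_ne_top, hT⟩, ?_⟩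
  intro 𝔭 _ f A hf hA hfA
  rcases eq_or_ne (𝔭 A) 0 with h0 | h0
  · rw [lintegral_congr_ae (g := 0)]
    · simp
    · filter_upwards [ae_centeredSum_eq_zero hA hfA h0] with ω hω
      simp [supDeviation, hω]
  have hq : 0 < 𝔭.real A := ENNReal.toReal_pos h0 (measure_ne_top _ _)
  have hqs : 𝔭.real A ≤ (𝔭.real A ^ s) ^ 2 := by
    rw [← Real.rpow_mul_natCast hq.le]
    refine (Real.rpow_one _).symm.trans_le
      (Real.rpow_le_rpow_of_exponent_ge hq measureReal_le_one ?_)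
    push_cast
    linarith
  obtain ⟨J, hJ, hJs⟩ := hC _ hq measureReal_le_one
  calc _ ≤ 4 * ENNReal.ofReal (C * 𝔭.real A ^ s) + ENNReal.ofReal (𝔭.real A ^ s) * T := by
        refine (lintegral_supDeviation_le hf hA hfA (Real.rpow_pos_of_pos hq s) hqs hJ).trans ?_
        gcongr
    _ = _ := by
        rw [ENNReal.ofReal_mul hC0, ← ENNReal.ofReal_rpow_of_nonneg hq.le hs0.le,
          ofReal_measureReal]
        ring

end Domination

section SignedSums

variable {E ι : Type*} {s : Finset ι} {B : ι → Set E} {A : Set E}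

theorem abs_sum_mul_indicator_le {c : ι → ℝ} (hc : ∀ i, |c i| ≤ 1)
    (hdisj : (s : Set ι).PairwiseDisjoint B) (hBA : ∀ i ∈ s, B i ⊆ A) (x : E) :
    |∑ i ∈ s, c i * (B i).indicator 1 x| ≤ A.indicator 1 x := by
  calc |∑ i ∈ s, c i * (B i).indicator 1 x|
      ≤ ∑ i ∈ s, (B i).indicator 1 x := by
        refine (Finset.abs_sum_le_sum_abs _ _).trans (Finset.sum_le_sum fun i _ ↦ ?_)
        have hB : (0 : ℝ) ≤ (B i).indicator 1 x := indicator_nonneg (fun _ _ ↦ zero_le_one) x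
        rw [abs_mul, abs_of_nonneg hB]
        exact mul_le_of_le_one_left hB (hc i)
    _ = (⋃ i ∈ s, B i).indicator 1 x :=
        (congrFun (Finset.indicator_biUnion s B (f := 1) hdisj) x).symm
    _ ≤ A.indicator 1 x :=
        indicator_le_indicator_of_subset (iUnion₂_subset hBA) (fun _ ↦ zero_le_one) x

open Classical in
theorem sum_abs_eq_sum_sign_mul (s : Finset ι) (a : ι → ℝ) :
    ∑ i ∈ s, |a i| = ∑ i ∈ s, (if i ∈ s.filter (0 ≤ a ·) then 1 else -1) * a i := by
  refine Finset.sum_congr rfl fun i hi ↦ ?_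
  simp only [Finset.mem_filter, hi, true_and]
  split_ifs with h
  · rw [abs_of_nonneg h, one_mul]
  · rw [abs_of_neg (not_le.1 h), neg_one_mul]

variable [MeasurableSpace E] {𝔭 : Measure E} [IsProbabilityMeasure 𝔭]

theorem centeredSum_sum_mul_indicator (hB : ∀ i ∈ s, MeasurableSet (B i)) (c : ι → ℝ) (n : ℕ)
    (ω : ℕ → E) : centeredSum 𝔭 (fun x ↦ ∑ i ∈ s, c i * (B i).indicator 1 x) n ω =
      ∑ i ∈ s, c i * centeredSum 𝔭 ((B i).indicator 1) n ω := by
  simp only [centeredSum]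
  have hint : ∀ i ∈ s, Integrable (fun x ↦ c i * (B i).indicator (1 : E → ℝ) x) 𝔭 := fun i hi ↦
    ((integrable_const (1 : ℝ)).indicator (hB i hi)).const_mul (c i)
  rw [integral_finsetSum _ hint]
  simp_rw [Finset.mul_sum]
  rw [Finset.sum_comm]
  refine Finset.sum_congr rfl fun j _ ↦ ?_
  rw [← Finset.sum_sub_distrib]
  exact Finset.sum_congr rfl fun i _ ↦ by rw [integral_const_mul, mul_sub]

/- Applying the law of the iterated logarithm to each of the finitely many signed combinations of
the indicators, instead of to each indicator, avoids a loss of a power of `s.card`. -/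
theorem ae_eventually_sum_abs_centeredSum_le (hB : ∀ i ∈ s, MeasurableSet (B i))
    (hdisj : (s : Set ι).PairwiseDisjoint B) (hA : MeasurableSet A) (hBA : ∀ i ∈ s, B i ⊆ A) :
    ∀ᵐ ω ∂iidLaw 𝔭, ∀ᶠ n : ℕ in atTop, ∑ i ∈ s, |centeredSum 𝔭 ((B i).indicator 1) n ω| ≤
      2 * √2 * √(𝔭.real A) * √(n * Log2 n) := by
  classical
  let c (T : Finset ι) (i : ι) : ℝ := if i ∈ T then 1 else -1
  have hc : ∀ T i, |c T i| ≤ 1 := fun T i ↦ by simp only [c]; split_ifs <;> simp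
  have hsigned : ∀ T ∈ s.powerset, ∀ᵐ ω ∂iidLaw 𝔭, ∀ᶠ n : ℕ in atTop,
      |∑ i ∈ s, c T i * centeredSum 𝔭 ((B i).indicator 1) n ω| ≤
        2 * √2 * √(𝔭.real A) * √(n * Log2 n) := fun T _ ↦ by
    simp_rw [← centeredSum_sum_mul_indicator hB]
    exact ae_eventually_abs_centeredSum_le
      (Finset.measurable_sum _ fun i hi ↦ (measurable_one.indicator (hB i hi)).const_mul _) hA
      (abs_sum_mul_indicator_le (hc T) hdisj hBA)
  filter_upwards [(eventually_all_finset _).2 hsigned] with ω hω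
  filter_upwards [(eventually_all_finset _).2 hω] with n hn
  rw [sum_abs_eq_sum_sign_mul]
  exact (le_abs_self _).trans (hn _ (Finset.mem_powerset.2 (Finset.filter_subset _ s)))

end SignedSums

section Empirical

variable {d : ℕ}

theorem empOf_apply (n : ℕ) (v : Fin n → Fin d → ℝ) {B : Set (Fin d → ℝ)}
    (hB : MeasurableSet B) : empOf n v B = (n : ℝ≥0∞)⁻¹ * ∑ i, B.indicator 1 (v i) := by
  simp [empOf, Measure.dirac_apply' _ hB]

instance isFiniteMeasure_empOf (n : ℕ) (v : Fin n → Fin d → ℝ) : IsFiniteMeasure (empOf n v) := by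
  constructor
  rw [empOf_apply _ _ .univ]
  cases n with
  | zero => simp
  | succ n => exact ENNReal.mul_lt_top (by simp) (by simp)

theorem isProbabilityMeasure_empOf {n : ℕ} (hn : n ≠ 0) (v : Fin n → Fin d → ℝ) :
    IsProbabilityMeasure (empOf n v) := by
  constructor
  rw [empOf_apply _ _ .univ]
  simpa using ENNReal.inv_mul_cancel (Nat.cast_ne_zero.2 hn) (ENNReal.natCast_ne_top n)

theorem measurable_empOf (n : ℕ) : Measurable (empOf (d := d) n) := by
  refine Measure.measurable_of_measurable_coe _ fun B hB ↦ ?_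
  simp_rw [empOf_apply n _ hB]
  exact (Finset.measurable_sum _ fun i _ ↦
    (measurable_one.indicator hB).comp (measurable_pi_apply i)).const_mul _

theorem measureReal_empOf (n : ℕ) (v : Fin n → Fin d → ℝ) {B : Set (Fin d → ℝ)}
    (hB : MeasurableSet B) : (empOf n v).real B = (∑ i, B.indicator 1 (v i)) / n := by
  have hind : ∀ i, (B.indicator 1 (v i) : ℝ≥0∞).toReal = B.indicator 1 (v i) := fun i ↦ by
    by_cases h : v i ∈ B <;> simp [h]
  have hne : ∀ i ∈ Finset.univ, (B.indicator 1 (v i) : ℝ≥0∞) ≠ ⊤ := fun i _ ↦ by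
    by_cases h : v i ∈ B <;> simp [h]
  rw [measureReal_def, empOf_apply _ _ hB, ENNReal.toReal_mul, ENNReal.toReal_sum hne,
    ENNReal.toReal_inv, ENNReal.toReal_natCast, inv_mul_eq_div]
  simp_rw [hind]

variable (𝔭 : Measure (Fin d → ℝ))

theorem measureReal_empOf_sub {n : ℕ} (hn : n ≠ 0) (ω : ℕ → Fin d → ℝ) {B : Set (Fin d → ℝ)}
    (hB : MeasurableSet B) : (empOf n (initSeg n ω)).real B - 𝔭.real B =
      centeredSum 𝔭 (B.indicator 1) n ω / n := by
  rw [measureReal_empOf _ _ hB, centeredSum, Finset.sum_sub_distrib, integral_indicator_one hB,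
    Finset.sum_const, Finset.card_range, nsmul_eq_mul, sub_div,
    mul_div_cancel_left₀ _ (Nat.cast_ne_zero.2 hn), ← Fin.sum_univ_eq_sum_range
      (fun i ↦ B.indicator (1 : (Fin d → ℝ) → ℝ) (ω i))]
  rfl

/-- The rate `√(n / Log₂ n)` of the law of the iterated logarithm for empirical frequencies. -/
def lilRate (n : ℕ) : ℝ := √(n / Log2 n)

variable [IsProbabilityMeasure 𝔭]

theorem ofReal_lilRate_mul_massDiff_empOf (n : ℕ) (ω : ℕ → Fin d → ℝ) {B : Set (Fin d → ℝ)}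
    (hB : MeasurableSet B) : ENNReal.ofReal (lilRate n) * massDiff 𝔭 (empOf n (initSeg n ω)) B =
      ENNReal.ofReal (|centeredSum 𝔭 (B.indicator 1) n ω| / √(n * Log2 n)) := by
  rcases eq_or_ne n 0 with rfl | hn
  · simp [lilRate]
  have hn' : (0 : ℝ) < n := Nat.cast_pos.2 (Nat.pos_of_ne_zero hn)
  have hsqrt : √(n : ℝ) ≠ 0 := (Real.sqrt_pos.2 hn').ne'
  have hLog2 : √(Log2 n) ≠ 0 := (Real.sqrt_pos.2 (Log2_pos (n : ℝ))).ne'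
  rw [massDiff_eq_ofReal, measureReal_empOf_sub 𝔭 hn ω hB, lilRate,
    ← ENNReal.ofReal_mul (Real.sqrt_nonneg _), Real.sqrt_div hn'.le, Real.sqrt_mul hn'.le, abs_div,
    abs_of_pos hn']
  congr 1
  field_simp
  rw [Real.sq_sqrt hn'.le]
  ring

theorem ae_eventually_lilRate_mul_shellDiff_le (l k : ℕ) :
    ∀ᵐ ω ∂iidLaw 𝔭, ∀ᶠ n : ℕ in atTop,
      ENNReal.ofReal (lilRate n) * shellDiff l k 𝔭 (empOf n (initSeg n ω)) ≤
        ENNReal.ofReal (2 * √2 * √(𝔭.real (shell ⁻¹' {k}))) := by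
  filter_upwards [ae_eventually_sum_abs_centeredSum_le (𝔭 := 𝔭)
    (fun i _ ↦ measurableSet_cell l i) ((pairwise_disjoint_cell l).set_pairwise _)
    (measurableSet_shell k) fun i hi ↦ cell_subset_shell hi] with ω hω
  filter_upwards [hω, eventually_gt_atTop 0] with n hn hn0
  have hpos : 0 < √(n * Log2 n) :=
    Real.sqrt_pos.2 (mul_pos (Nat.cast_pos.2 hn0) (Log2_pos _))
  simp_rw [shellDiff, Finset.mul_sum, ofReal_lilRate_mul_massDiff_empOf 𝔭 n ω
    (measurableSet_cell l _)]
  rw [← ENNReal.ofReal_sum_of_nonneg fun i _ ↦ by positivity, ← Finset.sum_div]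
  exact ENNReal.ofReal_le_ofReal ((div_le_iff₀ hpos).2 hn)

end Empirical

section PowerSums

theorem tsum_ofReal_two_rpow_mul {a : ℝ} (ha : a < 0) :
    ∑' k : ℕ, ENNReal.ofReal (2 ^ (a * k)) = ENNReal.ofReal (1 / (1 - 2 ^ a)) := by
  have hlt : (2 : ℝ) ^ a < 1 := Real.rpow_lt_one_of_one_lt_of_neg one_lt_two ha
  simp_rw [Real.rpow_mul_natCast zero_le_two]
  rw [← ENNReal.ofReal_tsum_of_nonneg (fun k ↦ by positivity)
    (summable_geometric_of_lt_one (by positivity) hlt),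
    tsum_geometric_of_lt_one (by positivity) hlt, one_div]

theorem sum_rpow_le_card_rpow_mul {ι : Type*} (t : Finset ι) (a : ι → ℝ≥0∞) {s : ℝ} (hs0 : 0 < s)
    (hs1 : s ≤ 1) : ∑ i ∈ t, a i ^ s ≤ (t.card : ℝ≥0∞) ^ (1 - s) * (∑ i ∈ t, a i) ^ s := by
  have h := ENNReal.rpow_le_rpow (ENNReal.rpow_sum_le_const_mul_sum_rpow t (fun i ↦ a i ^ s)
    (p := s⁻¹) ((one_le_inv₀ hs0).2 hs1)) hs0.le
  simpa only [← ENNReal.rpow_mul, ENNReal.mul_rpow_of_nonneg _ _ hs0.le, sub_mul, one_mul,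
    mul_inv_cancel₀ hs0.ne', inv_mul_cancel₀ hs0.ne', ENNReal.rpow_one] using h

end PowerSums

section Moments

variable {d : ℕ} {p q s : ℝ} (𝔭 : Measure (Fin d → ℝ))

/-- The absolute moment of order `q`. -/
def absMoment (q : ℝ) : ℝ≥0∞ := ∫⁻ x, ENNReal.ofReal (eucNorm x ^ q) ∂𝔭

theorem measurable_absMoment (q : ℝ) :
    Measurable fun 𝔭 : Measure (Fin d → ℝ) ↦ absMoment 𝔭 q :=
  Measure.measurable_lintegral (measurable_eucNorm.pow_const _).ennreal_ofReal

theorem measure_shell_succ_le (hq : 0 ≤ q) (k : ℕ) :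
    𝔭 (shell ⁻¹' {k + 1}) ≤ ENNReal.ofReal (2 ^ (-(q * k))) * absMoment 𝔭 q := by
  have hmarkov : ENNReal.ofReal (2 ^ (q * k)) * 𝔭 (shell ⁻¹' {k + 1}) ≤ absMoment 𝔭 q := by
    refine le_trans (mul_le_mul_right (measure_mono fun x hx ↦ ?_) _)
      (mul_meas_ge_le_lintegral (measurable_eucNorm.pow_const q).ennreal_ofReal _)
    refine ENNReal.ofReal_le_ofReal ?_
    rw [mul_comm, Real.rpow_natCast_mul zero_le_two]
    exact Real.rpow_le_rpow (by positivity) (two_pow_lt_eucNorm hx).le hq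
  calc 𝔭 (shell ⁻¹' {k + 1}) = ENNReal.ofReal (2 ^ (-(q * k))) *
        (ENNReal.ofReal (2 ^ (q * k)) * 𝔭 (shell ⁻¹' {k + 1})) := by
        rw [← mul_assoc, ← ENNReal.ofReal_mul (by positivity), ← Real.rpow_add two_pos]
        simp
    _ ≤ _ := by gcongr

theorem tsum_shellWeight_mul_measure_rpow_le [IsProbabilityMeasure 𝔭] (hp : 0 ≤ p) (hs : 0 < s)
    (hpq : p < q * s) : ∑' k, ENNReal.ofReal (shellWeight p k) * 𝔭 (shell ⁻¹' {k}) ^ s ≤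
      1 + ENNReal.ofReal (2 ^ p / (1 - 2 ^ (p - q * s))) * absMoment 𝔭 q ^ s := by
  have hq : 0 ≤ q := (pos_of_mul_pos_left (hp.trans_lt hpq) hs.le).le
  have hzero : ENNReal.ofReal (shellWeight p 0) * 𝔭 (shell ⁻¹' {0}) ^ s ≤ 1 := by
    simpa [shellWeight] using ENNReal.rpow_le_one (prob_le_one (μ := 𝔭) (s := shell ⁻¹' {0})) hs.le
  have hsucc : ∀ k : ℕ, ENNReal.ofReal (shellWeight p (k + 1)) * 𝔭 (shell ⁻¹' {k + 1}) ^ s ≤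
      ENNReal.ofReal (2 ^ ((p - q * s) * k)) * (ENNReal.ofReal (2 ^ p) * absMoment 𝔭 q ^ s) := by
    intro k
    calc _ ≤ ENNReal.ofReal (shellWeight p (k + 1)) *
          (ENNReal.ofReal (2 ^ (-(q * k))) * absMoment 𝔭 q) ^ s := by
          gcongr
          exact measure_shell_succ_le 𝔭 hq k
      _ = _ := by
          rw [ENNReal.mul_rpow_of_nonneg _ _ hs.le,
            ENNReal.ofReal_rpow_of_nonneg (by positivity) hs.le, ← mul_assoc, ← mul_assoc,
            ← ENNReal.ofReal_mul (shellWeight_pos _ _).le, ← ENNReal.ofReal_mul (by positivity),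
            shellWeight, ← Real.rpow_mul zero_le_two, ← Real.rpow_add two_pos,
            ← Real.rpow_add two_pos]
          congr 3
          push_cast
          ring
  have hlt : (2 : ℝ) ^ (p - q * s) < 1 :=
    Real.rpow_lt_one_of_one_lt_of_neg one_lt_two (by linarith)
  rw [tsum_eq_zero_add' ENNReal.summable]
  refine add_le_add hzero ((ENNReal.tsum_le_tsum hsucc).trans_eq ?_)
  rw [ENNReal.tsum_mul_right, tsum_ofReal_two_rpow_mul (by linarith), ← mul_assoc,
    ← ENNReal.ofReal_mul (one_div_nonneg.2 (sub_nonneg.2 hlt.le)), one_div_mul_eq_div]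

theorem sum_measure_cell_rpow_le (l k : ℕ) (hs0 : 0 < s) (hs1 : s ≤ 1) :
    ∑ i ∈ shellCells d l k, 𝔭 (cell l i) ^ s ≤
      ENNReal.ofReal ((3 * 2 ^ l) ^ (d * (1 - s))) * 𝔭 (shell ⁻¹' {k}) ^ s := by
  have hcard : ((shellCells d l k).card : ℝ≥0∞) ≤ ENNReal.ofReal ((3 * 2 ^ l) ^ (d : ℝ)) := by
    rw [Real.rpow_natCast, ← ENNReal.ofReal_natCast]
    exact ENNReal.ofReal_le_ofReal (mod_cast card_shellCells_le d l k)
  refine (sum_rpow_le_card_rpow_mul _ _ hs0 hs1).trans ?_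
  rw [Real.rpow_mul (by positivity),
    ← ENNReal.ofReal_rpow_of_nonneg (by positivity) (sub_nonneg.2 hs1)]
  exact mul_le_mul' (ENNReal.rpow_le_rpow hcard (sub_nonneg.2 hs1))
    (ENNReal.rpow_le_rpow (sum_measure_cell_le l k 𝔭) hs0.le)

end Moments

section DominatingFunction

variable {d : ℕ} {p q s : ℝ}

/-- A bound, uniform in the sample size, for the contribution of the level `l` and of the shell `k`
to the normalized `dyadicBound`. -/
def dominatingTerm (p : ℝ) (𝔭 : Measure (Fin d → ℝ)) (l k : ℕ) (ω : ℕ → Fin d → ℝ) : ℝ≥0∞ :=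
  ENNReal.ofReal (levelCoef p d l * shellWeight p k) *
    ∑ i ∈ shellCells d l k, supDeviation 𝔭 ((cell l i).indicator 1) ω

theorem lilRate_mul_shellDiff_le_dominatingTerm (p : ℝ) (𝔭 : Measure (Fin d → ℝ))
    [IsProbabilityMeasure 𝔭] (l k n : ℕ) (ω : ℕ → Fin d → ℝ) :
    ENNReal.ofReal (levelCoef p d l * shellWeight p k) *
      (ENNReal.ofReal (lilRate n) * shellDiff l k 𝔭 (empOf n (initSeg n ω))) ≤
        dominatingTerm p 𝔭 l k ω := by
  rw [dominatingTerm, shellDiff, Finset.mul_sum (a := ENNReal.ofReal (lilRate n))]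
  simp_rw [ofReal_lilRate_mul_massDiff_empOf 𝔭 n ω (measurableSet_cell l _)]
  gcongr with i
  exact le_iSup (fun n : ℕ ↦
    ENNReal.ofReal (|centeredSum 𝔭 ((cell l i).indicator 1) n ω| / √(n * Log2 n))) n

theorem measurable_supDeviation_cell (𝔭 : Measure (Fin d → ℝ)) (l : ℕ) (i : CellLabel d) :
    Measurable (supDeviation 𝔭 ((cell l i).indicator 1)) :=
  measurable_supDeviation (measurable_one.indicator (measurableSet_cell l i))

theorem measurable_dominatingTerm (p : ℝ) (𝔭 : Measure (Fin d → ℝ)) (l k : ℕ) :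
    Measurable (dominatingTerm p 𝔭 l k) :=
  (Finset.measurable_sum _ fun i _ ↦ measurable_supDeviation_cell 𝔭 l i).const_mul _

variable (d) in
theorem exists_lintegral_dominatingTerm_le (hs0 : 0 < s) (hs1 : s < 1 / 2) :
    ∃ C : ℝ≥0∞, C ≠ ⊤ ∧ ∀ (p : ℝ) (𝔭 : Measure (Fin d → ℝ)) [IsProbabilityMeasure 𝔭] (l k : ℕ),
      ∫⁻ ω, dominatingTerm p 𝔭 l k ω ∂iidLaw 𝔭 ≤
        C * ENNReal.ofReal (levelCoef p d l * (3 * 2 ^ l) ^ (d * (1 - s))) *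
          (ENNReal.ofReal (shellWeight p k) * 𝔭 (shell ⁻¹' {k}) ^ s) := by
  obtain ⟨C, hC, hdom⟩ := exists_lintegral_supDeviation_le (Fin d → ℝ) hs0 hs1
  refine ⟨C, hC, fun p 𝔭 _ l k ↦ ?_⟩
  have hcell : ∀ i x, |(cell (d := d) l i).indicator (1 : (Fin d → ℝ) → ℝ) x| ≤
      (cell l i).indicator 1 x := fun i x ↦
    (abs_of_nonneg (indicator_nonneg (fun _ _ ↦ zero_le_one) x)).le
  simp_rw [dominatingTerm]
  rw [lintegral_const_mul _ (Finset.measurable_sum _ fun i _ ↦ measurable_supDeviation_cell 𝔭 l i),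
    lintegral_finsetSum _ fun i _ ↦ measurable_supDeviation_cell 𝔭 l i]
  calc _ ≤ ENNReal.ofReal (levelCoef p d l * shellWeight p k) *
        ∑ i ∈ shellCells d l k, C * 𝔭 (cell l i) ^ s := by
        gcongr with i
        exact hdom 𝔭 (measurable_one.indicator (measurableSet_cell l i)) (measurableSet_cell l i)
          (hcell i)
    _ ≤ ENNReal.ofReal (levelCoef p d l * shellWeight p k) *
        (C * (ENNReal.ofReal ((3 * 2 ^ l) ^ (d * (1 - s))) * 𝔭 (shell ⁻¹' {k}) ^ s)) := by
        rw [← Finset.mul_sum]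
        gcongr
        exact sum_measure_cell_rpow_le 𝔭 l k hs0 (by linarith)
    _ = _ := by
        simp_rw [ENNReal.ofReal_mul (levelCoef_nonneg p d l)]
        ring

theorem tsum_ofReal_levelCoef_mul_ne_top (h : d * (1 - s) < p) :
    ∑' l, ENNReal.ofReal (levelCoef p d l * (3 * 2 ^ l) ^ (d * (1 - s))) ≠ ⊤ := by
  have hsucc : ∀ l : ℕ, ENNReal.ofReal (levelCoef p d (l + 1) * (3 * 2 ^ (l + 1)) ^ (d * (1 - s))) =
      ENNReal.ofReal (2 ^ ((d * (1 - s) - p) * l)) *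
        ENNReal.ofReal (d ^ (p / 2) * 6 ^ (d * (1 - s))) := by
    intro l
    have hbase : (3 * 2 ^ (l + 1) : ℝ) = 6 * 2 ^ l := by ring
    have hexp : (d * (1 - s) - p) * l = -(p * l) + l * (d * (1 - s)) := by ring
    rw [← ENNReal.ofReal_mul (by positivity), hbase, Real.mul_rpow (by positivity) (by positivity),
      ← Real.rpow_natCast_mul zero_le_two, levelCoef, cellScale, hexp, Real.rpow_add two_pos]
    ring_nf
  rw [tsum_eq_zero_add' ENNReal.summable]
  simp_rw [hsucc]
  rw [ENNReal.tsum_mul_right, tsum_ofReal_two_rpow_mul (by linarith)]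
  exact ENNReal.add_ne_top.2 ⟨ENNReal.ofReal_ne_top,
    ENNReal.mul_ne_top ENNReal.ofReal_ne_top ENNReal.ofReal_ne_top⟩

variable (d) in
theorem exists_lintegral_tsum_dominatingTerm_le (hp : 0 ≤ p) (hs0 : 0 < s) (hs1 : s < 1 / 2)
    (hps : d * (1 - s) < p) (hpq : p < q * s) :
    ∃ C : ℝ≥0∞, C ≠ ⊤ ∧ ∀ (𝔭 : Measure (Fin d → ℝ)) [IsProbabilityMeasure 𝔭],
      ∫⁻ ω, ∑' l, ∑' k, dominatingTerm p 𝔭 l k ω ∂iidLaw 𝔭 ≤ C * (1 + absMoment 𝔭 q ^ s) := by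
  obtain ⟨C, hC, hterm⟩ := exists_lintegral_dominatingTerm_le d hs0 hs1
  set K := ∑' l, ENNReal.ofReal (levelCoef p d l * (3 * 2 ^ l) ^ (d * (1 - s)))
  set K' := ENNReal.ofReal (2 ^ p / (1 - 2 ^ (p - q * s)))
  refine ⟨C * K * (1 + K'), ENNReal.mul_ne_top
    (ENNReal.mul_ne_top hC (tsum_ofReal_levelCoef_mul_ne_top hps))
    (ENNReal.add_ne_top.2 ⟨ENNReal.one_ne_top, ENNReal.ofReal_ne_top⟩), fun 𝔭 _ ↦ ?_⟩
  have hmeas := measurable_dominatingTerm p 𝔭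
  calc ∫⁻ ω, ∑' l, ∑' k, dominatingTerm p 𝔭 l k ω ∂iidLaw 𝔭
      = ∑' l, ∑' k, ∫⁻ ω, dominatingTerm p 𝔭 l k ω ∂iidLaw 𝔭 := by
        rw [lintegral_tsum fun l ↦ (Measurable.tsum (hmeas l)).aemeasurable]
        exact tsum_congr fun l ↦ lintegral_tsum fun k ↦ (hmeas l k).aemeasurable
    _ ≤ ∑' l, ∑' k, C * ENNReal.ofReal (levelCoef p d l * (3 * 2 ^ l) ^ (d * (1 - s))) *
          (ENNReal.ofReal (shellWeight p k) * 𝔭 (shell ⁻¹' {k}) ^ s) :=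
        ENNReal.tsum_le_tsum fun l ↦ ENNReal.tsum_le_tsum (hterm p 𝔭 l)
    _ = C * K * ∑' k, ENNReal.ofReal (shellWeight p k) * 𝔭 (shell ⁻¹' {k}) ^ s := by
        simp_rw [ENNReal.tsum_mul_left, ENNReal.tsum_mul_right, ENNReal.tsum_mul_left]
        rfl
    _ ≤ C * K * (1 + K' * absMoment 𝔭 q ^ s) := by
        gcongr
        exact tsum_shellWeight_mul_measure_rpow_le 𝔭 hp hs0 hpq
    _ ≤ C * K * ((1 + K') * (1 + absMoment 𝔭 q ^ s)) := by
        gcongr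
        rw [one_add_mul, mul_one_add, add_assoc]
        exact add_le_add_right (le_add_left le_add_self) 1
    _ = _ := (mul_assoc _ _ _).symm

end DominatingFunction

section LimitBound

variable {d : ℕ} {p : ℝ}

theorem tsum_levelCoef_le (hp : 1 ≤ p) (hd : 1 ≤ d) :
    ∑' l, ENNReal.ofReal (levelCoef p d l) ≤
      ENNReal.ofReal (d ^ (p / 2) * (2 ^ p / 2 + 1 / (1 - 2 ^ (-p)))) := by
  have hlt : (2 : ℝ) ^ (-p) < 1 := Real.rpow_lt_one_of_one_lt_of_neg one_lt_two (by linarith)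
  have hgeom : 0 ≤ 1 / (1 - (2 : ℝ) ^ (-p)) := one_div_nonneg.2 (sub_nonneg.2 hlt.le)
  have hd1 : (1 : ℝ) ≤ d ^ (p / 2) := Real.one_le_rpow (mod_cast hd) (by linarith)
  have hhalf : (0 : ℝ) ≤ 2 ^ p / 2 := by positivity
  rw [tsum_eq_zero_add' ENNReal.summable]
  simp_rw [levelCoef, cellScale, ENNReal.ofReal_mul (zero_le_one.trans hd1), ← neg_mul]
  rw [ENNReal.tsum_mul_left, tsum_ofReal_two_rpow_mul (by linarith),
    ← ENNReal.ofReal_mul (by positivity), ← ENNReal.ofReal_mul (by positivity),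
    ← ENNReal.ofReal_add (by positivity) (mul_nonneg (by positivity) hgeom), mul_add,
    Real.rpow_sub_one two_ne_zero]
  exact ENNReal.ofReal_le_ofReal (by gcongr; exact le_mul_of_one_le_left hhalf hd1)

theorem half_add_one_div_le {a : ℝ} (ha : 2 ≤ a) :
    (a / 2 + 1 / (1 - a⁻¹)) * 2 ≤ a ^ 2 * (a + 1) / (a - 1) ^ 2 := by
  have ha1 : 0 < a - 1 := by linarith
  have hfrac : (a / 2 + 1 / (1 - a⁻¹)) * 2 * (a - 1) ^ 2 = a * (a - 1) * (a + 1) := by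
    have hinv : 1 / (1 - a⁻¹) = a / (a - 1) := by field_simp
    rw [hinv]
    field_simp
    ring
  rw [le_div_iff₀ (by positivity), hfrac]
  nlinarith

theorem Kpd_nonneg (p : ℝ) (d : ℕ) : 0 ≤ Kpd p d := by
  unfold Kpd
  positivity

theorem tsum_levelCoef_mul_le (hp : 1 ≤ p) (hpd : (d : ℝ) / 2 < p) (hd : 1 ≤ d) :
    (∑' l, ENNReal.ofReal (levelCoef p d l)) * ENNReal.ofReal (2 * √2) ≤
      ENNReal.ofReal (√2 * Kpd p d / (1 - 2 ^ (-(p - d / 2)))) := by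
  have ha : (2 : ℝ) ≤ 2 ^ p := Real.self_le_rpow_of_one_le one_le_two hp
  have hsq : (2 : ℝ) ^ (2 * p) = (2 ^ p) ^ 2 := by
    rw [mul_comm, ← Nat.cast_ofNat (R := ℝ) (n := 2), Real.rpow_mul_natCast (by norm_num)]
  have hpos : (0 : ℝ) < 2 ^ (-(p - (d : ℝ) / 2)) := by positivity
  have hlt : (2 : ℝ) ^ (-(p - (d : ℝ) / 2)) < 1 :=
    Real.rpow_lt_one_of_one_lt_of_neg one_lt_two (by linarith)
  refine (mul_le_mul_left (tsum_levelCoef_le hp hd) _).trans ?_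
  rw [← ENNReal.ofReal_mul' (by positivity)]
  refine ENNReal.ofReal_le_ofReal ?_
  calc (d : ℝ) ^ (p / 2) * (2 ^ p / 2 + 1 / (1 - 2 ^ (-p))) * (2 * √2)
      = d ^ (p / 2) * √2 * ((2 ^ p / 2 + 1 / (1 - (2 ^ p)⁻¹)) * 2) := by
        rw [Real.rpow_neg zero_le_two]
        ring
    _ ≤ d ^ (p / 2) * √2 * ((2 ^ p) ^ 2 * (2 ^ p + 1) / (2 ^ p - 1) ^ 2) := by
        gcongr
        exact half_add_one_div_le ha
    _ = √2 * Kpd p d := by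
        rw [Kpd, hsq]
        ring
    _ ≤ √2 * Kpd p d / (1 - 2 ^ (-(p - d / 2))) :=
        le_div_self (mul_nonneg (Real.sqrt_nonneg 2) (Kpd_nonneg p d)) (by linarith) (by linarith)

/-- The `p`-th power of `YpNP p δ d 𝔭`, the almost sure bound for the normalized `dyadicBound`. -/
def limitBound (p δ : ℝ) (d : ℕ) (𝔭 : Measure (Fin d → ℝ)) : ℝ :=
  √2 * Kpd p d / (1 - 2 ^ (-(p - (d : ℝ) / 2))) *
    (1 + 2 ^ p / (1 - 2 ^ (-δ / 2)) * (absMoment 𝔭 (2 * p + δ)).toReal ^ ((1 : ℝ) / 2))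

theorem YpNP_eq_limitBound_rpow (p δ : ℝ) (𝔭 : Measure (Fin d → ℝ)) :
    YpNP p δ d 𝔭 = limitBound p δ d 𝔭 ^ (1 / p) :=
  rfl

variable {δ : ℝ} (hp : 1 ≤ p) (hpd : (d : ℝ) / 2 < p) (hδ : 0 < δ) (hd : 1 ≤ d)
  (𝔭 : Measure (Fin d → ℝ))

include hpd hδ in
theorem limitBound_nonneg : 0 ≤ limitBound p δ d 𝔭 := by
  have hsub : ∀ a : ℝ, 0 < a → 0 ≤ 1 - (2 : ℝ) ^ (-a) := fun a ha ↦
    sub_nonneg.2 (Real.rpow_lt_one_of_one_lt_of_neg one_lt_two (neg_neg_of_pos ha)).le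
  rw [limitBound, neg_div]
  exact mul_nonneg (div_nonneg (mul_nonneg (Real.sqrt_nonneg 2) (Kpd_nonneg p d))
    (hsub _ (by linarith))) (add_nonneg zero_le_one (mul_nonneg
      (div_nonneg (by positivity) (hsub _ (by linarith))) (by positivity)))

variable [IsProbabilityMeasure 𝔭] (hM : absMoment 𝔭 (2 * p + δ) ≠ ⊤)

include hp hpd hδ hd hM in
theorem tsum_levelCoef_mul_sqrt_le_limitBound :
    ∑' l, ∑' k, ENNReal.ofReal (levelCoef p d l * shellWeight p k) *
      ENNReal.ofReal (2 * √2 * √(𝔭.real (shell ⁻¹' {k}))) ≤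
        ENNReal.ofReal (limitBound p δ d 𝔭) := by
  have hterm : ∀ l k, ENNReal.ofReal (levelCoef p d l * shellWeight p k) *
      ENNReal.ofReal (2 * √2 * √(𝔭.real (shell ⁻¹' {k}))) =
      ENNReal.ofReal (levelCoef p d l) * ENNReal.ofReal (2 * √2) *
        (ENNReal.ofReal (shellWeight p k) * 𝔭 (shell ⁻¹' {k}) ^ (1 / 2 : ℝ)) := fun l k ↦ by
    rw [ENNReal.ofReal_mul (levelCoef_nonneg _ _ _), ENNReal.ofReal_mul (by positivity),
      Real.sqrt_eq_rpow (𝔭.real _),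
      ← ENNReal.ofReal_rpow_of_nonneg measureReal_nonneg (by norm_num), ofReal_measureReal]
    ring
  have hshell := tsum_shellWeight_mul_measure_rpow_le 𝔭 (p := p) (q := 2 * p + δ) (s := 1 / 2)
    (by linarith) one_half_pos (by linarith)
  have hexp : p - (2 * p + δ) * (1 / 2) = -δ / 2 := by ring
  have hlt : (2 : ℝ) ^ (-δ / 2) < 1 := Real.rpow_lt_one_of_one_lt_of_neg one_lt_two (by linarith)
  have hfrac : 0 ≤ 2 ^ p / (1 - (2 : ℝ) ^ (-δ / 2)) := div_nonneg (by positivity) (by linarith)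
  have hM' : absMoment 𝔭 (2 * p + δ) ^ (1 / 2 : ℝ) =
      ENNReal.ofReal ((absMoment 𝔭 (2 * p + δ)).toReal ^ (1 / 2 : ℝ)) := by
    rw [← ENNReal.ofReal_rpow_of_nonneg ENNReal.toReal_nonneg (by norm_num),
      ENNReal.ofReal_toReal hM]
  rw [hexp, hM', ← ENNReal.ofReal_mul hfrac, ← ENNReal.ofReal_one,
    ← ENNReal.ofReal_add zero_le_one (by positivity)] at hshell
  simp_rw [hterm, ENNReal.tsum_mul_left, ENNReal.tsum_mul_right]
  refine (mul_le_mul' (tsum_levelCoef_mul_le hp hpd hd) hshell).trans_eq ?_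
  rw [← ENNReal.ofReal_mul' (by positivity), limitBound]

end LimitBound

section NormalizedBound

variable {d : ℕ}

/-- `dyadicBound` between `𝔭` and the empirical measure of a sample of size `n`, normalized by the
rate of the law of the iterated logarithm. -/
def normalizedBound (p : ℝ) (𝔭 : Measure (Fin d → ℝ)) (n : ℕ) (ω : ℕ → Fin d → ℝ) : ℝ≥0∞ :=
  ENNReal.ofReal (lilRate n) * dyadicBound p 𝔭 (empOf n (initSeg n ω))

theorem normalizedBound_eq_tsum (p : ℝ) (𝔭 : Measure (Fin d → ℝ)) (n : ℕ) (ω : ℕ → Fin d → ℝ) :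
    normalizedBound p 𝔭 n ω = ∑' l, ∑' k, ENNReal.ofReal (levelCoef p d l * shellWeight p k) *
      (ENNReal.ofReal (lilRate n) * shellDiff l k 𝔭 (empOf n (initSeg n ω))) := by
  simp_rw [normalizedBound, dyadicBound, ← ENNReal.tsum_mul_left, mul_left_comm]

variable {p : ℝ} {𝔭 : Measure (Fin d → ℝ)} [IsProbabilityMeasure 𝔭]

theorem normalizedBound_le_tsum_dominatingTerm (p : ℝ) (𝔭 : Measure (Fin d → ℝ))
    [IsProbabilityMeasure 𝔭] (n : ℕ) (ω : ℕ → Fin d → ℝ) :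
    normalizedBound p 𝔭 n ω ≤ ∑' l, ∑' k, dominatingTerm p 𝔭 l k ω := by
  rw [normalizedBound_eq_tsum]
  exact ENNReal.tsum_le_tsum fun l ↦ ENNReal.tsum_le_tsum fun k ↦
    lilRate_mul_shellDiff_le_dominatingTerm p 𝔭 l k n ω

theorem ae_limsup_normalizedBound_le_tsum
    (hint : ∫⁻ ω, ∑' l, ∑' k, dominatingTerm p 𝔭 l k ω ∂iidLaw 𝔭 ≠ ⊤) :
    ∀ᵐ ω ∂iidLaw 𝔭, limsup (fun n ↦ normalizedBound p 𝔭 n ω) atTop ≤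
      ∑' l, ∑' k, ENNReal.ofReal (levelCoef p d l * shellWeight p k) *
        ENNReal.ofReal (2 * √2 * √(𝔭.real (shell ⁻¹' {k}))) := by
  have hfin := ae_lt_top (Measurable.tsum fun l ↦
    Measurable.tsum (measurable_dominatingTerm p 𝔭 l)) hint
  have hlil : ∀ᵐ ω ∂iidLaw 𝔭, ∀ z : ℕ × ℕ, ∀ᶠ n : ℕ in atTop,
      ENNReal.ofReal (lilRate n) * shellDiff z.1 z.2 𝔭 (empOf n (initSeg n ω)) ≤
        ENNReal.ofReal (2 * √2 * √(𝔭.real (shell ⁻¹' {z.2}))) :=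
    ae_all_iff.2 fun z ↦ ae_eventually_lilRate_mul_shellDiff_le 𝔭 z.1 z.2
  filter_upwards [hfin, hlil] with ω hdom hω
  simp_rw [normalizedBound_eq_tsum, ← ENNReal.tsum_prod, ← lintegral_count]
  refine (limsup_lintegral_le (fun z : ℕ × ℕ ↦ dominatingTerm p 𝔭 z.1 z.2 ω)
    (fun n ↦ .of_discrete) (fun n ↦ .of_forall fun z ↦
      lilRate_mul_shellDiff_le_dominatingTerm p 𝔭 z.1 z.2 n ω) ?_).trans ?_
  · rw [lintegral_count, ENNReal.tsum_prod (f := fun l k ↦ dominatingTerm p 𝔭 l k ω)]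
    exact hdom.ne
  · refine lintegral_mono fun z ↦ limsup_le_of_le (by isBoundedDefault) ?_
    filter_upwards [hω z] with n hn
    gcongr

end NormalizedBound

section CondLExp

variable {Ω : Type*} {m0 : MeasurableSpace Ω} {P : Measure Ω} [IsFiniteMeasure P]
  {ℱ : Filtration ℕ m0}

theorem tendsto_ae_condLExp {U : Ω → ℝ≥0∞} (hU : Measurable[⨆ n, ℱ n] U)
    (hint : ∫⁻ ω, U ω ∂P ≠ ⊤) :
    ∀ᵐ ω ∂P, Tendsto (fun n ↦ P⁻[U|ℱ n] ω) atTop (𝓝 (U ω)) := by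
  have hUm : Measurable U := hU.mono (iSup_le ℱ.le) le_rfl
  have hlevy := (integrable_toReal_of_lintegral_ne_top hUm.aemeasurable hint).tendsto_ae_condExp
    (ℱ := ℱ) hU.ennreal_toReal.stronglyMeasurable
  have hcoe : ∀ᵐ ω ∂P, ∀ n, (P⁻[U|ℱ n] ω).toReal = P[fun ω ↦ (U ω).toReal|ℱ n] ω :=
    ae_all_iff.2 fun n ↦ toReal_condLExp _ hUm.aemeasurable hint
  filter_upwards [hlevy, hcoe, ae_lt_top hUm hint, ae_all_iff.2 fun n ↦
    condLExp_ne_top (mΩ := ℱ n) hint] with ω hω hcoe hfin hfin'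
  rw [← ENNReal.tendsto_toReal_iff hfin' hfin.ne]
  simpa only [hcoe] using hω

/-- Hunt's lemma, in the form of a reverse Fatou inequality. -/
theorem ae_limsup_condLExp_le_limsup {X : ℕ → Ω → ℝ≥0∞} (hX : ∀ n, Measurable[⨆ n, ℱ n] (X n))
    (hint : ∫⁻ ω, ⨆ n, X n ω ∂P ≠ ⊤) :
    ∀ᵐ ω ∂P, limsup (fun n ↦ P⁻[X n|ℱ n] ω) atTop ≤ limsup (X · ω) atTop := by
  have hlim : ∀ᵐ ω ∂P, ∀ N,
      Tendsto (fun n ↦ P⁻[fun ω ↦ ⨆ i, X (i + N) ω|ℱ n] ω) atTop (𝓝 (⨆ i, X (i + N) ω)) :=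
    ae_all_iff.2 fun N ↦ tendsto_ae_condLExp (Measurable.iSup fun i ↦ hX _) <|
      ne_top_of_le_ne_top hint <| lintegral_mono fun ω ↦
        iSup_le fun i ↦ le_iSup (fun n ↦ X n ω) (i + N)
  have hmono : ∀ᵐ ω ∂P, ∀ N n, P⁻[X (n + N)|ℱ (n + N)] ω ≤
      P⁻[fun ω ↦ ⨆ i, X (i + N) ω|ℱ (n + N)] ω :=
    ae_all_iff.2 fun N ↦ ae_all_iff.2 fun n ↦ condLExp_mono <| .of_forall fun ω ↦
      le_iSup (fun i ↦ X (i + N) ω) n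
  filter_upwards [hlim, hmono] with ω hlim hmono
  rw [limsup_eq_iInf_iSup_of_nat' (u := fun n ↦ X n ω)]
  refine le_iInf fun N ↦ ?_
  rw [← ((tendsto_add_atTop_iff_nat N).2 (hlim N)).limsup_eq, ← limsup_nat_add _ N]
  exact limsup_le_limsup (.of_forall (hmono N))

end CondLExp

section CondDistrib

variable {Ω A B : Type*} {mΩ : MeasurableSpace Ω} [MeasurableSpace A] [MeasurableSpace B]
  {P : Measure Ω} [IsFiniteMeasure P] {X : Ω → A} {Y : Ω → B} {κ : Kernel A B}

theorem hasCondDistrib_of_forall_rect [IsFiniteKernel κ] (hX : Measurable X) (hY : Measurable Y)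
    (h : ∀ s, MeasurableSet s → ∀ t, MeasurableSet t →
      P {ω | X ω ∈ s ∧ Y ω ∈ t} = ∫⁻ ω in {ω | X ω ∈ s}, κ (X ω) t ∂P) :
    HasCondDistrib Y X κ P where
  aemeasurable := (hX.prodMk hY).aemeasurable
  map_eq := by
    refine Measure.ext_prod fun {s t} hs ht ↦ ?_
    rw [Measure.map_apply (hX.prodMk hY) (hs.prod ht), Measure.compProd_apply_prod hs ht,
      setLIntegral_map hs (Kernel.measurable_coe κ ht) hX]
    exact h s hs t ht

theorem setLIntegral_of_hasCondDistrib [IsSFiniteKernel κ] (hX : Measurable X) (hY : Measurable Y)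
    (h : HasCondDistrib Y X κ P) {f : A × B → ℝ≥0∞} (hf : Measurable f) {s : Set A}
    (hs : MeasurableSet s) :
    ∫⁻ ω in X ⁻¹' s, f (X ω, Y ω) ∂P = ∫⁻ ω in X ⁻¹' s, ∫⁻ y, f (X ω, y) ∂κ (X ω) ∂P := by
  have hcomp := Measure.setLIntegral_compProd (μ := P.map X) (κ := κ) hf hs MeasurableSet.univ
  rw [← h.map_eq, setLIntegral_map (hs.prod MeasurableSet.univ) hf (hX.prodMk hY)] at hcomp
  simp only [Measure.restrict_univ] at hcomp
  rw [setLIntegral_map hs hf.lintegral_kernel_prod_right' hX] at hcomp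
  rw [← hcomp]
  congr 2
  ext ω
  simp

theorem lintegral_kernel_ae_eq_condLExp [IsSFiniteKernel κ] (hX : Measurable X) (hY : Measurable Y)
    (h : HasCondDistrib Y X κ P) {f : A × B → ℝ≥0∞} (hf : Measurable f) :
    (fun ω ↦ ∫⁻ y, f (X ω, y) ∂κ (X ω)) =ᵐ[P]
      P⁻[fun ω ↦ f (X ω, Y ω)|MeasurableSpace.comap X inferInstance] := by
  refine ae_eq_condLExp (hm := hX.comap_le) P _
    (hf.lintegral_kernel_prod_right'.comp (comap_measurable X)) ?_
  rintro _ ⟨s, hs, rfl⟩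
  exact (setLIntegral_of_hasCondDistrib hX hY h hf hs).symm

theorem hasCondDistrib_comp_of_prod {C : Type*} [MeasurableSpace C] {Z : Ω → C}
    [IsFiniteKernel κ] {η : Kernel A C} [IsMarkovKernel η] {τ : Kernel B A} [IsMarkovKernel τ]
    (hX : Measurable X) (hY : Measurable Y) (hZ : Measurable Z)
    (h : HasCondDistrib (fun ω ↦ (Y ω, Z ω)) X (κ ×ₖ η) P) (hτ : HasCondDistrib X Y τ P) :
    HasCondDistrib Z Y (η ∘ₖ τ) P := by
  have hηm {t : Set C} (ht : MeasurableSet t) := Kernel.measurable_coe η ht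
  have hYX : HasCondDistrib Y X κ P := by simpa using h.fst
  refine hasCondDistrib_of_forall_rect hY hZ fun s hs t ht ↦ ?_
  calc P {ω | Y ω ∈ s ∧ Z ω ∈ t}
      = ∫⁻ ω, ∫⁻ yz, (s ×ˢ t).indicator 1 yz ∂(κ ×ₖ η) (X ω) ∂P := by
        have hint := setLIntegral_of_hasCondDistrib hX (hY.prodMk hZ) h
          ((measurable_one.indicator (hs.prod ht)).comp measurable_snd) MeasurableSet.univ
        simp only [preimage_univ, Measure.restrict_univ, Function.comp_apply] at hint
        rw [← hint]
        exact (lintegral_indicator_one ((hY hs).inter (hZ ht))).symm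
    _ = ∫⁻ ω, ∫⁻ y, s.indicator 1 y * η (X ω) t ∂κ (X ω) ∂P := by
        refine lintegral_congr fun ω ↦ ?_
        rw [lintegral_indicator_one (hs.prod ht), Kernel.prod_apply, Measure.prod_prod,
          lintegral_mul_const _ (measurable_one.indicator hs), lintegral_indicator_one hs]
    _ = ∫⁻ ω, s.indicator 1 (Y ω) * η (X ω) t ∂P := by
        have hint := setLIntegral_of_hasCondDistrib hX hY hYX
          (((measurable_one.indicator hs).comp measurable_snd).mul
            ((hηm ht).comp measurable_fst)) MeasurableSet.univ
        simpa using hint.symm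
    _ = ∫⁻ ω in Y ⁻¹' s, η (X ω) t ∂P := by
        rw [← lintegral_indicator (hY hs)]
        refine lintegral_congr fun ω ↦ ?_
        by_cases hω : Y ω ∈ s <;> simp [hω]
    _ = ∫⁻ ω in Y ⁻¹' s, (η ∘ₖ τ) (Y ω) t ∂P := by
        simp_rw [Kernel.comp_apply' _ _ _ ht]
        exact setLIntegral_of_hasCondDistrib hY hX hτ ((hηm ht).comp measurable_snd) hs

end CondDistrib

section IidKernel

variable {T E F : Type*} [MeasurableSpace T] [MeasurableSpace E] [MeasurableSpace F]

/-- The kernel of i.i.d. sequences whose marginals are given by the kernel `κ`. -/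
def infinitePiKernel (κ : Kernel T E) [IsMarkovKernel κ] : Kernel T (ℕ → E) where
  toFun t := iidLaw (κ t)
  measurable' := by
    refine Measurable.measure_of_isPiSystem_of_isProbabilityMeasure
      generateFrom_squareCylinders.symm (isPiSystem_squareCylinders
        (fun _ ↦ MeasurableSpace.isPiSystem_measurableSet) (by simp)) ?_
    rintro _ ⟨s, t, ht, rfl⟩
    simp_rw [Measure.infinitePi_pi _ fun i _ ↦ ht i (mem_univ i)]
    exact Finset.measurable_prod _ fun i _ ↦ Kernel.measurable_coe κ (ht i (mem_univ i))

section

variable (κ : Kernel T E) [IsMarkovKernel κ]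

theorem infinitePiKernel_apply (t : T) : infinitePiKernel κ t = iidLaw (κ t) :=
  rfl

instance isMarkovKernel_infinitePiKernel : IsMarkovKernel (infinitePiKernel κ) :=
  ⟨fun t ↦ inferInstanceAs (IsProbabilityMeasure (iidLaw (κ t)))⟩

theorem map_infinitePiKernel_apply {f : E → F} (hf : Measurable f) (t : T) :
    (infinitePiKernel κ t).map (fun ω i ↦ f (ω i)) = iidLaw ((κ t).map f) :=
  Measure.infinitePi_map_pi (f := fun _ ↦ f) _ fun _ ↦ hf

end

theorem eq_iidLaw_of_forall_cylinder {𝔭 : Measure E} [IsProbabilityMeasure 𝔭]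
    {μ : Measure (ℕ → E)} (h : ∀ (n : ℕ) (A : Fin n → Set E), (∀ i, MeasurableSet (A i)) →
      μ {ω | ∀ i : Fin n, ω i ∈ A i} = ∏ i, 𝔭 (A i)) :
    μ = iidLaw 𝔭 := by
  classical
  refine Measure.eq_infinitePi _ fun s t ht ↦ ?_
  obtain ⟨n, hn⟩ := s.exists_nat_subset_range
  have hcyl : (s : Set ℕ).pi t = {ω | ∀ i : Fin n, ω i ∈ if (i : ℕ) ∈ s then t i else univ} := by
    ext ω
    simp only [Set.mem_pi, Finset.mem_coe, mem_ofPred_eq, Fin.forall_iff]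
    refine ⟨fun hω i _ ↦ ?_, fun hω i hi ↦ ?_⟩
    · split_ifs with hi
      exacts [hω i hi, mem_univ _]
    · simpa only [if_pos hi] using hω i (Finset.mem_range.1 (hn hi))
  rw [hcyl, h n _ fun i ↦ by split_ifs <;> [exact ht _; exact .univ],
    Fin.prod_univ_eq_prod_range (fun i ↦ 𝔭 (if i ∈ s then t i else univ)) n,
    ← Finset.prod_subset hn fun i _ hi ↦ by simp [hi]]
  exact Finset.prod_congr rfl fun i hi ↦ by rw [if_pos hi]

variable [Nonempty E]

/-- The retraction of the measures onto the probability measures which maps every other measure to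
a fixed Dirac mass. It makes total the kernels that are only meaningful on probability measures. -/
def toProb (μ : Measure E) : ProbabilityMeasure E :=
  open Classical in
  if h : IsProbabilityMeasure μ then ⟨μ, h⟩
  else ⟨Measure.dirac (Classical.arbitrary E), inferInstance⟩

theorem coe_toProb (μ : Measure E) [h : IsProbabilityMeasure μ] : (toProb μ : Measure E) = μ := by
  simp [toProb, h]

theorem measurable_toProb : Measurable (toProb (E := E)) := by
  classical
  exact Measurable.dite (s := {μ : Measure E | IsProbabilityMeasure μ}) measurable_id
    measurable_const ProbabilityMeasure.measurableSet_isProbabilityMeasure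

variable (E) in
/-- The kernel from the measures on `E` to `E` which maps every probability measure to itself. -/
def idKernel : Kernel (Measure E) E :=
  ⟨fun μ ↦ toProb μ, measurable_subtype_coe.comp measurable_toProb⟩

theorem idKernel_apply (μ : Measure E) [IsProbabilityMeasure μ] : idKernel E μ = μ :=
  coe_toProb μ

instance isMarkovKernel_idKernel : IsMarkovKernel (idKernel E) :=
  ⟨fun μ ↦ (toProb μ).2⟩

variable (E) in
/-- The kernel which maps a probability measure `𝔭` to the law of an i.i.d. sequence with
marginals `𝔭`. -/
def iidKernel : Kernel (Measure E) (ℕ → E) :=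
  infinitePiKernel (idKernel E)

instance isMarkovKernel_iidKernel : IsMarkovKernel (iidKernel E) :=
  isMarkovKernel_infinitePiKernel _

theorem iidKernel_apply (𝔭 : Measure E) [IsProbabilityMeasure 𝔭] : iidKernel E 𝔭 = iidLaw 𝔭 := by
  rw [iidKernel, infinitePiKernel_apply]
  simp_rw [idKernel_apply]

theorem hasCondDistrib_iidKernel {ρ : Measure (ℕ → E)} [IsFiniteMeasure ρ]
    {iid : Measure E → Measure (ℕ → E)} {X : (ℕ → E) → Measure E} (hX : Measurable X)
    (hXprob : ∀ᵐ ω ∂ρ, IsProbabilityMeasure (X ω))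
    (hiid : ∀ 𝔭 : Measure E, IsProbabilityMeasure 𝔭 → iid 𝔭 = iidLaw 𝔭)
    (h : ∀ C, MeasurableSet C → ∀ B, MeasurableSet B →
      ρ (C ∩ X ⁻¹' B) = ∫⁻ ω in X ⁻¹' B, iid (X ω) C ∂ρ) :
    HasCondDistrib id X (iidKernel E) ρ := by
  refine hasCondDistrib_of_forall_rect hX measurable_id fun B hB C hC ↦ ?_
  calc ρ {ω | X ω ∈ B ∧ ω ∈ C} = ρ (C ∩ X ⁻¹' B) := by rw [inter_comm]; rfl
    _ = ∫⁻ ω in X ⁻¹' B, iidKernel E (X ω) C ∂ρ := by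
      rw [h C hC B hB]
      refine lintegral_congr_ae (ae_restrict_of_ae ?_)
      filter_upwards [hXprob] with ω hω
      rw [hiid _ hω, iidKernel_apply]

end IidKernel

section Shift

variable {E : Type*}

/-- The sequence of the observations that follow the first `n`. -/
def shift (n : ℕ) (ω : ℕ → E) : ℕ → E := fun j ↦ ω (j + n)

variable [MeasurableSpace E]

theorem measurable_shift (n : ℕ) : Measurable (shift (E := E) n) := by
  unfold shift
  fun_prop

variable (𝔭 : Measure E) [IsProbabilityMeasure 𝔭]

theorem map_shift_iidLaw (n : ℕ) : (iidLaw 𝔭).map (shift n) = iidLaw 𝔭 :=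
  Measure.map_infinitePi_infinitePi_of_inj (P := fun _ : ℕ ↦ 𝔭) (f := fun j ↦ j + n)
    (add_left_injective n)

theorem indepFun_initSeg_shift (n : ℕ) : IndepFun (initSeg n) (shift n) (iidLaw 𝔭) := by
  refine IndepFun.process_indepFun_process (fun i ↦ measurable_pi_apply _)
    (fun j ↦ measurable_pi_apply _) fun I J ↦ ?_
  have h := (iIndepFun_apply_iidLaw 𝔭).indepFun_finset (I.map Fin.valEmbedding)
    (J.map (addRightEmbedding n))
    (Finset.disjoint_left.2 fun i hi hj ↦ by simp at hi hj; omega) measurable_pi_apply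
  exact h.comp (φ := fun v (i : I) ↦ v ⟨i.1, Finset.mem_map_of_mem Fin.valEmbedding i.2⟩)
    (ψ := fun v (j : J) ↦ v ⟨j.1 + n, Finset.mem_map_of_mem (addRightEmbedding n) j.2⟩)
    (by fun_prop) (by fun_prop)

end Shift

section CountablyGenerated

variable {E : Type*} [MeasurableSpace E] [MeasurableSpace.CountablyGenerated E]

theorem exists_countable_isPiSystem_generateFrom_eq (E : Type*) [m : MeasurableSpace E]
    [MeasurableSpace.CountablyGenerated E] :
    ∃ 𝒜 : Set (Set E), 𝒜.Countable ∧ IsPiSystem 𝒜 ∧ m = MeasurableSpace.generateFrom 𝒜 := by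
  refine ⟨generateSetAlgebra (MeasurableSpace.countableGeneratingSet E),
    countable_generateSetAlgebra MeasurableSpace.countable_countableGeneratingSet,
    fun s hs t ht _ ↦ isSetAlgebra_generateSetAlgebra.inter_mem hs ht, ?_⟩
  rw [generateFrom_generateSetAlgebra_eq, MeasurableSpace.generateFrom_countableGeneratingSet]

instance countablyGenerated_probabilityMeasure :
    MeasurableSpace.CountablyGenerated (ProbabilityMeasure E) := by
  obtain ⟨𝒜, hcount, hpi, hgen⟩ := exists_countable_isPiSystem_generateFrom_eq E
  have hmeas (s : 𝒜) : MeasurableSet (s : Set E) :=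
    hgen ▸ MeasurableSpace.measurableSet_generateFrom s.2
  have := hcount.to_subtype
  let eval (μ : ProbabilityMeasure E) (s : 𝒜) : ℝ≥0∞ := (μ : Measure E) s
  have heval : Measurable eval := measurable_pi_lambda _ fun s ↦
    (Measure.measurable_coe (hmeas s)).comp measurable_subtype_coe
  have hcomap : (inferInstance : MeasurableSpace (ProbabilityMeasure E)) =
      MeasurableSpace.comap eval inferInstance := by
    refine le_antisymm (Measurable.comap_le ?_) heval.comap_le
    let : MeasurableSpace (ProbabilityMeasure E) := MeasurableSpace.comap eval inferInstance
    exact Measurable.measure_of_isPiSystem_of_isProbabilityMeasure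
      (μ := fun 𝔭 : ProbabilityMeasure E ↦ (𝔭 : Measure E)) hgen hpi fun s hs ↦
      (measurable_pi_apply (⟨s, hs⟩ : 𝒜)).comp (comap_measurable eval)
  exact (congrArg _ hcomap).mpr (MeasurableSpace.CountablyGenerated.comap eval)

variable {A : Type*} [MeasurableSpace A] {μ : Measure A} [IsFiniteMeasure μ]
  {κ η : Kernel A (Measure E)} [IsFiniteKernel κ] [IsFiniteKernel η]

/-- The measures on `E` need not be countably generated, so the almost sure uniqueness of the
disintegration is applied to the laws on the probability measures. -/
theorem ae_eq_of_compProd_eq_of_isProbabilityMeasure [Nonempty E] (h : μ ⊗ₘ κ = μ ⊗ₘ η)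
    (hκ : ∀ᵐ a ∂μ, ∀ᵐ 𝔭 ∂κ a, IsProbabilityMeasure 𝔭)
    (hη : ∀ᵐ a ∂μ, ∀ᵐ 𝔭 ∂η a, IsProbabilityMeasure 𝔭) : κ =ᵐ[μ] η := by
  have hretract {ν : Measure (Measure E)} (hν : ∀ᵐ 𝔭 ∂ν, IsProbabilityMeasure 𝔭) :
      (ν.map toProb).map (fun 𝔭 : ProbabilityMeasure E ↦ (𝔭 : Measure E)) = ν := by
    refine (Measure.map_map measurable_subtype_coe measurable_toProb).trans ?_
    refine (Measure.map_congr (g := id) ?_).trans Measure.map_id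
    filter_upwards [hν] with 𝔭 h𝔭 using coe_toProb 𝔭
  have hmap : μ ⊗ₘ κ.map toProb = μ ⊗ₘ η.map toProb := by
    rw [Measure.compProd_map measurable_toProb, Measure.compProd_map measurable_toProb, h]
  filter_upwards [Kernel.ae_eq_of_compProd_eq hmap, hκ, hη] with a ha hκ hη
  rw [← hretract hκ, ← hretract hη, ← Kernel.map_apply _ measurable_toProb,
    ← Kernel.map_apply _ measurable_toProb, ha]

end CountablyGenerated

theorem ae_ae_of_hasCondDistrib {Ω A B : Type*} [MeasurableSpace Ω] [MeasurableSpace A]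
    [MeasurableSpace B] {P : Measure Ω} [IsFiniteMeasure P] {X : Ω → A} {Y : Ω → B}
    {κ : Kernel A B} [IsFiniteKernel κ] (h : HasCondDistrib Y X κ P) {q : B → Prop}
    (hq : MeasurableSet {b | q b}) (hY : ∀ᵐ ω ∂P, q (Y ω)) :
    ∀ᵐ a ∂P.map X, ∀ᵐ b ∂κ a, q b := by
  have hXY := h.aemeasurable
  refine Measure.ae_ae_of_ae_compProd (p := fun z ↦ q z.2) ?_
  rw [← h.map_eq]
  exact (ae_map_iff hXY (measurable_snd hq)).2 hY

section Predictive

variable {E : Type*} [MeasurableSpace E] [Nonempty E] {ρ : Measure (ℕ → E)} [IsFiniteMeasure ρ]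
  {X : (ℕ → E) → Measure E}

theorem hasCondDistrib_initSeg_shift (h : HasCondDistrib id X (iidKernel E) ρ) (n : ℕ) :
    HasCondDistrib (fun ω ↦ (initSeg n ω, shift n ω)) X
      ((iidKernel E).map (initSeg n) ×ₖ iidKernel E) ρ := by
  have hker : (iidKernel E).map (fun ω ↦ (initSeg n ω, shift n ω)) =
      (iidKernel E).map (initSeg n) ×ₖ iidKernel E := by
    ext1 μ
    have hindep := (indepFun_iff_map_prod_eq_prod_map_map (measurable_initSeg n).aemeasurable
      (measurable_shift n).aemeasurable).1 (indepFun_initSeg_shift (idKernel E μ) n)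
    rw [Kernel.prod_apply, Kernel.map_apply _ (measurable_initSeg n), Kernel.map_apply _
      ((measurable_initSeg n).prodMk (measurable_shift n)), iidKernel, infinitePiKernel_apply,
      hindep, map_shift_iidLaw]
  exact hker ▸ h.comp_left ((measurable_initSeg n).prodMk (measurable_shift n))

theorem hasCondDistrib_shift_initSeg (hX : Measurable X) (h : HasCondDistrib id X (iidKernel E) ρ)
    {n : ℕ} {κ : Kernel (Fin n → E) (Measure E)} [IsMarkovKernel κ]
    (hκ : HasCondDistrib X (initSeg n) κ ρ) :
    HasCondDistrib (shift n) (initSeg n) (iidKernel E ∘ₖ κ) ρ :=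
  have := Kernel.IsMarkovKernel.map (iidKernel E) (measurable_initSeg n)
  hasCondDistrib_comp_of_prod hX (measurable_initSeg n) (measurable_shift n)
    (hasCondDistrib_initSeg_shift h n) hκ

end Predictive

section EmpShift

variable {d : ℕ} (n m : ℕ)

theorem empShift_apply (ω : ℕ → Fin d → ℝ) {B : Set (Fin d → ℝ)} (hB : MeasurableSet B) :
    empShift n m ω B = (m : ℝ≥0∞)⁻¹ * ∑ i ∈ Finset.range m, B.indicator 1 (ω (i + n)) := by
  simp [empShift, Measure.dirac_apply' _ hB]

theorem measurable_empShift : Measurable (empShift (d := d) n m) := by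
  refine Measure.measurable_of_measurable_coe _ fun B hB ↦ ?_
  simp_rw [empShift_apply n m _ hB]
  exact (Finset.measurable_sum _ fun i _ ↦
    (measurable_one.indicator hB).comp (measurable_pi_apply _)).const_mul _

theorem empShift_eq_comp_shift : empShift (d := d) n m = empShift 0 m ∘ shift n :=
  rfl

variable {m} in
theorem isProbabilityMeasure_empShift (hm : m ≠ 0) (ω : ℕ → Fin d → ℝ) :
    IsProbabilityMeasure (empShift n m ω) := by
  refine ⟨?_⟩
  rw [empShift_apply _ _ _ MeasurableSet.univ]
  simpa using ENNReal.inv_mul_cancel (Nat.cast_ne_zero.2 hm) (ENNReal.natCast_ne_top m)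

theorem map_empShift_iidLaw (𝔭 : Measure (Fin d → ℝ)) [IsProbabilityMeasure 𝔭] :
    (iidLaw 𝔭).map (empShift n m) = (iidLaw 𝔭).map (empShift 0 m) := by
  rw [empShift_eq_comp_shift, ← Measure.map_map (measurable_empShift 0 m) (measurable_shift n),
    map_shift_iidLaw]

/-- The law of the empirical measure of `m` observations which are i.i.d. with a common law
drawn from `Q`. -/
def mixtureEmpLaw (m : ℕ) (Q : Measure (Measure (Fin d → ℝ))) : Measure (Measure (Fin d → ℝ)) :=
  (Q.bind (iidKernel (Fin d → ℝ))).map (empShift 0 m)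

variable {n m} in
theorem ae_eq_mixtureEmpLaw_of_hasCondDistrib (hm : m ≠ 0) {ρ : Measure (ℕ → Fin d → ℝ)}
    [IsFiniteMeasure ρ] {X : (ℕ → Fin d → ℝ) → Measure (Fin d → ℝ)} (hX : Measurable X)
    (h : HasCondDistrib id X (iidKernel (Fin d → ℝ)) ρ)
    {κ η : Kernel (Fin n → Fin d → ℝ) (Measure (Fin d → ℝ))} [IsMarkovKernel κ] [IsFiniteKernel η]
    (hκ : HasCondDistrib X (initSeg n) κ ρ) (hη : HasCondDistrib (empShift n m) (initSeg n) η ρ) :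
    ∀ᵐ ω ∂ρ, η (initSeg n ω) = mixtureEmpLaw m (κ (initSeg n ω)) := by
  have hpred := (hasCondDistrib_shift_initSeg hX h hκ).comp_left (measurable_empShift 0 m)
  have hprob {τ : Kernel (Fin n → Fin d → ℝ) (Measure (Fin d → ℝ))} [IsFiniteKernel τ]
      (hτ : HasCondDistrib (empShift n m) (initSeg n) τ ρ) :
      ∀ᵐ v ∂ρ.map (initSeg n), ∀ᵐ 𝔭 ∂τ v, IsProbabilityMeasure 𝔭 :=
    ae_ae_of_hasCondDistrib hτ ProbabilityMeasure.measurableSet_isProbabilityMeasure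
      (ae_of_all _ (isProbabilityMeasure_empShift n hm))
  have := Kernel.IsMarkovKernel.map (iidKernel (Fin d → ℝ) ∘ₖ κ) (measurable_empShift 0 m)
  have heq := ae_eq_of_compProd_eq_of_isProbabilityMeasure (hη.map_eq.symm.trans hpred.map_eq)
    (hprob hη) (hprob hpred)
  filter_upwards [ae_of_ae_map (measurable_initSeg n).aemeasurable heq] with ω hω
  rw [hω, Kernel.map_apply _ (measurable_empShift 0 m), Kernel.comp_apply, mixtureEmpLaw]

end EmpShift

section Wasserstein

variable {X : Type*} [MeasurableSpace X] {c : X → X → ℝ} {p : ℝ} {μ ν : Measure X}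

theorem wassW_nonneg (hc : ∀ x y, 0 ≤ c x y) (p : ℝ) (μ ν : Measure X) : 0 ≤ wassW c p μ ν := by
  refine Real.sInf_nonneg ?_
  rintro r ⟨γ, -, -, rfl⟩
  exact Real.rpow_nonneg (integral_nonneg fun z ↦ Real.rpow_nonneg (hc _ _) _) _

theorem wassW_rpow_le_integral (hc : ∀ x y, 0 ≤ c x y) (hp : 0 < p) {γ : Measure (X × X)}
    (hfst : γ.map Prod.fst = μ) (hsnd : γ.map Prod.snd = ν) :
    wassW c p μ ν ^ p ≤ ∫ z, c z.1 z.2 ^ p ∂γ := by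
  have hint (γ : Measure (X × X)) : 0 ≤ ∫ z, c z.1 z.2 ^ p ∂γ :=
    integral_nonneg fun z ↦ Real.rpow_nonneg (hc _ _) _
  refine (Real.le_rpow_inv_iff_of_pos (wassW_nonneg hc p μ ν) (hint γ) hp).1 ?_
  rw [← one_div]
  refine csInf_le ⟨0, ?_⟩ ⟨γ, hfst, hsnd, rfl⟩
  rintro r ⟨γ, -, -, rfl⟩
  exact Real.rpow_nonneg (hint γ) _

/-- If the cost is not integrable, the Bochner integral in `wassW` has the junk value `0`, which is
still at most the lower integral. -/
theorem ofReal_wassW_rpow_le_lintegral (hc : ∀ x y, 0 ≤ c x y) (hp : 0 < p) {γ : Measure (X × X)}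
    (hfst : γ.map Prod.fst = μ) (hsnd : γ.map Prod.snd = ν) :
    ENNReal.ofReal (wassW c p μ ν ^ p) ≤ ∫⁻ z, ENNReal.ofReal (c z.1 z.2 ^ p) ∂γ := by
  have hcp (z : X × X) : 0 ≤ c z.1 z.2 ^ p := Real.rpow_nonneg (hc _ _) _
  refine (ENNReal.ofReal_le_ofReal (wassW_rpow_le_integral hc hp hfst hsnd)).trans ?_
  rw [← Real.enorm_of_nonneg (integral_nonneg (μ := γ) hcp)]
  simpa only [Real.enorm_of_nonneg (hcp _)] using
    enorm_integral_le_lintegral_enorm (μ := γ) fun z ↦ c z.1 z.2 ^ p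

end Wasserstein

section DyadicWasserstein

variable {d : ℕ} {p : ℝ}

theorem tendsto_cellScale_atTop (d : ℕ) (hp : 0 < p) :
    Tendsto (fun L : ℕ ↦ cellScale p d L) atTop (𝓝 0) := by
  have hlt : (2 : ℝ) ^ (-p) < 1 := Real.rpow_lt_one_of_one_lt_of_neg one_lt_two (neg_lt_zero.2 hp)
  have h := (tendsto_pow_atTop_nhds_zero_of_lt_one (by positivity) hlt).const_mul
    ((d : ℝ) ^ (p / 2))
  rw [mul_zero] at h
  refine h.congr fun L ↦ ?_
  rw [cellScale, ← Real.rpow_mul_natCast zero_le_two, neg_mul]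

theorem le_of_forall_le_add_cellScale_mul (hp : 0 < p) {a b c : ℝ≥0∞} (hc : c ≠ ⊤)
    (h : ∀ L, a ≤ b + ENNReal.ofReal (cellScale p d L) * c) : a ≤ b := by
  have hlim : Tendsto (fun L ↦ b + ENNReal.ofReal (cellScale p d L) * c) atTop
      (𝓝 (b + ENNReal.ofReal 0 * c)) :=
    (ENNReal.Tendsto.mul_const (ENNReal.tendsto_ofReal (tendsto_cellScale_atTop d hp))
      (Or.inr hc)).const_add b
  rw [ENNReal.ofReal_zero, zero_mul, add_zero] at hlim
  exact ge_of_tendsto' hlim h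

theorem measurable_powCost (p : ℝ) : Measurable (powCost (d := d) p) := by
  unfold powCost eucDist
  fun_prop

theorem lintegral_shellWeight_empOf_ne_top (p : ℝ) (n : ℕ) (v : Fin n → Fin d → ℝ) :
    ∫⁻ y, ENNReal.ofReal (shellWeight p (shell y)) ∂empOf n v ≠ ⊤ := by
  rcases eq_or_ne n 0 with rfl | hn
  · simp [empOf]
  have hmeas : Measurable fun y : Fin d → ℝ ↦ ENNReal.ofReal (shellWeight p (shell y)) :=
    (Measurable.of_discrete (f := fun k ↦ ENNReal.ofReal (shellWeight p k))).comp measurable_shell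
  rw [empOf, lintegral_smul_measure, lintegral_finsetSum_measure]
  simp_rw [lintegral_dirac' _ hmeas]
  exact ENNReal.mul_ne_top (by simpa using hn)
    (ENNReal.sum_lt_top.2 fun i _ ↦ ENNReal.ofReal_lt_top).ne

variable {e : Measure (Fin d → ℝ)} [IsProbabilityMeasure e]

theorem ofReal_wassW_eucDist_rpow_le_dyadicBound (hp : 1 ≤ p)
    (he : ∫⁻ y, ENNReal.ofReal (shellWeight p (shell y)) ∂e ≠ ⊤) (𝔭 : Measure (Fin d → ℝ))
    [IsProbabilityMeasure 𝔭] : ENNReal.ofReal (wassW eucDist p 𝔭 e ^ p) ≤ dyadicBound p 𝔭 e := by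
  have hp0 : 0 < p := one_pos.trans_le hp
  refine le_of_forall_le_add_cellScale_mul (d := d) hp0 he fun L ↦ ?_
  obtain ⟨γ, hfst, hsnd, hcost⟩ := exists_coupling_lintegral_powCost_le (T := Unit) hp L
    (Kernel.const _ 𝔭) (Kernel.const _ e)
  exact (ofReal_wassW_rpow_le_lintegral eucDist_nonneg hp0 (hfst ()) (hsnd ())).trans (hcost ())

variable {Q : Measure (Measure (Fin d → ℝ))} [IsProbabilityMeasure Q]

theorem ofReal_wassW_dirac_rpow_le_lintegral (hp : 1 ≤ p)
    (he : ∫⁻ y, ENNReal.ofReal (shellWeight p (shell y)) ∂e ≠ ⊤)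
    (hQ : ∀ᵐ 𝔭 ∂Q, IsProbabilityMeasure 𝔭) :
    ENNReal.ofReal (wassW (wassW eucDist p) p Q (Measure.dirac e) ^ p) ≤
      ∫⁻ 𝔭, dyadicBound p 𝔭 e ∂Q := by
  have hpair : Measurable fun 𝔭 : Measure (Fin d → ℝ) ↦ (𝔭, e) := by fun_prop
  have hfst : (Q.map fun 𝔭 ↦ (𝔭, e)).map Prod.fst = Q :=
    (Measure.map_map measurable_fst hpair).trans Measure.map_id
  have hsnd : (Q.map fun 𝔭 ↦ (𝔭, e)).map Prod.snd = Measure.dirac e := by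
    rw [Measure.map_map measurable_snd hpair]
    exact (Measure.map_const Q e).trans (by simp)
  calc ENNReal.ofReal (wassW (wassW eucDist p) p Q (Measure.dirac e) ^ p)
      ≤ ∫⁻ z, ENNReal.ofReal (wassW eucDist p z.1 z.2 ^ p) ∂Q.map fun 𝔭 ↦ (𝔭, e) :=
        ofReal_wassW_rpow_le_lintegral (wassW_nonneg eucDist_nonneg p) (one_pos.trans_le hp)
          hfst hsnd
    _ ≤ ∫⁻ 𝔭, ENNReal.ofReal (wassW eucDist p 𝔭 e ^ p) ∂Q := lintegral_map_le _ _
    _ ≤ ∫⁻ 𝔭, dyadicBound p 𝔭 e ∂Q := by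
        refine lintegral_mono_ae ?_
        filter_upwards [hQ] with 𝔭 h𝔭
        exact ofReal_wassW_eucDist_rpow_le_dyadicBound hp he 𝔭

end DyadicWasserstein

section MixtureWasserstein

variable {d : ℕ} {p : ℝ}

theorem lintegral_average_iidLaw {E : Type*} [MeasurableSpace E] (γ : Measure E)
    [IsProbabilityMeasure γ] {f : E → ℝ≥0∞} (hf : Measurable f) {m : ℕ} (hm : m ≠ 0) (n : ℕ) :
    ∫⁻ z, (m : ℝ≥0∞)⁻¹ * ∑ i ∈ Finset.range m, f (z (i + n)) ∂iidLaw γ = ∫⁻ x, f x ∂γ := by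
  have hterm (i : ℕ) : ∫⁻ z : ℕ → E, f (z i) ∂iidLaw γ = ∫⁻ x, f x ∂γ :=
    (measurePreserving_eval_infinitePi (fun _ ↦ γ) i).lintegral_comp hf
  have hmeas (i : ℕ) : Measurable fun z : ℕ → E ↦ f (z i) := hf.comp (measurable_pi_apply i)
  rw [lintegral_const_mul _ (Finset.measurable_sum _ fun i _ ↦ hmeas _),
    lintegral_finsetSum _ fun i _ ↦ hmeas _]
  simp_rw [hterm]
  rw [Finset.sum_const, Finset.card_range, nsmul_eq_mul,
    ENNReal.inv_mul_cancel_left (Nat.cast_ne_zero.2 hm) (ENNReal.natCast_ne_top m)]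

theorem map_bind_infinitePiKernel {T E F : Type*} [MeasurableSpace T] [MeasurableSpace E]
    [MeasurableSpace F] {γ : Kernel T E} [IsMarkovKernel γ] {κ : Kernel T F} [IsMarkovKernel κ]
    {f : E → F} (hf : Measurable f) (h : ∀ t, (γ t).map f = κ t) (Q : Measure T) :
    (Q.bind (infinitePiKernel γ)).map (fun z i ↦ f (z i)) = Q.bind (infinitePiKernel κ) := by
  have hfpi : Measurable fun (z : ℕ → E) i ↦ f (z i) := by fun_prop
  rw [Measure.map_comp _ _ hfpi]
  congr 1
  ext1 t
  rw [Kernel.map_apply _ hfpi, map_infinitePiKernel_apply γ hf, infinitePiKernel_apply]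
  simp_rw [h t]

theorem infinitePiKernel_const {T E : Type*} [MeasurableSpace T] [MeasurableSpace E] (e : Measure E)
    [IsProbabilityMeasure e] :
    infinitePiKernel (Kernel.const T e) = Kernel.const T (iidLaw e) := by
  ext1 t
  rw [infinitePiKernel_apply, Kernel.const_apply]
  simp_rw [Kernel.const_apply]

theorem map_empShift_bind_infinitePiKernel {T E : Type*} [MeasurableSpace T] [MeasurableSpace E]
    {γ : Kernel T E} [IsMarkovKernel γ] {κ : Kernel T (Fin d → ℝ)} [IsMarkovKernel κ]
    {f : E → Fin d → ℝ} (hf : Measurable f) (h : ∀ t, (γ t).map f = κ t) (Q : Measure T)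
    (n m : ℕ) : (Q.bind (infinitePiKernel γ)).map (fun z ↦ empShift n m fun i ↦ f (z i)) =
      (Q.bind (infinitePiKernel κ)).map (empShift n m) := by
  rw [← map_bind_infinitePiKernel hf h,
    Measure.map_map (measurable_empShift n m) (by fun_prop), Function.comp_def]

theorem ofReal_wassW_empShift_rpow_le (hp : 0 < p) (n m : ℕ)
    (z : ℕ → (Fin d → ℝ) × (Fin d → ℝ)) :
    ENNReal.ofReal (wassW eucDist p (empShift n m fun i ↦ (z i).1)
      (empShift n m fun i ↦ (z i).2) ^ p) ≤
      (m : ℝ≥0∞)⁻¹ * ∑ i ∈ Finset.range m, powCost p (z (i + n)) := by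
  have hmap {f : (Fin d → ℝ) × (Fin d → ℝ) → Fin d → ℝ} (hf : Measurable f) :
      ((m : ℝ≥0∞)⁻¹ • ∑ i ∈ Finset.range m, Measure.dirac (z (i + n))).map f =
        empShift n m fun i ↦ f (z i) := by
    rw [Measure.map_smul, Measure.map_finset_sum hf.aemeasurable]
    simp_rw [Measure.map_dirac' hf, empShift]
  refine (ofReal_wassW_rpow_le_lintegral eucDist_nonneg hp (hmap measurable_fst)
    (hmap measurable_snd)).trans_eq ?_
  change ∫⁻ w, powCost p w ∂_ = _
  rw [lintegral_smul_measure, lintegral_finsetSum_measure]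
  simp_rw [lintegral_dirac' _ (measurable_powCost p), smul_eq_mul]

variable {Q : Measure (Measure (Fin d → ℝ))} {e : Measure (Fin d → ℝ)} [IsProbabilityMeasure e]

theorem ofReal_wassW_mixtureEmpLaw_rpow_le [IsProbabilityMeasure Q] (hp : 0 < p) {m : ℕ}
    (hm : m ≠ 0) {γ : Kernel (Measure (Fin d → ℝ)) ((Fin d → ℝ) × (Fin d → ℝ))} [IsMarkovKernel γ]
    (hfst : ∀ 𝔭, (γ 𝔭).map Prod.fst = idKernel _ 𝔭) (hsnd : ∀ 𝔭, (γ 𝔭).map Prod.snd = e) :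
    ENNReal.ofReal (wassW (wassW eucDist p) p (mixtureEmpLaw m Q)
      ((iidLaw e).map (empShift 0 m)) ^ p) ≤ ∫⁻ 𝔭, ∫⁻ z, powCost p z ∂γ 𝔭 ∂Q := by
  let emps (z : ℕ → (Fin d → ℝ) × (Fin d → ℝ)) : Measure (Fin d → ℝ) × Measure (Fin d → ℝ) :=
    (empShift 0 m fun i ↦ (z i).1, empShift 0 m fun i ↦ (z i).2)
  have hemps : Measurable emps :=
    ((measurable_empShift 0 m).comp (by fun_prop)).prodMk
      ((measurable_empShift 0 m).comp (by fun_prop))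
  have hempsfst : ((Q.bind (infinitePiKernel γ)).map emps).map Prod.fst = mixtureEmpLaw m Q :=
    (Measure.map_map measurable_fst hemps).trans
      (map_empShift_bind_infinitePiKernel measurable_fst hfst Q 0 m)
  have hempssnd : ((Q.bind (infinitePiKernel γ)).map emps).map Prod.snd =
      (iidLaw e).map (empShift 0 m) := by
    refine (Measure.map_map measurable_snd hemps).trans
      ((map_empShift_bind_infinitePiKernel (κ := Kernel.const _ e) measurable_snd hsnd Q 0
        m).trans ?_)
    rw [infinitePiKernel_const, Measure.const_comp, measure_univ, one_smul]
  have hcost : Measurable fun z : ℕ → (Fin d → ℝ) × (Fin d → ℝ) ↦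
      (m : ℝ≥0∞)⁻¹ * ∑ i ∈ Finset.range m, powCost p (z (i + 0)) :=
    (Finset.measurable_sum _ fun i _ ↦
      (measurable_powCost p).comp (measurable_pi_apply _)).const_mul _
  calc _ ≤ _ := ofReal_wassW_rpow_le_lintegral (wassW_nonneg eucDist_nonneg p) hp hempsfst hempssnd
    _ ≤ ∫⁻ z, (m : ℝ≥0∞)⁻¹ * ∑ i ∈ Finset.range m, powCost p (z (i + 0))
          ∂Q.bind (infinitePiKernel γ) :=
        (lintegral_map_le _ _).trans
          (lintegral_mono fun z ↦ ofReal_wassW_empShift_rpow_le hp 0 m z)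
    _ = ∫⁻ 𝔭, ∫⁻ z, powCost p z ∂γ 𝔭 ∂Q := by
        rw [Measure.lintegral_bind (Kernel.aemeasurable _) hcost.aemeasurable]
        exact lintegral_congr fun 𝔭 ↦ lintegral_average_iidLaw (γ 𝔭) (measurable_powCost p) hm 0

theorem ofReal_wassW_mixtureEmpLaw_rpow_le_lintegral [IsProbabilityMeasure Q] (hp : 1 ≤ p)
    (he : ∫⁻ y, ENNReal.ofReal (shellWeight p (shell y)) ∂e ≠ ⊤)
    (hQ : ∀ᵐ 𝔭 ∂Q, IsProbabilityMeasure 𝔭) {m : ℕ} (hm : m ≠ 0) :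
    ENNReal.ofReal (wassW (wassW eucDist p) p (mixtureEmpLaw m Q)
      ((iidLaw e).map (empShift 0 m)) ^ p) ≤ ∫⁻ 𝔭, dyadicBound p 𝔭 e ∂Q := by
  have hp0 : 0 < p := one_pos.trans_le hp
  refine le_of_forall_le_add_cellScale_mul (d := d) hp0 he fun L ↦ ?_
  obtain ⟨γ, hfst, hsnd, hcost⟩ := exists_coupling_lintegral_powCost_le hp L
    (idKernel (Fin d → ℝ)) (Kernel.const _ e)
  have : IsMarkovKernel γ := ⟨fun 𝔭 ↦ by
    have : IsProbabilityMeasure ((γ 𝔭).map Prod.fst) := by rw [hfst]; infer_instance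
    exact Measure.isProbabilityMeasure_of_map Prod.fst⟩
  refine (ofReal_wassW_mixtureEmpLaw_rpow_le hp0 hm hfst hsnd).trans ?_
  calc ∫⁻ 𝔭, ∫⁻ z, powCost p z ∂γ 𝔭 ∂Q
      ≤ ∫⁻ 𝔭, dyadicBound p 𝔭 e + ENNReal.ofReal (cellScale p d L) *
          ∫⁻ y, ENNReal.ofReal (shellWeight p (shell y)) ∂e ∂Q := by
        refine lintegral_mono_ae ?_
        filter_upwards [hQ] with 𝔭 h𝔭
        simpa only [idKernel_apply, Kernel.const_apply] using hcost 𝔭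
    _ = _ := by rw [lintegral_add_right _ measurable_const, lintegral_const, measure_univ, mul_one]

end MixtureWasserstein

section CondDistrib

variable {Ω A B : Type*} {mΩ : MeasurableSpace Ω} [MeasurableSpace A] [MeasurableSpace B]
  {P : Measure Ω} [IsFiniteMeasure P] {X : Ω → A} {Y : Ω → B} {κ : Kernel A B}

theorem ae_of_hasCondDistrib [IsSFiniteKernel κ] (h : HasCondDistrib Y X κ P) {q : A × B → Prop}
    (hq : MeasurableSet {z | q z}) (hκ : ∀ᵐ a ∂P.map X, ∀ᵐ b ∂κ a, q (a, b)) :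
    ∀ᵐ ω ∂P, q (X ω, Y ω) := by
  have hae := (Measure.ae_compProd_iff hq).2 hκ
  rw [← h.map_eq] at hae
  exact ae_of_ae_map h.aemeasurable hae

theorem lintegral_of_hasCondDistrib [IsSFiniteKernel κ] (h : HasCondDistrib Y X κ P)
    {f : A × B → ℝ≥0∞} (hf : Measurable f) :
    ∫⁻ ω, f (X ω, Y ω) ∂P = ∫⁻ a, ∫⁻ b, f (a, b) ∂κ a ∂P.map X := by
  rw [← Measure.lintegral_compProd hf, ← h.map_eq, lintegral_map' hf.aemeasurable h.aemeasurable]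

end CondDistrib

section LimitBound

variable {d : ℕ}

theorem measurable_normalizedBound {T : Type*} [MeasurableSpace T] (p : ℝ) (n : ℕ)
    {κ : T → Measure (Fin d → ℝ)} {ω : T → ℕ → Fin d → ℝ} (hκ : Measurable κ) (hω : Measurable ω) :
    Measurable fun t ↦ normalizedBound p (κ t) n (ω t) :=
  (measurable_dyadicBound p hκ ((measurable_empOf n).comp ((measurable_initSeg n).comp
    hω))).const_mul _

theorem measurable_limitBound (p δ : ℝ) : Measurable (limitBound p δ d) := by
  have := measurable_absMoment (d := d) (2 * p + δ)
  unfold limitBound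
  fun_prop

variable {p δ : ℝ} (hp : 1 ≤ p) (hpd : (d : ℝ) / 2 < p) (hδ : 0 < δ) (hd : 1 ≤ d)
include hp hpd hδ hd

theorem ae_limsup_normalizedBound_le_limitBound {𝔭 : Measure (Fin d → ℝ)} [IsProbabilityMeasure 𝔭]
    (hM : absMoment 𝔭 (2 * p + δ) ≠ ⊤)
    (hint : ∫⁻ ω, ∑' l, ∑' k, dominatingTerm p 𝔭 l k ω ∂iidLaw 𝔭 ≠ ⊤) :
    ∀ᵐ ω ∂iidLaw 𝔭, limsup (fun n ↦ normalizedBound p 𝔭 n ω) atTop ≤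
      ENNReal.ofReal (limitBound p δ d 𝔭) := by
  filter_upwards [ae_limsup_normalizedBound_le_tsum hint] with ω hω
  exact hω.trans (tsum_levelCoef_mul_sqrt_le_limitBound hp hpd hδ hd 𝔭 hM)

end LimitBound

section Exchangeable

variable {d : ℕ} {p s : ℝ} {ρ : Measure (ℕ → Fin d → ℝ)} [IsFiniteMeasure ρ]
  {X : (ℕ → Fin d → ℝ) → Measure (Fin d → ℝ)}
  (h : HasCondDistrib id X (iidKernel (Fin d → ℝ)) ρ)
  (hX : ∀ᵐ 𝔭 ∂ρ.map X, IsProbabilityMeasure 𝔭)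
  (hs0 : 0 < s) (hs1 : s < 1 / 2) (hps : d * (1 - s) < p)
include h hX hs0 hs1 hps

theorem lintegral_iSup_normalizedBound_ne_top {q : ℝ} (hp : 0 ≤ p) (hpq : p < q * s)
    (hmom : ∫⁻ 𝔭, absMoment 𝔭 q ^ s ∂ρ.map X ≠ ⊤) :
    ∫⁻ ω, ⨆ n, normalizedBound p (X ω) n ω ∂ρ ≠ ⊤ := by
  obtain ⟨C, hC, hdom⟩ := exists_lintegral_tsum_dominatingTerm_le d hp hs0 hs1 hps hpq
  have hsup := lintegral_of_hasCondDistrib h (.iSup fun n ↦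
    measurable_normalizedBound p n measurable_fst measurable_snd)
  refine ne_top_of_le_ne_top (b := ∫⁻ 𝔭, C * (1 + absMoment 𝔭 q ^ s) ∂ρ.map X) ?_ (hsup.trans_le ?_)
  · rw [lintegral_const_mul' _ _ hC, lintegral_add_left measurable_const, lintegral_one]
    exact ENNReal.mul_ne_top hC (ENNReal.add_ne_top.2 ⟨measure_ne_top _ _, hmom⟩)
  · refine lintegral_mono_ae ?_
    filter_upwards [hX] with 𝔭 h𝔭
    rw [iidKernel_apply]
    exact (lintegral_mono fun ω ↦ iSup_le fun n ↦
      normalizedBound_le_tsum_dominatingTerm p 𝔭 n ω).trans (hdom 𝔭)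

theorem ae_limsup_normalizedBound_le_limitBound_of_hasCondDistrib {δ : ℝ} (hp : 1 ≤ p)
    (hδ : 0 < δ) (hd : 1 ≤ d) (hpq : p < (2 * p + δ) * s)
    (hmom : ∫⁻ 𝔭, absMoment 𝔭 (2 * p + δ) ^ s ∂ρ.map X ≠ ⊤) :
    ∀ᵐ ω ∂ρ, limsup (fun n ↦ normalizedBound p (X ω) n ω) atTop ≤
      ENNReal.ofReal (limitBound p δ d (X ω)) := by
  have hpd : (d : ℝ) / 2 < p := by nlinarith [d.cast_nonneg (α := ℝ)]
  obtain ⟨C, hC, hdom⟩ := exists_lintegral_tsum_dominatingTerm_le d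
    (zero_le_one.trans hp) hs0 hs1 hps hpq
  refine ae_of_hasCondDistrib (q := fun z ↦ limsup (fun n ↦ normalizedBound p z.1 n z.2) atTop ≤
    ENNReal.ofReal (limitBound p δ d z.1)) h (measurableSet_le
      (.limsup fun n ↦ measurable_normalizedBound p n measurable_fst measurable_snd)
      ((measurable_limitBound p δ).comp measurable_fst).ennreal_ofReal) ?_
  filter_upwards [hX, ae_lt_top ((measurable_absMoment _).pow_const s) hmom] with 𝔭 h𝔭 hM
  rw [iidKernel_apply]
  refine ae_limsup_normalizedBound_le_limitBound hp hpd hδ hd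
    (mt (fun htop ↦ ?_) hM.ne) (ne_top_of_le_ne_top ?_ (hdom 𝔭))
  · rw [htop, ENNReal.top_rpow_of_pos hs0]
  · exact ENNReal.mul_ne_top hC (ENNReal.add_ne_top.2 ⟨ENNReal.one_ne_top, hM.ne⟩)

end Exchangeable

section Posterior

variable {d : ℕ} {p : ℝ} {ρ : Measure (ℕ → Fin d → ℝ)} [IsFiniteMeasure ρ]
  {X : (ℕ → Fin d → ℝ) → Measure (Fin d → ℝ)}

theorem ae_limsup_lintegral_dyadicBound_le (hX : Measurable X)
    {κ : (n : ℕ) → Kernel (Fin n → Fin d → ℝ) (Measure (Fin d → ℝ))} [∀ n, IsSFiniteKernel (κ n)]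
    (hκ : ∀ n, HasCondDistrib X (initSeg n) (κ n) ρ)
    (hint : ∫⁻ ω, ⨆ n, normalizedBound p (X ω) n ω ∂ρ ≠ ⊤) :
    ∀ᵐ ω ∂ρ, limsup (fun n ↦ ENNReal.ofReal (lilRate n) *
        ∫⁻ 𝔭, dyadicBound p 𝔭 (empOf n (initSeg n ω)) ∂κ n (initSeg n ω)) atTop ≤
      limsup (fun n ↦ normalizedBound p (X ω) n ω) atTop := by
  have hmeas (n : ℕ) : Measurable fun z : (Fin n → Fin d → ℝ) × Measure (Fin d → ℝ) ↦
      ENNReal.ofReal (lilRate n) * dyadicBound p z.2 (empOf n z.1) :=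
    (measurable_dyadicBound p measurable_snd
      ((measurable_empOf n).comp measurable_fst)).const_mul _
  have hcond := ae_all_iff.2 fun n ↦
    lintegral_kernel_ae_eq_condLExp (measurable_initSeg n) hX (hκ n) (hmeas n)
  have hhunt := ae_limsup_condLExp_le_limsup (ℱ := initSegFiltration (Fin d → ℝ))
    (fun n ↦ (measurable_normalizedBound p n hX measurable_id).mono
      iSup_initSegFiltration.ge le_rfl) hint
  filter_upwards [hcond, hhunt] with ω hcond hhunt
  simp_rw [← lintegral_const_mul' _ _ ENNReal.ofReal_ne_top]
  exact (limsup_congr (.of_forall hcond)).trans_le hhunt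

end Posterior

section Rate

variable {p : ℝ}

theorem ofReal_rate_mul_eq_rpow (hp : 0 < p) {w : ℝ} (hw : 0 ≤ w) (n : ℕ) :
    ENNReal.ofReal ((n / Log2 n) ^ (1 / (2 * p)) * w) =
      (ENNReal.ofReal (lilRate n) * ENNReal.ofReal (w ^ p)) ^ (1 / p) := by
  have hrate : 0 ≤ (n : ℝ) / Log2 n := div_nonneg n.cast_nonneg (Log2_pos n).le
  have hlil : lilRate n ^ (1 / p) = (n / Log2 n) ^ (1 / (2 * p)) := by
    rw [lilRate, Real.sqrt_eq_rpow, ← Real.rpow_mul hrate, one_div_mul_one_div]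
  have hlil0 : 0 ≤ lilRate n := Real.sqrt_nonneg _
  rw [← ENNReal.ofReal_mul hlil0, ENNReal.ofReal_rpow_of_nonneg (by positivity) (by positivity),
    Real.mul_rpow hlil0 (by positivity), hlil, one_div p, Real.rpow_rpow_inv hw hp.ne']

theorem limsup_ofReal_rate_mul_le (hp : 0 < p) {w : ℕ → ℝ} (hw : ∀ n, 0 ≤ w n) {j : ℕ → ℝ≥0∞}
    {z : ℝ} (hz : 0 ≤ z) (hwj : ∀ n, n ≠ 0 → ENNReal.ofReal (w n ^ p) ≤ j n)
    (hj : limsup (fun n ↦ ENNReal.ofReal (lilRate n) * j n) atTop ≤ ENNReal.ofReal z) :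
    limsup (fun n : ℕ ↦ ENNReal.ofReal ((n / Log2 n) ^ (1 / (2 * p)) * w n)) atTop ≤
      ENNReal.ofReal (z ^ (1 / p)) := by
  have hp' : 0 < 1 / p := one_div_pos.2 hp
  have hlimsup := (ENNReal.orderIsoRpow (1 / p) hp').limsup_apply (f := atTop)
    (u := fun n ↦ ENNReal.ofReal (lilRate n) * j n)
  simp only [ENNReal.orderIsoRpow_apply] at hlimsup
  calc _ ≤ limsup (fun n ↦ (ENNReal.ofReal (lilRate n) * j n) ^ (1 / p)) atTop := by
        refine limsup_le_limsup ?_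
        filter_upwards [eventually_ne_atTop 0] with n hn
        rw [ofReal_rate_mul_eq_rpow hp (hw n)]
        gcongr
        exact hwj n hn
    _ ≤ ENNReal.ofReal z ^ (1 / p) := hlimsup ▸ ENNReal.rpow_le_rpow hj hp'.le
    _ = ENNReal.ofReal (z ^ (1 / p)) := ENNReal.ofReal_rpow_of_nonneg hz hp'.le

end Rate

section Merging

variable {d : ℕ} {p : ℝ} {ρ : Measure (ℕ → Fin d → ℝ)} [IsFiniteMeasure ρ]
  {X : (ℕ → Fin d → ℝ) → Measure (Fin d → ℝ)}
  {κ : (n : ℕ) → Kernel (Fin n → Fin d → ℝ) (Measure (Fin d → ℝ))} [∀ n, IsMarkovKernel (κ n)]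
  (hκ : ∀ n, HasCondDistrib X (initSeg n) (κ n) ρ)
include hκ

theorem ae_limsup_lintegral_dyadicBound_le_limitBound {δ s : ℝ} (hX : Measurable X)
    (hXprob : ∀ᵐ ω ∂ρ, IsProbabilityMeasure (X ω))
    (h : HasCondDistrib id X (iidKernel (Fin d → ℝ)) ρ) (hp : 1 ≤ p) (hδ : 0 < δ) (hd : 1 ≤ d)
    (hs0 : 0 < s) (hs1 : s < 1 / 2) (hps : d * (1 - s) < p) (hpq : p < (2 * p + δ) * s)
    (hmom : ∫⁻ 𝔭, absMoment 𝔭 (2 * p + δ) ^ s ∂ρ.map X ≠ ⊤) :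
    ∀ᵐ ω ∂ρ, limsup (fun n ↦ ENNReal.ofReal (lilRate n) *
        ∫⁻ 𝔭, dyadicBound p 𝔭 (empOf n (initSeg n ω)) ∂κ n (initSeg n ω)) atTop ≤
      ENNReal.ofReal (limitBound p δ d (X ω)) := by
  have hprob : ∀ᵐ 𝔭 ∂ρ.map X, IsProbabilityMeasure 𝔭 :=
    (ae_map_iff hX.aemeasurable ProbabilityMeasure.measurableSet_isProbabilityMeasure).2 hXprob
  filter_upwards [ae_limsup_lintegral_dyadicBound_le hX hκ
      (lintegral_iSup_normalizedBound_ne_top h hprob hs0 hs1 hps (zero_le_one.trans hp) hpq hmom),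
    ae_limsup_normalizedBound_le_limitBound_of_hasCondDistrib h hprob hs0 hs1 hps hp hδ hd hpq
      hmom] with ω hpost hlim
  exact hpost.trans hlim

theorem ae_forall_isProbabilityMeasure_of_hasCondDistrib
    (hX : ∀ᵐ ω ∂ρ, IsProbabilityMeasure (X ω)) :
    ∀ᵐ ω ∂ρ, ∀ n, ∀ᵐ 𝔭 ∂κ n (initSeg n ω), IsProbabilityMeasure 𝔭 :=
  ae_all_iff.2 fun n ↦ ae_of_ae_map (measurable_initSeg n).aemeasurable <|
    ae_ae_of_hasCondDistrib (hκ n) ProbabilityMeasure.measurableSet_isProbabilityMeasure hX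

variable (hp : 1 ≤ p) {z : (ℕ → Fin d → ℝ) → ℝ} (hz : ∀ ω, 0 ≤ z ω)
  (hlim : ∀ᵐ ω ∂ρ, limsup (fun n ↦ ENNReal.ofReal (lilRate n) *
    ∫⁻ 𝔭, dyadicBound p 𝔭 (empOf n (initSeg n ω)) ∂κ n (initSeg n ω)) atTop ≤ ENNReal.ofReal (z ω))
include hp hz hlim

theorem ae_limsup_rate_mul_wassW_dirac_le (hX : ∀ᵐ ω ∂ρ, IsProbabilityMeasure (X ω)) :
    ∀ᵐ ω ∂ρ, limsup (fun n : ℕ ↦ ENNReal.ofReal ((n / Log2 n) ^ (1 / (2 * p)) *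
        wassW (wassW eucDist p) p (κ n (initSeg n ω)) (.dirac (empOf n (initSeg n ω))))) atTop ≤
      ENNReal.ofReal (z ω ^ (1 / p)) := by
  filter_upwards [hlim, ae_forall_isProbabilityMeasure_of_hasCondDistrib hκ hX] with ω hlim hprob
  refine limsup_ofReal_rate_mul_le (one_pos.trans_le hp)
    (fun n ↦ wassW_nonneg (wassW_nonneg eucDist_nonneg p) _ _ _) (hz ω) (fun n hn ↦ ?_) hlim
  have := isProbabilityMeasure_empOf hn (initSeg n ω)
  exact ofReal_wassW_dirac_rpow_le_lintegral hp
    (lintegral_shellWeight_empOf_ne_top p n _) (hprob n)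

theorem ae_limsup_rate_mul_wassW_map_empShift_le (hX : Measurable X)
    (hXprob : ∀ᵐ ω ∂ρ, IsProbabilityMeasure (X ω))
    (h : HasCondDistrib id X (iidKernel (Fin d → ℝ)) ρ) {m : ℕ} (hm : m ≠ 0)
    {η : (n : ℕ) → Kernel (Fin n → Fin d → ℝ) (Measure (Fin d → ℝ))} [∀ n, IsFiniteKernel (η n)]
    (hη : ∀ n, HasCondDistrib (empShift n m) (initSeg n) (η n) ρ)
    {iid : Measure (Fin d → ℝ) → Measure (ℕ → Fin d → ℝ)}
    (hiid : ∀ 𝔭, IsProbabilityMeasure 𝔭 → iid 𝔭 = iidLaw 𝔭) :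
    ∀ᵐ ω ∂ρ, limsup (fun n : ℕ ↦ ENNReal.ofReal ((n / Log2 n) ^ (1 / (2 * p)) *
        wassW (wassW eucDist p) p (η n (initSeg n ω))
          ((iid (empOf n (initSeg n ω))).map (empShift n m)))) atTop ≤
      ENNReal.ofReal (z ω ^ (1 / p)) := by
  have hpred := ae_all_iff.2 fun n ↦ ae_eq_mixtureEmpLaw_of_hasCondDistrib hm hX h (hκ n) (hη n)
  filter_upwards [hlim, ae_forall_isProbabilityMeasure_of_hasCondDistrib hκ hXprob, hpred]
    with ω hlim hprob hpred
  refine limsup_ofReal_rate_mul_le (one_pos.trans_le hp)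
    (fun n ↦ wassW_nonneg (wassW_nonneg eucDist_nonneg p) _ _ _) (hz ω) (fun n hn ↦ ?_) hlim
  have := isProbabilityMeasure_empOf hn (initSeg n ω)
  rw [hpred, hiid _ this, map_empShift_iidLaw]
  exact ofReal_wassW_mixtureEmpLaw_rpow_le_lintegral hp
    (lintegral_shellWeight_empOf_ne_top p n _) (hprob n) hm

end Merging

theorem exponent_bounds {d : ℕ} {p r : ℝ} (hr2 : 2 < r) (hr3 : r < 3) (hrp : 2 - 3 / r < p / d) :
    1 ≤ d ∧ d * (1 - (3 / r - 1)) < p ∧ 0 < 3 / r - 1 ∧ 3 / r - 1 < 1 / 2 := by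
  have hr0 : 0 < r := two_pos.trans hr2
  have hlow : 1 < 3 / r := (one_lt_div hr0).2 hr3
  have hupp : 3 / r < 3 / 2 := div_lt_div_of_pos_left three_pos two_pos hr2
  have hd : d ≠ 0 := by
    rintro rfl
    simp only [Nat.cast_zero, div_zero] at hrp
    linarith
  have hprod : (2 - 3 / r) * d < p := (lt_div_iff₀ (by positivity)).1 hrp
  exact ⟨Nat.one_le_iff_ne_zero.2 hd, by linarith, by linarith, by linarith⟩

end BayesianMerging


open BayesianMerging
/-- Bayesian nonparametric merging on `ℝ^d`: with
`b_n = (n / Log₂ n)^{1/(2p)}` and `p̂_n = ẽ_n`, both the posterior and the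
predictive empirical approximations merge at rate `b_n` with limiting bound
`Y_p(p̃)`, `ρ`-almost surely. -/
theorem bayesian_nonparametric_merging
    (d : ℕ) (p δ : ℝ) (hp1 : 1 ≤ p) (hpd : (d : ℝ) / 2 < p) (hδ : 0 < δ)
    (r : ℝ) (hr2 : 2 < r) (hr3 : r < 3)
    (hrp : p / d > 2 - 3 / r) (hrδ : (2 * p + δ) * (3 / r - 1) > p)
    -- the product-measure map `𝔭 ↦ 𝔭^∞`
    (iid : Measure (Fin d → ℝ) → Measure (ℕ → (Fin d → ℝ)))
    (hiid : ∀ 𝔭 : Measure (Fin d → ℝ), IsProbabilityMeasure 𝔭 →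
      IsProbabilityMeasure (iid 𝔭) ∧
        ∀ (n : ℕ) (A : Fin n → Set (Fin d → ℝ)), (∀ i, MeasurableSet (A i)) →
          iid 𝔭 {ω | ∀ i : Fin n, ω (i : ℕ) ∈ A i} = ∏ i, 𝔭 (A i))
    -- an exchangeable law `ρ` on `(ℝ^d)^∞` with directing measure `p̃`
    (ρ : Measure (ℕ → (Fin d → ℝ))) [IsProbabilityMeasure ρ]
    (hexch : ∀ σ : Equiv.Perm ℕ, ρ.map (fun ω => ω ∘ σ) = ρ)
    (ptilde : (ℕ → (Fin d → ℝ)) → Measure (Fin d → ℝ)) (hptilde_meas : Measurable ptilde)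
    (hptilde_prob : ∀ᵐ ω ∂ρ, IsProbabilityMeasure (ptilde ω))
    (hdirect : ∀ C : Set (ℕ → (Fin d → ℝ)), MeasurableSet C →
      ∀ B : Set (Measure (Fin d → ℝ)), MeasurableSet B →
        ρ (C ∩ ptilde ⁻¹' B) = ∫⁻ ω in ptilde ⁻¹' B, iid (ptilde ω) C ∂ρ)
    -- the moment condition on the prior `π = ρ ∘ p̃⁻¹`
    (hmom : ∫⁻ 𝔭, (∫⁻ x, ENNReal.ofReal (eucNorm x ^ (2 * p + δ)) ∂𝔭) ^ (3 / r - 1)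
        ∂(ρ.map ptilde) < ⊤)
    -- the posterior distributions `π(ξ^{(n)})`
    (post : (n : ℕ) → (Fin n → (Fin d → ℝ)) → Measure (Measure (Fin d → ℝ)))
    (hpost_prob : ∀ n v, IsProbabilityMeasure (post n v))
    (hpost_meas : ∀ n, Measurable (post n))
    (hpost : ∀ (n : ℕ) (A : Set (Fin n → (Fin d → ℝ))), MeasurableSet A →
      ∀ B : Set (Measure (Fin d → ℝ)), MeasurableSet B →
        ρ {ω | (fun i : Fin n => ω (i : ℕ)) ∈ A ∧ ptilde ω ∈ B}
          = ∫⁻ ω in {ω | (fun i : Fin n => ω (i : ℕ)) ∈ A},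
              post n (fun i : Fin n => ω (i : ℕ)) B ∂ρ)
    -- the conditional distributions `q_m(ξ^{(n)})` of `ẽ_{n,m}` given `ξ^{(n)}`
    (qm : (m n : ℕ) → (Fin n → (Fin d → ℝ)) → Measure (Measure (Fin d → ℝ)))
    (hqm_prob : ∀ m n v, IsProbabilityMeasure (qm m n v))
    (hqm_meas : ∀ m n, Measurable (qm m n))
    (hqm : ∀ (m n : ℕ) (A : Set (Fin n → (Fin d → ℝ))), MeasurableSet A →
      ∀ B : Set (Measure (Fin d → ℝ)), MeasurableSet B →
        ρ {ω | (fun i : Fin n => ω (i : ℕ)) ∈ A ∧ empShift n m ω ∈ B}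
          = ∫⁻ ω in {ω | (fun i : Fin n => ω (i : ℕ)) ∈ A},
              qm m n (fun i : Fin n => ω (i : ℕ)) B ∂ρ) :
    -- (i) merging of posterior distributions
    (∀ᵐ ω ∂ρ, Filter.limsup (fun n : ℕ => ENNReal.ofReal
        (((n : ℝ) / Log2 n) ^ (1 / (2 * p))
          * wassW (fun μ ν => wassW eucDist p μ ν) p
            (post n (fun i : Fin n => ω (i : ℕ)))
            (Measure.dirac (empOf n (fun i : Fin n => ω (i : ℕ)))))) Filter.atTop
      ≤ ENNReal.ofReal (YpNP p δ d (ptilde ω))) ∧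
    -- (ii) merging of predictive distributions
    (∀ (m : ℕ), 1 ≤ m →
      ∀ᵐ ω ∂ρ, Filter.limsup (fun n : ℕ => ENNReal.ofReal
          (((n : ℝ) / Log2 n) ^ (1 / (2 * p))
            * wassW (fun μ ν => wassW eucDist p μ ν) p
              (qm m n (fun i : Fin n => ω (i : ℕ)))
              ((iid (empOf n (fun i : Fin n => ω (i : ℕ)))).map (empShift n m)))) Filter.atTop
        ≤ ENNReal.ofReal (YpNP p δ d (ptilde ω))) := by
  simp only [YpNP_eq_limitBound_rpow]
  obtain ⟨hd, hps, hs0, hs1⟩ := exponent_bounds hr2 hr3 hrp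
  have hiid' : ∀ 𝔭, IsProbabilityMeasure 𝔭 → iid 𝔭 = iidLaw 𝔭 := fun 𝔭 h𝔭 ↦
    have := (hiid 𝔭 h𝔭).1
    eq_iidLaw_of_forall_cylinder (hiid 𝔭 h𝔭).2
  have hX : HasCondDistrib id ptilde (iidKernel (Fin d → ℝ)) ρ :=
    hasCondDistrib_iidKernel hptilde_meas hptilde_prob hiid' hdirect
  let κ (n : ℕ) : Kernel (Fin n → Fin d → ℝ) (Measure (Fin d → ℝ)) := ⟨post n, hpost_meas n⟩
  have (n : ℕ) : IsMarkovKernel (κ n) := ⟨hpost_prob n⟩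
  have hκ (n : ℕ) : HasCondDistrib ptilde (initSeg n) (κ n) ρ :=
    hasCondDistrib_of_forall_rect (measurable_initSeg n) hptilde_meas (hpost n)
  let η (m n : ℕ) : Kernel (Fin n → Fin d → ℝ) (Measure (Fin d → ℝ)) := ⟨qm m n, hqm_meas m n⟩
  have (m n : ℕ) : IsMarkovKernel (η m n) := ⟨hqm_prob m n⟩
  have hη (m n : ℕ) : HasCondDistrib (empShift n m) (initSeg n) (η m n) ρ :=
    hasCondDistrib_of_forall_rect (measurable_initSeg n) (measurable_empShift n m) (hqm m n)
  have hz (ω : ℕ → Fin d → ℝ) := limitBound_nonneg hpd hδ (ptilde ω)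
  have hlim := ae_limsup_lintegral_dyadicBound_le_limitBound hκ hptilde_meas hptilde_prob hX hp1 hδ
    hd hs0 hs1 hps hrδ hmom.ne
  exact ⟨ae_limsup_rate_mul_wassW_dirac_le hκ hp1 hz hlim hptilde_prob, fun m hm ↦
    ae_limsup_rate_mul_wassW_map_empShift_le hκ hp1 hz hlim hptilde_meas hptilde_prob hX
      (Nat.one_le_iff_ne_zero.1 hm) (hη m) hiid'⟩

end
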